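/- There exists a universal constant C₀ > 0 such that for all C ≥ C₀ the following holds: if a graph G is a C-expander, then G is Hamilton-connected, i.e. for every pair of distinct vertices x, y of G there is a Hamilton path of G with endpoints x and y. -/

import Mathlib

open SimpleGraph

/-- `G` is `m`-joined: between any two disjoint vertex sets of size `m` there is an edge. -/
def IsJoined {V : Type*} (G : SimpleGraph V) (m : ℕ) : Prop :=
  ∀ A B : Finset V, Disjoint A B → A.card = m → B.card = m →
    ∃ a ∈ A, ∃ b ∈ B, G.Adj a b

/-- The external neighbourhood of a vertex set `X`: the vertices outside `X`
having a neighbour in `X`. -/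
def extNbhd {V : Type*} [Fintype V] [DecidableEq V]
    (G : SimpleGraph V) [DecidableRel G.Adj] (X : Finset V) : Finset V :=
  Finset.univ.filter fun v => v ∉ X ∧ ∃ u ∈ X, G.Adj u v

/-- `G` (on `n` vertices) is a `C`-expander: `G` is `⌈n/(2C)⌉`-joined, and every
vertex set `X` with `1 ≤ |X| ≤ n/(2C)` satisfies `|N(X)| ≥ C|X|`. -/
def IsCExpander {V : Type*} [Fintype V] [DecidableEq V]
    (G : SimpleGraph V) [DecidableRel G.Adj] (C : ℝ) : Prop :=
  IsJoined G ⌈(Fintype.card V : ℝ) / (2 * C)⌉₊ ∧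
  ∀ X : Finset V, 1 ≤ X.card → (X.card : ℝ) ≤ (Fintype.card V : ℝ) / (2 * C) →
    C * (X.card : ℝ) ≤ ((extNbhd G X).card : ℝ)

namespace PathFamily

set_option linter.unusedSectionVars false

section

variable {V : Type*} {G : SimpleGraph V}

/-- The multiset of vertices covered by a family of vertex lists. -/
def verts (F : Multiset (List V)) : Multiset V := F.bind fun l => (l : Multiset V)

/-- The two end vertices of a list (a one-element list has its vertex counted twice). -/
def listEnds (l : List V) : Multiset V := (l.head?.toList : Multiset V) + l.getLast?.toList

/-- The multiset of end vertices of a family of lists. -/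
def ends (F : Multiset (List V)) : Multiset V := F.bind listEnds

/-- A family of nonempty paths of `G`, pairwise disjoint. -/
def Valid (G : SimpleGraph V) (F : Multiset (List V)) : Prop :=
  (∀ l ∈ F, l ≠ [] ∧ l.IsChain G.Adj) ∧ (verts F).Nodup

/-- `a` and `b` are consecutive, in some order, in a list. -/
def listAdj : List V → V → V → Prop
  | [], _, _ => False
  | [_], _, _ => False
  | x :: y :: l, a, b => (a = x ∧ b = y) ∨ (a = y ∧ b = x) ∨ listAdj (y :: l) a b

/-- `a` and `b` are consecutive on some member of the family. -/
def famAdj (F : Multiset (List V)) (a b : V) : Prop := ∃ l ∈ F, listAdj l a b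

@[simp] theorem verts_zero : verts (0 : Multiset (List V)) = 0 := rfl
@[simp] theorem verts_cons (l : List V) (F) : verts (l ::ₘ F) = (l : Multiset V) + verts F := by
  simp [verts]
@[simp] theorem verts_add (E F : Multiset (List V)) : verts (E + F) = verts E + verts F := by
  simp [verts]
@[simp] theorem verts_singleton (l : List V) : verts {l} = (l : Multiset V) := by
  simp [verts]
@[simp] theorem ends_zero : ends (0 : Multiset (List V)) = 0 := rfl
@[simp] theorem ends_cons (l : List V) (F) : ends (l ::ₘ F) = listEnds l + ends F := by
  simp [ends]
@[simp] theorem ends_add (E F : Multiset (List V)) : ends (E + F) = ends E + ends F := by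
  simp [ends]
@[simp] theorem ends_singleton (l : List V) : ends {l} = listEnds l := by
  simp [ends]

theorem mem_verts {F : Multiset (List V)} {a : V} : a ∈ verts F ↔ ∃ l ∈ F, a ∈ l := by
  simp [verts]

theorem mem_ends {F : Multiset (List V)} {a : V} : a ∈ ends F ↔ ∃ l ∈ F, a ∈ listEnds l := by
  simp [ends]

theorem mem_listEnds {l : List V} {a : V} :
    a ∈ listEnds l ↔ l.head? = some a ∨ l.getLast? = some a := by
  simp [listEnds]

theorem listEnds_reverse (l : List V) : listEnds l.reverse = listEnds l := by
  simp [listEnds, add_comm]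

theorem mem_of_mem_listEnds {l : List V} {a : V} (h : a ∈ listEnds l) : a ∈ l := by
  rcases mem_listEnds.1 h with h | h
  · exact List.mem_of_mem_head? h
  · exact List.mem_of_mem_getLast? h

theorem mem_verts_of_mem_ends {F : Multiset (List V)} {a : V} (h : a ∈ ends F) :
    a ∈ verts F := by
  obtain ⟨l, hl, h⟩ := mem_ends.1 h
  exact mem_verts.2 ⟨l, hl, mem_of_mem_listEnds h⟩

theorem card_listEnds {l : List V} (h : l ≠ []) : (listEnds l).card = 2 := by
  obtain ⟨a, l, rfl⟩ := List.exists_cons_of_ne_nil h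
  simp [listEnds, List.getLast?_cons]

theorem card_ends {F : Multiset (List V)} (h : ∀ l ∈ F, l ≠ []) :
    (ends F).card = 2 * F.card := by
  induction F using Multiset.induction_on with
  | empty => simp
  | cons l F ih =>
    rw [ends_cons, Multiset.card_add, ih fun l hl => h l (Multiset.mem_cons_of_mem hl),
      card_listEnds (h l (Multiset.mem_cons_self _ _)), Multiset.card_cons]
    ring

theorem listAdj_append (l₁ l₂ : List V) (a b : V) :
    listAdj (l₁ ++ l₂) a b ↔ listAdj l₁ a b ∨ listAdj l₂ a b ∨
      (l₁.getLast? = some a ∧ l₂.head? = some b) ∨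
      (l₁.getLast? = some b ∧ l₂.head? = some a) := by
  induction l₁ with
  | nil => simp [listAdj]
  | cons x l ih =>
    cases l with
    | nil =>
      cases l₂ with
      | nil => simp [listAdj]
      | cons y l₂ =>
        simp only [List.cons_append, List.nil_append, listAdj, List.getLast?_singleton,
          List.head?_cons, Option.some.injEq]
        grind
    | cons y l =>
      simp only [List.cons_append, listAdj] at ih ⊢
      rw [ih, List.getLast?_cons_cons]
      tauto

theorem listAdj_comm (l : List V) (a b : V) : listAdj l a b ↔ listAdj l b a := by
  induction l with
  | nil => simp [listAdj]
  | cons x l ih =>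
    cases l with
    | nil => simp [listAdj]
    | cons y l => simp only [listAdj]; tauto

theorem listAdj_reverse (l : List V) (a b : V) : listAdj l.reverse a b ↔ listAdj l a b := by
  induction l with
  | nil => simp
  | cons x l ih =>
    have h := listAdj_append [x] l a b
    rw [List.singleton_append] at h
    rw [List.reverse_cons, listAdj_append, ih, h]
    simp only [List.getLast?_reverse, List.head?_cons, List.getLast?_singleton]
    tauto

theorem listAdj.left_mem {l : List V} {a b : V} (h : listAdj l a b) : a ∈ l := by
  induction l with
  | nil => simp [listAdj] at h
  | cons x l ih =>
    cases l with
    | nil => simp [listAdj] at h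
    | cons y l =>
      simp only [listAdj] at h
      rcases h with h | h | h
      · simp [h.1]
      · simp [h.1]
      · exact List.mem_cons_of_mem _ (ih h)

theorem listAdj.right_mem {l : List V} {a b : V} (h : listAdj l a b) : b ∈ l :=
  ((listAdj_comm l a b).1 h).left_mem

@[simp] theorem famAdj_cons (l : List V) (F) (a b : V) :
    famAdj (l ::ₘ F) a b ↔ listAdj l a b ∨ famAdj F a b := by
  simp [famAdj]

theorem famAdj_add (E F : Multiset (List V)) (a b : V) :
    famAdj (E + F) a b ↔ famAdj E a b ∨ famAdj F a b := by
  simp [famAdj, or_and_right, exists_or]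

theorem isChain_adj_reverse {l : List V} : l.reverse.IsChain G.Adj ↔ l.IsChain G.Adj := by
  rw [List.isChain_reverse]
  simp only [G.adj_comm]

theorem valid_zero : Valid G (0 : Multiset (List V)) := by simp [Valid]

theorem valid_cons {l : List V} {F : Multiset (List V)} :
    Valid G (l ::ₘ F) ↔ (l ≠ [] ∧ l.IsChain G.Adj ∧ l.Nodup) ∧ Valid G F ∧
      ∀ a ∈ l, a ∉ verts F := by
  simp only [Valid, Multiset.forall_mem_cons, verts_cons, Multiset.nodup_add,
    Multiset.coe_nodup, Multiset.disjoint_left, Multiset.mem_coe]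
  tauto

theorem valid_add {E F : Multiset (List V)} :
    Valid G (E + F) ↔ Valid G E ∧ Valid G F ∧ ∀ a ∈ verts E, a ∉ verts F := by
  simp only [Valid, Multiset.mem_add, verts_add, Multiset.nodup_add, Multiset.disjoint_left,
    or_imp, forall_and]
  tauto

theorem Valid.mono {E F : Multiset (List V)} (h : Valid G F) (hE : E ≤ F) : Valid G E := by
  obtain ⟨D, rfl⟩ := Multiset.le_iff_exists_add.1 hE
  exact (valid_add.1 h).1

theorem valid_reverse_cons {l : List V} {F : Multiset (List V)} :
    Valid G (l.reverse ::ₘ F) ↔ Valid G (l ::ₘ F) := by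
  simp only [valid_cons, isChain_adj_reverse, List.nodup_reverse, List.mem_reverse, ne_eq,
    List.reverse_eq_nil_iff]

theorem Valid.card_ends {F : Multiset (List V)} (h : Valid G F) :
    (ends F).card = 2 * F.card :=
  PathFamily.card_ends fun l hl => (h.1 l hl).1

/-- Two families that differ only in the orientation of their members. -/
structure Reorient (F F' : Multiset (List V)) : Prop where
  valid : ∀ G : SimpleGraph V, Valid G F → Valid G F'
  verts_eq : verts F' = verts F
  ends_eq : ends F' = ends F
  adj_iff : ∀ a b, famAdj F' a b ↔ famAdj F a b

theorem Reorient.refl (F : Multiset (List V)) : Reorient F F :=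
  ⟨fun _ h => h, rfl, rfl, fun _ _ => Iff.rfl⟩

theorem Reorient.reverse (l : List V) (F : Multiset (List V)) :
    Reorient (l ::ₘ F) (l.reverse ::ₘ F) where
  valid _ h := valid_reverse_cons.2 h
  verts_eq := by simp
  ends_eq := by simp [listEnds_reverse]
  adj_iff a b := by simp [listAdj_reverse]

theorem Reorient.trans {F F' F'' : Multiset (List V)} (h : Reorient F F')
    (h' : Reorient F' F'') : Reorient F F'' :=
  ⟨fun G hG => h'.valid G (h.valid G hG), h'.verts_eq.trans h.verts_eq,
    h'.ends_eq.trans h.ends_eq, fun a b => (h'.adj_iff a b).trans (h.adj_iff a b)⟩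

theorem Reorient.cons {F F' : Multiset (List V)} (l : List V) (h : Reorient F F')  :
    Reorient (l ::ₘ F) (l ::ₘ F') where
  valid G hG := by
    rw [valid_cons] at hG ⊢
    rw [h.verts_eq]
    exact ⟨hG.1, h.valid G hG.2.1, hG.2.2⟩
  verts_eq := by simp [h.verts_eq]
  ends_eq := by simp [h.ends_eq]
  adj_iff a b := by simp [h.adj_iff]

/-- An end vertex of a family can be moved to the head of its member. -/
theorem exists_reorient_head {F : Multiset (List V)} {x : V} (hx : x ∈ ends F) :
    ∃ l F₀, Reorient F ((x :: l) ::ₘ F₀) ∧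
      (F = (x :: l) ::ₘ F₀ ∨ F = (x :: l).reverse ::ₘ F₀) := by
  obtain ⟨l, hl, h⟩ := mem_ends.1 hx
  obtain ⟨F₀, rfl⟩ := Multiset.exists_cons_of_mem hl
  rcases mem_listEnds.1 h with h | h
  · obtain ⟨a, l, rfl⟩ : ∃ a l', l = a :: l' := by
      cases l <;> simp at h ⊢
    obtain rfl : a = x := by simpa using h
    exact ⟨l, F₀, Reorient.refl _, Or.inl rfl⟩
  · have h' : l.reverse.head? = some x := by simpa using h
    obtain ⟨a, l', hl'⟩ : ∃ a l', l.reverse = a :: l' := by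
      cases hr : l.reverse <;> simp [hr] at h' ⊢
    obtain rfl : a = x := by simpa [hl'] using h'
    refine ⟨l', F₀, ?_, Or.inr ?_⟩
    · rw [← hl']; exact Reorient.reverse _ _
    · rw [← hl', List.reverse_reverse]

theorem listEnds_append {P Q : List V} (hP : P ≠ []) (hQ : Q ≠ []) :
    listEnds (P ++ Q) = (P.head?.toList : Multiset V) + Q.getLast?.toList := by
  obtain ⟨a, P, rfl⟩ := List.exists_cons_of_ne_nil hP
  obtain ⟨b, Q, rfl⟩ := List.exists_cons_of_ne_nil hQ
  simp [listEnds, List.getLast?_append, List.getLast?_cons]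

theorem isChain_append_of_adj {P Q : List V} {x y : V} (hP : P.IsChain G.Adj)
    (hQ : Q.IsChain G.Adj) (hx : P.getLast? = some x) (hy : Q.head? = some y) (h : G.Adj x y) :
    (P ++ Q).IsChain G.Adj := by
  rw [List.isChain_append]
  refine ⟨hP, hQ, ?_⟩
  simp only [hx, hy, Option.mem_some_iff]
  rintro _ rfl _ rfl
  exact h

/-- Two vertex-disjoint families can be connected through an edge between end vertices. -/
theorem exists_join {A B : Multiset (List V)} (h : Valid G (A + B)) {x y : V}
    (hx : x ∈ ends A) (hy : y ∈ ends B) (hxy : G.Adj x y) :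
    ∃ C, Valid G C ∧ verts C = verts A + verts B ∧ x ::ₘ y ::ₘ ends C = ends A + ends B := by
  obtain ⟨l, A₀, hA, -⟩ := exists_reorient_head hx
  obtain ⟨r, B₀, hB, -⟩ := exists_reorient_head hy
  have h1 : Valid G ((x :: l) ::ₘ A₀ + ((y :: r) ::ₘ B₀)) := by
    rw [valid_add] at h ⊢
    rw [hA.verts_eq, hB.verts_eq]
    exact ⟨hA.valid G h.1, hB.valid G h.2.1, h.2.2⟩
  refine ⟨((x :: l).reverse ++ (y :: r)) ::ₘ (A₀ + B₀), ?_, ?_, ?_⟩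
  · have h2 : Valid G ((x :: l) ::ₘ ((y :: r) ::ₘ (A₀ + B₀))) := by
      have : (x :: l) ::ₘ A₀ + ((y :: r) ::ₘ B₀) = (x :: l) ::ₘ ((y :: r) ::ₘ (A₀ + B₀)) := by
        rw [Multiset.cons_add, Multiset.add_cons]
      rwa [this] at h1
    rw [valid_cons, valid_cons] at h2
    rw [valid_cons]
    obtain ⟨⟨_, hc1, hn1⟩, ⟨⟨_, hc2, hn2⟩, h3, h4⟩, h5⟩ := h2
    refine ⟨⟨by simp, ?_, ?_⟩, h3, ?_⟩
    · exact isChain_append_of_adj (isChain_adj_reverse.2 hc1) hc2 (by simp) (by simp) hxy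
    · rw [List.nodup_append]
      refine ⟨List.nodup_reverse.2 hn1, hn2, ?_⟩
      rintro a ha b hb rfl
      refine h5 a (List.mem_reverse.1 ha) ?_
      rw [verts_cons, Multiset.mem_add]
      exact Or.inl hb
    · intro a ha
      rcases List.mem_append.1 ha with ha | ha
      · have := h5 a (List.mem_reverse.1 ha)
        rw [verts_cons, Multiset.mem_add] at this
        tauto
      · exact h4 a ha
  · rw [← hA.verts_eq, ← hB.verts_eq]
    simp only [verts_cons, verts_add, ← Multiset.coe_add, Multiset.coe_reverse]
    abel
  · rw [← hA.ends_eq, ← hB.ends_eq]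
    simp only [ends_cons, ends_add]
    rw [listEnds_append (by simp) (by simp)]
    simp only [listEnds, List.head?_reverse, List.head?_cons, Option.toList_some,
      ← Multiset.singleton_add]
    simp only [Multiset.coe_singleton]
    abel

/-- `F'` arises from `F` by a rotation with pivot `q` replacing the end vertex `x` by `w`. -/
structure Exch (G : SimpleGraph V) (F : Multiset (List V)) (x q w : V)
    (F' : Multiset (List V)) : Prop where
  valid : Valid G F'
  verts_eq : verts F' = verts F
  ends_eq : x ::ₘ ends F' = w ::ₘ ends F
  adj : famAdj F q w
  stable : ∀ a, a ≠ x → a ≠ q → a ≠ w → ∀ b, famAdj F' a b ↔ famAdj F a b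

theorem Exch.of_reorient {F E F' : Multiset (List V)} {x q w : V} (h : Reorient F E)
    (hE : Exch G E x q w F') : Exch G F x q w F' where
  valid := hE.valid
  verts_eq := hE.verts_eq.trans h.verts_eq
  ends_eq := hE.ends_eq.trans (by rw [h.ends_eq])
  adj := (h.adj_iff _ _).1 hE.adj
  stable a h1 h2 h3 b := (hE.stable a h1 h2 h3 b).trans (h.adj_iff _ _)

/-- Rotation inside a single path. -/
theorem exch_same {P B : List V} {F : Multiset (List V)} {x q w : V}
    (hF : Valid G ((P ++ q :: B) ::ₘ F)) (hx : P.head? = some x) (hw : P.getLast? = some w)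
    (hxq : G.Adj x q) :
    Exch G ((P ++ q :: B) ::ₘ F) x q w ((P.reverse ++ q :: B) ::ₘ F) where
  valid := by
    rw [valid_cons] at hF ⊢
    refine ⟨⟨by simp, ?_, ?_⟩, hF.2.1, ?_⟩
    · have := List.isChain_append.1 hF.1.2.1
      exact isChain_append_of_adj (isChain_adj_reverse.2 this.1) this.2.1 (by simpa using hx)
        rfl hxq
    · have := hF.1.2.2
      rw [List.nodup_append] at this ⊢
      simpa using this
    · intro a ha
      exact hF.2.2 a (by simpa using ha)
  verts_eq := by simp [← Multiset.coe_add]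
  ends_eq := by
    have hP : P ≠ [] := by rintro rfl; simp at hx
    rw [ends_cons, ends_cons, listEnds_append (by simpa using hP) (by simp),
      listEnds_append hP (by simp), List.head?_reverse, hx, hw]
    simp only [Option.toList_some, ← Multiset.singleton_add, Multiset.coe_singleton]
    abel
  adj := by
    rw [famAdj_cons, listAdj_append]
    simp [hw]
  stable a h1 h2 h3 b := by
    rw [famAdj_cons, famAdj_cons, listAdj_append, listAdj_append, listAdj_reverse]
    simp only [List.getLast?_reverse, List.head?_cons, hx, hw, Option.some.injEq]
    grind

/-- Rotation onto another path. -/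
theorem exch_other {P A B : List V} {F : Multiset (List V)} {x q w : V}
    (hF : Valid G (P ::ₘ (A ++ q :: B) ::ₘ F)) (hx : P.head? = some x)
    (hw : A.getLast? = some w) (hxq : G.Adj x q) :
    Exch G (P ::ₘ (A ++ q :: B) ::ₘ F) x q w ((P.reverse ++ q :: B) ::ₘ A ::ₘ F) where
  valid := by
    have hA : A ≠ [] := by rintro rfl; simp at hw
    simp only [valid_cons, verts_cons, Multiset.mem_add, Multiset.mem_coe] at hF ⊢
    obtain ⟨⟨h1, h2, h3⟩, ⟨⟨-, h4, h5⟩, h6, h7⟩, h8⟩ := hF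
    have hc := List.isChain_append.1 h4
    have hn := List.nodup_append.1 h5
    refine ⟨⟨by simp, ?_, ?_⟩, ⟨⟨hA, hc.1, hn.1⟩, h6, ?_⟩, ?_⟩
    · exact isChain_append_of_adj (isChain_adj_reverse.2 h2) hc.2.1 (by simpa using hx) rfl hxq
    · rw [List.nodup_append]
      refine ⟨List.nodup_reverse.2 h3, hn.2.1, ?_⟩
      rintro a ha b hb rfl
      exact h8 a (by simpa using ha) (Or.inl (List.mem_append_right _ hb))
    · intro a ha
      exact h7 a (List.mem_append_left _ ha)
    · intro a ha
      rcases List.mem_append.1 ha with ha | ha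
      · have := h8 a (by simpa using ha)
        simp only [List.mem_append] at this
        tauto
      · rintro (h | h)
        · exact hn.2.2 a h a ha rfl
        · exact h7 a (List.mem_append_right _ ha) h
  verts_eq := by
    simp only [verts_cons, ← Multiset.coe_add, Multiset.coe_reverse]
    abel
  ends_eq := by
    have hA : A ≠ [] := by rintro rfl; simp at hw
    have hP : P ≠ [] := by rintro rfl; simp at hx
    simp only [ends_cons]
    rw [listEnds_append (by simpa using hP) (by simp), listEnds_append hA (by simp)]
    simp only [listEnds, List.head?_reverse, hx, hw, Option.toList_some,
      ← Multiset.singleton_add, Multiset.coe_singleton]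
    abel
  adj := by
    rw [famAdj_cons, famAdj_cons, listAdj_append]
    simp [hw]
  stable a h1 h2 h3 b := by
    simp only [famAdj_cons, listAdj_append, listAdj_reverse]
    simp only [List.getLast?_reverse, List.head?_cons, hx, hw, Option.some.injEq]
    grind

theorem exists_exch {F : Multiset (List V)} (hF : Valid G F) {x q : V} (hx : x ∈ ends F)
    (hq : q ∈ verts F) (hxq : G.Adj x q) :
    [q] ∈ F ∨ ∃ w F', Exch G F x q w F' := by
  obtain ⟨l, F₀, h, hE⟩ := exists_reorient_head hx
  by_cases hql : q ∈ x :: l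
  · right
    obtain ⟨P, B, hPB⟩ := List.append_of_mem hql
    have hP : P ≠ [] := by
      rintro rfl
      simp only [List.nil_append, List.cons.injEq] at hPB
      exact hxq.ne hPB.1
    obtain ⟨y, P, rfl⟩ := List.exists_cons_of_ne_nil hP
    obtain ⟨rfl, rfl⟩ : x = y ∧ l = P ++ q :: B := by simpa using hPB
    exact ⟨_, _, Exch.of_reorient h (exch_same (P := x :: P) (h.valid G hF) rfl
      (List.getLast?_eq_some_getLast (List.cons_ne_nil _ _)) hxq)⟩
  · rw [← h.verts_eq, verts_cons, Multiset.mem_add, Multiset.mem_coe] at hq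
    obtain ⟨R, hR, hqR⟩ := mem_verts.1 (hq.resolve_left hql)
    by_cases hRq : R = [q]
    · left
      subst hRq
      rcases hE with rfl | rfl <;> simp [hR]
    · right
      obtain ⟨F₁, rfl⟩ := Multiset.exists_cons_of_mem hR
      obtain ⟨A, B, rfl⟩ := List.append_of_mem hqR
      rcases List.eq_nil_or_concat A with rfl | ⟨A, w, rfl⟩
      · rcases B with _ | ⟨w, B⟩
        · simp at hRq
        have h' : Reorient F ((x :: l) ::ₘ ((w :: B).reverse ++ q :: []) ::ₘ F₁) := by
          refine h.trans (Reorient.cons _ ?_)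
          simpa using Reorient.reverse (q :: w :: B) F₁
        exact ⟨_, _, Exch.of_reorient h' (exch_other (h'.valid G hF) rfl (by simp; rfl) hxq)⟩
      · exact ⟨_, _, Exch.of_reorient h (exch_other (h.valid G hF) rfl (by simp; rfl) hxq)⟩

/-- The end `v` of `F₀` has been moved to `x` by rotations, resulting in `F`. -/
inductive RotTo (G : SimpleGraph V) (F₀ : Multiset (List V)) (v : V) :
    V → Multiset (List V) → Prop
  | refl : RotTo G F₀ v v F₀
  | step {x q w : V} {F F' : Multiset (List V)} :
      RotTo G F₀ v x F → Exch G F x q w F' → RotTo G F₀ v w F'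

/-- The vertices to which the end `v` of `F` can be moved by rotations. -/
def Rot (G : SimpleGraph V) (F : Multiset (List V)) (v : V) : Set V :=
  {x | ∃ F', RotTo G F v x F'}

theorem self_mem_rot (F : Multiset (List V)) (v : V) : v ∈ Rot G F v := ⟨F, .refl⟩

theorem RotTo.verts_eq {F₀ F : Multiset (List V)} {v x : V} (h : RotTo G F₀ v x F) :
    verts F = verts F₀ := by
  induction h with
  | refl => rfl
  | step _ hE ih => rw [hE.verts_eq, ih]

theorem RotTo.valid {F₀ F : Multiset (List V)} {v x : V} (h : RotTo G F₀ v x F)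
    (h₀ : Valid G F₀) : Valid G F := by
  cases h with
  | refl => exact h₀
  | step _ hE => exact hE.valid

theorem RotTo.ends_eq {F₀ F : Multiset (List V)} {v x : V} (h : RotTo G F₀ v x F) :
    v ::ₘ ends F = x ::ₘ ends F₀ := by
  induction h with
  | refl => rfl
  | @step x q w F F' _ hE ih =>
    have h1 := hE.ends_eq
    have h2 : x ::ₘ (v ::ₘ ends F') = x ::ₘ (w ::ₘ ends F₀) := by
      rw [Multiset.cons_swap, h1, Multiset.cons_swap, ih, Multiset.cons_swap]
    exact (Multiset.cons_inj_right x).1 h2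

theorem RotTo.mem_ends {F₀ F : Multiset (List V)} {v x : V} (h : RotTo G F₀ v x F)
    (hv : v ∈ ends F₀) : x ∈ ends F := by
  classical
  have h1 := h.ends_eq
  obtain ⟨E, hE⟩ := Multiset.exists_cons_of_mem hv
  rw [hE, Multiset.cons_swap, Multiset.cons_inj_right] at h1
  rw [h1]
  exact Multiset.mem_cons_self _ _

theorem Rot.mem_verts {F : Multiset (List V)} {v x : V} (hv : v ∈ ends F)
    (h : x ∈ Rot G F v) : x ∈ verts F := by
  obtain ⟨F', h⟩ := h
  rw [← h.verts_eq]
  exact mem_verts_of_mem_ends (h.mem_ends hv)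

theorem Exch.add {F F' : Multiset (List V)} {x q w : V} (h : Exch G F x q w F')
    {E : Multiset (List V)} (hE : Valid G (F + E)) : Exch G (F + E) x q w (F' + E) where
  valid := by
    rw [valid_add] at hE ⊢
    rw [h.verts_eq]
    exact ⟨h.valid, hE.2⟩
  verts_eq := by simp [h.verts_eq]
  ends_eq := by
    rw [ends_add, ends_add, ← Multiset.cons_add, h.ends_eq, Multiset.cons_add]
  adj := (famAdj_add _ _ _ _).2 (Or.inl h.adj)
  stable a h1 h2 h3 b := by rw [famAdj_add, famAdj_add, h.stable a h1 h2 h3]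

theorem RotTo.add {F₀ F E : Multiset (List V)} {v x : V} (h : RotTo G F₀ v x F)
    (hE : Valid G (F₀ + E)) : RotTo G (F₀ + E) v x (F + E) := by
  induction h with
  | refl => exact .refl
  | step h1 hX ih =>
    refine ih.step (hX.add ?_)
    rw [valid_add] at hE ⊢
    rw [h1.verts_eq]
    exact ⟨h1.valid hE.1, hE.2⟩

theorem Rot.mono {E F : Multiset (List V)} (hF : Valid G F) (h : E ≤ F) (v : V) :
    Rot G E v ⊆ Rot G F v := by
  obtain ⟨D, rfl⟩ := Multiset.le_iff_exists_add.1 h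
  rintro x ⟨F', hx⟩
  exact ⟨_, hx.add hF⟩

theorem RotTo.stable {F₀ F : Multiset (List V)} {v x q : V} (h : RotTo G F₀ v x F)
    (hq : q ∉ Rot G F₀ v) (hn : ∀ w ∈ Rot G F₀ v, ¬ famAdj F₀ q w) (b : V) :
    famAdj F q b ↔ famAdj F₀ q b := by
  induction h generalizing b with
  | refl => rfl
  | @step x p w F F' h1 hE ih =>
    have hw : w ∈ Rot G F₀ v := ⟨_, h1.step hE⟩
    have hx : x ∈ Rot G F₀ v := ⟨_, h1⟩
    rw [hE.stable q (by rintro rfl; exact hq hx) ?_ (by rintro rfl; exact hq hw), ih]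
    rintro rfl
    exact hn w hw ((ih w).1 hE.adj)

theorem exists_famAdj {F : Multiset (List V)} {q : V} (hq : q ∈ verts F) (h : [q] ∉ F) :
    ∃ w, famAdj F q w := by
  obtain ⟨l, hl, hql⟩ := mem_verts.1 hq
  obtain ⟨A, B, rfl⟩ := List.append_of_mem hql
  rcases List.eq_nil_or_concat A with rfl | ⟨A, w, rfl⟩
  · rcases B with _ | ⟨w, B⟩
    · exact absurd hl h
    · exact ⟨w, _, hl, by simp [listAdj]⟩
  · refine ⟨w, _, hl, ?_⟩
    rw [listAdj_append]
    simp

theorem Valid.not_famAdj_of_singleton {F : Multiset (List V)} (hF : Valid G F) {q : V}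
    (h : [q] ∈ F) (w : V) : ¬ famAdj F q w := by
  obtain ⟨F, rfl⟩ := Multiset.exists_cons_of_mem h
  rw [valid_cons] at hF
  rw [famAdj_cons]
  rintro (h | ⟨l, hl, h⟩)
  · simp [listAdj] at h
  · exact hF.2.2 q (by simp) (mem_verts.2 ⟨l, hl, h.left_mem⟩)

/-- A neighbour of a vertex reachable by rotations is itself reachable, or is next to a
reachable vertex, or can be absorbed as a one-vertex path. -/
theorem rot_adj {F : Multiset (List V)} (hF : Valid G F) {v x q : V} (hv : v ∈ ends F)
    (hx : x ∈ Rot G F v) (hq : q ∈ verts F) (hxq : G.Adj x q) :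
    q ∈ Rot G F v ∨ (∃ w ∈ Rot G F v, famAdj F q w) ∨
      ([q] ∈ F ∧ q ≠ v ∧ ∃ C, Valid G C ∧ verts C = verts F ∧ v ::ₘ q ::ₘ ends C = ends F) := by
  classical
  by_cases h1 : q ∈ Rot G F v
  · exact Or.inl h1
  by_cases h2 : ∃ w ∈ Rot G F v, famAdj F q w
  · exact Or.inr (Or.inl h2)
  refine Or.inr (Or.inr ?_)
  push Not at h2
  obtain ⟨F', hF'⟩ := hx
  have hval := hF'.valid hF
  have hxe := hF'.mem_ends hv
  have hq' : q ∈ verts F' := by rwa [hF'.verts_eq]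
  rcases exists_exch hval hxe hq' hxq with h3 | ⟨w, F'', hE⟩
  · have hqF : [q] ∈ F := by
      by_contra h
      obtain ⟨w, hw⟩ := exists_famAdj hq h
      exact hval.not_famAdj_of_singleton h3 w ((hF'.stable h1 h2 w).2 hw)
    refine ⟨hqF, by rintro rfl; exact h1 (self_mem_rot _ _), ?_⟩
    obtain ⟨D, rfl⟩ := Multiset.exists_cons_of_mem h3
    have hxD : x ∈ ends D := by
      rw [ends_cons, Multiset.mem_add] at hxe
      refine hxe.resolve_left fun h => hxq.ne ?_
      simpa [listEnds] using h
    obtain ⟨C, hC1, hC2, hC3⟩ := exists_join (A := D) (B := {[q]}) (x := x) (y := q)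
      (by rw [← Multiset.singleton_add] at hval; rwa [add_comm]) hxD (by simp [listEnds]) hxq
    refine ⟨C, hC1, ?_, ?_⟩
    · rw [hC2, ← hF'.verts_eq]
      simp [add_comm]
    · have h4 := hF'.ends_eq
      have h5 : x ::ₘ (v ::ₘ q ::ₘ ends C) = x ::ₘ ends F := by
        rw [← h4, Multiset.cons_swap, Multiset.cons_inj_right, hC3]
        simp [add_comm]
      exact (Multiset.cons_inj_right x).1 h5
  · exact absurd ((hF'.stable h1 h2 w).1 hE.adj) (h2 w ⟨_, hF'.step hE⟩)

/-- Closing: an edge between the rotation sets of two disjoint families joins them. -/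
theorem exists_join_of_rot {A B : Multiset (List V)} (h : Valid G (A + B)) {u v x y : V}
    (hv : v ∈ ends A) (hu : u ∈ ends B) (hx : x ∈ Rot G A v) (hy : y ∈ Rot G B u)
    (hxy : G.Adj x y) :
    ∃ C, Valid G C ∧ verts C = verts A + verts B ∧ v ::ₘ u ::ₘ ends C = ends A + ends B := by
  obtain ⟨A', hA⟩ := hx
  obtain ⟨B', hB⟩ := hy
  rw [valid_add] at h
  have h' : Valid G (A' + B') := by
    rw [valid_add, hA.verts_eq, hB.verts_eq]
    exact ⟨hA.valid h.1, hB.valid h.2.1, h.2.2⟩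
  obtain ⟨C, h1, h2, h3⟩ := exists_join h' (hA.mem_ends hv) (hB.mem_ends hu) hxy
  refine ⟨C, h1, by rw [h2, hA.verts_eq, hB.verts_eq], ?_⟩
  have h4 : x ::ₘ y ::ₘ (v ::ₘ u ::ₘ ends C) = x ::ₘ y ::ₘ (ends A + ends B) := by
    have e1 := hA.ends_eq
    have e2 := hB.ends_eq
    simp only [← Multiset.singleton_add] at h3 e1 e2 ⊢
    calc _ = {v} + ({u} + ({x} + ({y} + ends C))) := by abel
      _ = ({v} + ends A') + ({u} + ends B') := by rw [h3]; abel
      _ = _ := by rw [e1, e2]; abel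
  exact (Multiset.cons_inj_right y).1 ((Multiset.cons_inj_right x).1 h4)

end

section

variable {V : Type*} [Fintype V] [DecidableEq V] {G : SimpleGraph V}

open scoped Classical in
/-- The vertices having a neighbour in `U`. -/
noncomputable def nbr (G : SimpleGraph V) (U : Finset V) : Finset V :=
  Finset.univ.filter fun v => ∃ u ∈ U, G.Adj u v

theorem mem_nbr {U : Finset V} {v : V} : v ∈ nbr G U ↔ ∃ u ∈ U, G.Adj u v := by simp [nbr]

theorem nbr_mono {U W : Finset V} (h : U ⊆ W) : nbr G U ⊆ nbr G W := fun v hv => by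
  obtain ⟨u, hu, h'⟩ := mem_nbr.1 hv
  exact mem_nbr.2 ⟨u, h hu, h'⟩

theorem nbr_union (U W : Finset V) : nbr G (U ∪ W) = nbr G U ∪ nbr G W := by
  ext v
  simp only [mem_nbr, Finset.mem_union]
  grind

theorem exists_adj_of_joined {m : ℕ} (hJ : IsJoined G m) {A B : Finset V} (hAB : Disjoint A B)
    (hA : m ≤ A.card) (hB : m ≤ B.card) : ∃ a ∈ A, ∃ b ∈ B, G.Adj a b := by
  obtain ⟨A', hA', hcA⟩ := Finset.exists_subset_card_eq hA
  obtain ⟨B', hB', hcB⟩ := Finset.exists_subset_card_eq hB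
  obtain ⟨a, ha, b, hb, h⟩ := hJ A' B' (Finset.disjoint_of_subset_left hA'
    (Finset.disjoint_of_subset_right hB' hAB)) hcA hcB
  exact ⟨a, hA' ha, b, hB' hb, h⟩

/-- Fewer than `m` vertices of `Y` are outside `U` and not adjacent to `U`. -/
theorem card_sdiff_nbr_lt {m : ℕ} (hJ : IsJoined G m) {U : Finset V}
    (hU : m ≤ U.card) (Y : Finset V) : (Y \ (U ∪ nbr G U)).card < m := by
  by_contra! h
  obtain ⟨a, ha, b, hb, hab⟩ := exists_adj_of_joined hJ (A := U) (B := Y \ (U ∪ nbr G U))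
    (by
      rw [Finset.disjoint_left]
      intro a ha hb
      simp [ha] at hb) hU h
  simp only [Finset.mem_sdiff, Finset.mem_union, mem_nbr] at hb
  exact hb.2 (Or.inr ⟨a, ha, hab⟩)

open scoped Classical in
/-- `X` together with the neighbours of `X` inside the family `F`. -/
noncomputable def near (F : Multiset (List V)) (X : Finset V) : Finset V :=
  Finset.univ.filter fun q => q ∈ X ∨ ∃ w ∈ X, famAdj F q w

theorem mem_near {F : Multiset (List V)} {X : Finset V} {q : V} :
    q ∈ near F X ↔ q ∈ X ∨ ∃ w ∈ X, famAdj F q w := by simp [near]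

theorem subset_near (F : Multiset (List V)) (X : Finset V) : X ⊆ near F X :=
  fun _ h => mem_near.2 (Or.inl h)

theorem near_union (F : Multiset (List V)) (X Y : Finset V) :
    near F (X ∪ Y) = near F X ∪ near F Y := by
  ext q
  simp only [mem_near, Finset.mem_union]
  grind

theorem exists_famAdj_finset {F : Multiset (List V)} (hF : Valid G F) (w : V) :
    ∃ S : Finset V, S.card ≤ 2 ∧ ∀ q, famAdj F q w → q ∈ S := by
  by_cases hw : w ∈ verts F
  · obtain ⟨l, hl, hwl⟩ := mem_verts.1 hw
    obtain ⟨F, rfl⟩ := Multiset.exists_cons_of_mem hl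
    obtain ⟨A, B, rfl⟩ := List.append_of_mem hwl
    obtain ⟨⟨-, -, hn⟩, -, hd⟩ := valid_cons.1 hF
    have hn1 := List.nodup_append.1 hn
    have hn2 := List.nodup_cons.1 hn1.2.1
    refine ⟨(A.getLast?.toList ++ B.head?.toList).toFinset, ?_, ?_⟩
    · refine (List.toFinset_card_le _).trans ?_
      cases A.getLast? <;> cases B.head? <;> simp
    · rintro q hq
      rw [famAdj_cons] at hq
      rcases hq with hq | ⟨l, hl, hq⟩
      · have h1 : ¬ listAdj A q w := fun h => hn1.2.2 w h.right_mem w (by simp) rfl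
        have h2 : ¬ listAdj B q w := fun h => hn2.1 h.right_mem
        have h3 : A.getLast? ≠ some w := fun h =>
          hn1.2.2 w (List.mem_of_mem_getLast? h) w (by simp) rfl
        have h4 : B.head? ≠ some w := fun h => hn2.1 (List.mem_of_mem_head? h)
        have h5 := listAdj_append [w] B q w
        rw [List.singleton_append] at h5
        rw [listAdj_append, h5] at hq
        simp only [h1, h2, h3, h4, listAdj, List.getLast?_singleton, List.head?_cons, false_or,
          false_and, or_false, and_false, and_true, true_and] at hq
        simp only [List.toFinset_append, Finset.mem_union, List.mem_toFinset, Option.mem_toList]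
        rcases hq with hq | hq
        · exact Or.inr hq
        · exact Or.inl hq
      · exact absurd (mem_verts.2 ⟨l, hl, hq.right_mem⟩) (hd w hwl)
  · refine ⟨∅, by simp, ?_⟩
    rintro q ⟨l, hl, h⟩
    exact absurd (mem_verts.2 ⟨l, hl, h.right_mem⟩) hw

theorem card_near_le {F : Multiset (List V)} (hF : Valid G F) (X : Finset V) :
    (near F X).card ≤ 3 * X.card := by
  choose S hS hS' using exists_famAdj_finset hF
  calc (near F X).card ≤ (X ∪ X.biUnion S).card := by
        refine Finset.card_le_card fun q hq => ?_
        rw [Finset.mem_union, Finset.mem_biUnion]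
        rcases mem_near.1 hq with h | ⟨w, hw, h⟩
        · exact Or.inl h
        · exact Or.inr ⟨w, hw, hS' w q h⟩
    _ ≤ X.card + X.card * 2 :=
        (Finset.card_union_le _ _).trans
          (Nat.add_le_add_left (Finset.card_biUnion_le_card_mul _ _ _ fun w _ => hS w) _)
    _ = 3 * X.card := by ring

open scoped Classical in
/-- `Rot` as a finite set. -/
noncomputable def rotSet (G : SimpleGraph V) (F : Multiset (List V)) (v : V) : Finset V :=
  Finset.univ.filter fun x => x ∈ Rot G F v

theorem mem_rotSet {F : Multiset (List V)} {v x : V} : x ∈ rotSet G F v ↔ x ∈ Rot G F v := by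
  simp [rotSet]

/-- A fixed small set `B` outside which all small sets expand into the family `W`, even
after deleting everything near `B`. -/
theorem exists_bad_set {m K : ℕ} (hJ : IsJoined G m) {W : Multiset (List V)}
    (hW : Valid G W) (hY : (2 * K + 8) * m < (verts W).card) :
    ∃ B : Finset V, B.card < m ∧ ∀ Z : Finset V, Disjoint Z B → Z.card ≤ m →
      K * Z.card ≤ ((nbr G Z ∩ (verts W).toFinset) \ near W B).card := by
  set Y := (verts W).toFinset with hYdef
  have hYc : Y.card = (verts W).card := Multiset.toFinset_card_of_nodup hW.2
  let P : Finset V → Prop := fun B =>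
    B.card ≤ 2 * m ∧ ((nbr G B ∩ Y) \ near W B).card ≤ K * B.card
  classical
  obtain ⟨B, hB, hmax⟩ := Finset.exists_max_image (Finset.univ.filter P) Finset.card
    ⟨∅, Finset.mem_filter.2 ⟨Finset.mem_univ _, by simp,
      by simp [show nbr G ∅ = ∅ by ext; simp [mem_nbr]]⟩⟩
  obtain ⟨hB1, hB2⟩ : P B := (Finset.mem_filter.1 hB).2
  have hBm : B.card < m := by
    by_contra! h
    have h1 := card_sdiff_nbr_lt hJ h Y
    have h2 : Y ⊆ ((nbr G B ∩ Y) \ near W B) ∪ near W B ∪ (Y \ (B ∪ nbr G B)) := by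
      intro y hy
      have := subset_near W B
      simp only [Finset.mem_union, Finset.mem_sdiff, Finset.mem_inter]
      by_cases h3 : y ∈ B
      · have := this h3; tauto
      · tauto
    have h3 := (Finset.card_le_card h2).trans ((Finset.card_union_le _ _).trans
      (Nat.add_le_add_right (Finset.card_union_le _ _) _))
    have h4 := card_near_le hW B
    have h5 : K * B.card ≤ K * (2 * m) := Nat.mul_le_mul_left _ hB1
    have h6 : (2 * K + 8) * m = K * (2 * m) + 8 * m := by ring
    omega
  refine ⟨B, hBm, fun Z hZB hZ => ?_⟩
  by_contra! h
  have hZ0 : 0 < Z.card := by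
    rcases Nat.eq_zero_or_pos Z.card with h0 | h0
    · rw [h0] at h; simp at h
    · exact h0
  have hc : (B ∪ Z).card = B.card + Z.card :=
    Finset.card_union_of_disjoint hZB.symm
  have hPZ : P (B ∪ Z) := by
    refine ⟨by omega, ?_⟩
    have : (nbr G (B ∪ Z) ∩ Y) \ near W (B ∪ Z) ⊆
        ((nbr G B ∩ Y) \ near W B) ∪ ((nbr G Z ∩ Y) \ near W B) := by
      intro y hy
      simp only [nbr_union, near_union, Finset.mem_union, Finset.mem_sdiff,
        Finset.mem_inter] at hy ⊢
      tauto
    have := (Finset.card_le_card this).trans (Finset.card_union_le _ _)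
    rw [hc, Nat.mul_add]
    omega
  have := hmax _ (Finset.mem_filter.2 ⟨Finset.mem_univ _, hPZ⟩)
  omega

theorem famAdj_of_le {W F : Multiset (List V)} (hF : Valid G F) (h : W ≤ F) {q w : V}
    (hq : q ∈ verts W) (hqw : famAdj F q w) : famAdj W q w := by
  obtain ⟨D, rfl⟩ := Multiset.le_iff_exists_add.1 h
  rcases (famAdj_add _ _ _ _).1 hqw with h | ⟨l, hl, h⟩
  · exact h
  · exact absurd (mem_verts.2 ⟨l, hl, h.left_mem⟩) ((valid_add.1 hF).2.2 q hq)

theorem verts_mono {E F : Multiset (List V)} (h : E ≤ F) : verts E ≤ verts F := by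
  obtain ⟨D, rfl⟩ := Multiset.le_iff_exists_add.1 h
  simp

theorem famAdj_mono {E F : Multiset (List V)} (h : E ≤ F) {a b : V} (hab : famAdj E a b) :
    famAdj F a b := by
  obtain ⟨l, hl, h'⟩ := hab
  exact ⟨l, Multiset.mem_of_le h hl, h'⟩

/-- `q` can be absorbed as a one-vertex path at the end `v` of `F`. -/
def Mergeable (G : SimpleGraph V) (F : Multiset (List V)) (v q : V) : Prop :=
  q ≠ v ∧ ∃ C, Valid G C ∧ verts C = verts F ∧ v ::ₘ q ::ₘ ends C = ends F

/-- Once the reachable set is slightly larger than the missing part of `W`, it has at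
least `m` elements outside the bad set. -/
theorem card_rotSet_sdiff_ge {m : ℕ} {W W' F : Multiset (List V)} {B : Finset V}
    (hB : ∀ Z : Finset V, Disjoint Z B → Z.card ≤ m →
      5 * Z.card ≤ ((nbr G Z ∩ (verts W).toFinset) \ near W B).card)
    (hF : Valid G F) (hWF : W' ≤ F) (hWW : W' ≤ W) {v : V} (hv : v ∈ ends F)
    (hM : (verts W).card ≤ (verts W').card + (rotSet G F v \ B).card)
    (h1 : 0 < (rotSet G F v \ B).card)
    (hmerge : ∀ q, [q] ∈ W' → ¬ Mergeable G F v q) (hW : (verts W).Nodup) :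
    m ≤ (rotSet G F v \ B).card := by
  by_contra! hlt
  set X := rotSet G F v \ B with hX
  have h2 := hB X Finset.sdiff_disjoint hlt.le
  have h3 : (nbr G X ∩ (verts W).toFinset) \ near W B ⊆
      near F X ∪ ((verts W).toFinset \ (verts W').toFinset) := by
    intro q hq
    simp only [Finset.mem_sdiff, Finset.mem_inter, Finset.mem_union, mem_near, not_or,
      Multiset.mem_toFinset] at hq ⊢
    obtain ⟨⟨hq1, hq2⟩, hqB, hq3⟩ := hq
    by_cases hqW : q ∈ verts W'
    · left
      obtain ⟨x, hx, hxq⟩ := mem_nbr.1 hq1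
      have hqF : q ∈ verts F := Multiset.mem_of_le (verts_mono hWF) hqW
      have hxR : x ∈ Rot G F v := mem_rotSet.1 (Finset.mem_sdiff.1 hx).1
      rcases rot_adj hF hv hxR hqF hxq with h | ⟨w, hw, h⟩ | ⟨hs, hC⟩
      · left
        exact Finset.mem_sdiff.2 ⟨mem_rotSet.2 h, hqB⟩
      · right
        refine ⟨w, Finset.mem_sdiff.2 ⟨mem_rotSet.2 hw, fun hwB => hq3 ⟨w, hwB, ?_⟩⟩, h⟩
        exact famAdj_mono hWW (famAdj_of_le hF hWF hqW h)
      · exfalso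
        refine hmerge q ?_ hC
        obtain ⟨l, hl, hql⟩ := mem_verts.1 hqW
        obtain ⟨D, rfl⟩ := Multiset.le_iff_exists_add.1 hWF
        rcases Multiset.mem_add.1 hs with h | h
        · exact h
        · exact absurd (mem_verts.2 ⟨_, h, by simp⟩) ((valid_add.1 hF).2.2 q hqW)
    · exact Or.inr ⟨hq2, hqW⟩
  have h4 := (Finset.card_le_card h3).trans (Finset.card_union_le _ _)
  have h5 := card_near_le hF X
  have h6 : ((verts W).toFinset \ (verts W').toFinset).card =
      (verts W).card - (verts W').card := by
    rw [Finset.card_sdiff_of_subset, Multiset.toFinset_card_of_nodup hW,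
      Multiset.toFinset_card_of_nodup (Multiset.nodup_of_le (verts_mono hWW) hW)]
    intro a ha
    rw [Multiset.mem_toFinset] at ha ⊢
    exact Multiset.mem_of_le (verts_mono hWW) ha
  omega

/-- Outside the bad set, an end vertex reaches at least `min m (2 ^ j)` vertices by rotations
touching at most `j` members of `W`. -/
theorem exists_card_rot_few {m : ℕ} {W : Multiset (List V)} {B : Finset V}
    (hB : ∀ Z : Finset V, Disjoint Z B → Z.card ≤ m →
      6 * Z.card ≤ ((nbr G Z ∩ (verts W).toFinset) \ near W B).card)
    {Q : List V} (hF : Valid G (Q ::ₘ W)) (hlen : ∀ l ∈ W, 2 ≤ l.length) {v : V}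
    (hv : v ∈ listEnds Q) (hvB : v ∉ B) (j : ℕ) :
    ∃ X : Finset V, min m (2 ^ j) ≤ X.card ∧ Disjoint X B ∧
      ∀ x ∈ X, ∃ R ≤ W, R.card ≤ j ∧ x ∈ Rot G (Q ::ₘ R) v := by
  classical
  induction j with
  | zero =>
    refine ⟨{v}, by simp, by simpa using hvB, ?_⟩
    intro x hx
    rw [Finset.mem_singleton] at hx
    subst hx
    exact ⟨0, Multiset.zero_le _, by simp, self_mem_rot _ _⟩
  | succ j ih =>
    obtain ⟨X, hX, hXB, hXR⟩ := ih
    obtain ⟨Z, hZX, hZc⟩ := Finset.exists_subset_card_eq hX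
    let X' : Finset V := Finset.univ.filter fun x =>
      x ∉ B ∧ ∃ R ≤ W, R.card ≤ j + 1 ∧ x ∈ Rot G (Q ::ₘ R) v
    refine ⟨X', ?_, ?_, ?_⟩
    · have h1 := hB Z (Finset.disjoint_of_subset_left hZX hXB) (by rw [hZc]; exact min_le_left _ _)
      have h2 : (nbr G Z ∩ (verts W).toFinset) \ near W B ⊆ near W X' := by
        intro q hq
        simp only [Finset.mem_sdiff, Finset.mem_inter, mem_near, not_or,
          Multiset.mem_toFinset] at hq ⊢
        obtain ⟨⟨hq1, hq2⟩, hqB, hq3⟩ := hq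
        obtain ⟨x, hx, hxq⟩ := mem_nbr.1 hq1
        obtain ⟨R, hRW, hRc, hxR⟩ := hXR x (hZX hx)
        obtain ⟨l, hl, hql⟩ := mem_verts.1 hq2
        obtain ⟨R', hRR', hR'W, hlR', hR'c⟩ : ∃ R', R ≤ R' ∧ R' ≤ W ∧ l ∈ R' ∧
            R'.card ≤ j + 1 := by
          by_cases h : l ∈ R
          · exact ⟨R, le_rfl, hRW, h, by omega⟩
          · refine ⟨l ::ₘ R, Multiset.le_cons_self _ _, ?_, Multiset.mem_cons_self _ _, ?_⟩
            · exact (Multiset.cons_le_of_notMem h).2 ⟨hl, hRW⟩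
            · rw [Multiset.card_cons]; omega
        have hval : Valid G (Q ::ₘ R') := hF.mono ((Multiset.cons_le_cons_iff _).2 hR'W)
        have hve : v ∈ ends (Q ::ₘ R') := by simp [hv]
        have hqR' : q ∈ verts R' := mem_verts.2 ⟨l, hlR', hql⟩
        have hadj : ∀ w, famAdj (Q ::ₘ R') q w → famAdj W q w := fun w hw =>
          famAdj_mono hR'W (famAdj_of_le hval (Multiset.le_cons_self _ _) hqR' hw)
        rcases rot_adj hval hve (Rot.mono hval ((Multiset.cons_le_cons_iff _).2 hRR') v hxR)
          (by simp [hqR']) hxq with h | ⟨w, hw, h⟩ | ⟨hs, hC⟩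
        · left
          exact Finset.mem_filter.2 ⟨Finset.mem_univ _, hqB, R', hR'W, hR'c, h⟩
        · right
          refine ⟨w, Finset.mem_filter.2 ⟨Finset.mem_univ _, ?_, R', hR'W, hR'c, hw⟩, hadj w h⟩
          exact fun hwB => hq3 ⟨w, hwB, hadj w h⟩
        · exfalso
          rcases Multiset.mem_cons.1 hs with h | h
          · obtain ⟨⟨-, -, -⟩, -, hd⟩ := valid_cons.1 hval
            exact hd q (by rw [← h]; simp) hqR'
          · have := hlen _ (Multiset.mem_of_le hR'W h)
            simp at this
      have h3 := (Finset.card_le_card h2).trans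
        (card_near_le (hF.mono (Multiset.le_cons_self _ _)) X')
      rw [pow_succ]
      omega
    · rw [Finset.disjoint_left]
      intro x hx
      exact (Finset.mem_filter.1 hx).2.1
    · intro x hx
      exact (Finset.mem_filter.1 hx).2.2

/-- The number of vertices covered by a finite set of lists. -/
def mass (S : Finset (List V)) : ℕ := ∑ l ∈ S, l.length

theorem card_verts (F : Multiset (List V)) : (verts F).card = (F.map List.length).sum := by
  induction F using Multiset.induction_on with
  | empty => simp
  | cons l F ih => simp [ih]

theorem mass_eq (S : Finset (List V)) : mass S = (verts S.val).card := by
  rw [card_verts]; rfl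

theorem mass_union_le (S T : Finset (List V)) : mass (S ∪ T) ≤ mass S + mass T :=
  Finset.sum_union_inter (f := List.length) (s₁ := S) (s₂ := T) ▸ Nat.le_add_right _ _

theorem mass_mono {S T : Finset (List V)} (h : S ⊆ T) : mass S ≤ mass T :=
  Finset.sum_le_sum_of_subset h

theorem mass_insert_le (l : List V) (S : Finset (List V)) :
    mass (insert l S) ≤ l.length + mass S := by
  rw [Finset.insert_eq]
  refine (mass_union_le _ _).trans ?_
  simp [mass]

theorem length_le_mass {l : List V} {S : Finset (List V)} (h : l ∈ S) : l.length ≤ mass S :=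
  Finset.single_le_sum (f := List.length) (fun _ _ => Nat.zero_le _) h

theorem mass_sdiff_add (S T : Finset (List V)) : mass S ≤ mass (S \ T) + mass T := by
  have h : S ⊆ (S \ T) ∪ T := by
    intro x hx
    by_cases hxT : x ∈ T <;> simp [hx, hxT]
  exact (mass_mono h).trans (mass_union_le _ _)

theorem Valid.nodup {F : Multiset (List V)} (hF : Valid G F) : F.Nodup := by
  induction F using Multiset.induction_on with
  | empty => simp
  | cons l F ih =>
    obtain ⟨⟨h1, -, -⟩, h2, h3⟩ := valid_cons.1 hF
    refine Multiset.nodup_cons.2 ⟨fun h => ?_, ih h2⟩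
    obtain ⟨a, l, rfl⟩ := List.exists_cons_of_ne_nil h1
    exact h3 a (by simp) (mem_verts.2 ⟨_, h, by simp⟩)

theorem Valid.eq_of_mem {F : Multiset (List V)} (hF : Valid G F) {l r : List V} (hl : l ∈ F)
    (hr : r ∈ F) {a : V} (hal : a ∈ l) (har : a ∈ r) : l = r := by
  by_contra h
  obtain ⟨F, rfl⟩ := Multiset.exists_cons_of_mem hl
  have hr' : r ∈ F := (Multiset.mem_cons.1 hr).resolve_left (Ne.symm h)
  exact (valid_cons.1 hF).2.2 a hal (mem_verts.2 ⟨r, hr', har⟩)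

/-- Greedy choice of a subfamily of prescribed mass. -/
theorem exists_subset_mass {S : Finset (List V)} {M a : ℕ} (hM : ∀ l ∈ S, l.length ≤ M)
    (ha : a ≤ mass S) : ∃ T ⊆ S, a ≤ mass T ∧ mass T ≤ a + M := by
  induction S using Finset.induction_on with
  | empty => exact ⟨∅, by simp, ha, by simp [mass]⟩
  | insert l S hl ih =>
    by_cases h : a ≤ mass S
    · obtain ⟨T, hT, h1, h2⟩ := ih (fun l hl => hM l (Finset.mem_insert_of_mem hl)) h
      exact ⟨T, hT.trans (Finset.subset_insert _ _), h1, h2⟩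
    · refine ⟨_, subset_rfl, ha, ?_⟩
      have := mass_insert_le l S
      have := hM l (Finset.mem_insert_self _ _)
      omega

/-- The potential that is minimised among all families with the fewest paths. -/
def potential (N : ℕ) (F : Multiset (List V)) : ℕ := (F.map fun l => (N + 1) ^ l.length).sum

theorem RotTo.card_eq {F₀ F : Multiset (List V)} {v x : V} (h : RotTo G F₀ v x F)
    (h₀ : Valid G F₀) : F.card = F₀.card := by
  have h1 := congrArg Multiset.card h.ends_eq
  have h2 := (h.valid h₀).card_ends
  have h3 := h₀.card_ends
  simp only [Multiset.card_cons] at h1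
  omega

theorem exists_split {R : List V} {q : V} (hq : q ∈ R) (hR : 2 ≤ R.length) :
    ∃ A B, (R = A ++ q :: B ∨ R.reverse = A ++ q :: B) ∧ A ≠ [] ∧
      2 * (B.length + 1) ≤ R.length + 1 := by
  obtain ⟨A, B, rfl⟩ := List.append_of_mem hq
  simp only [List.length_append, List.length_cons] at hR ⊢
  by_cases h : B.length < A.length ∨ (A.length = B.length)
  · refine ⟨A, B, Or.inl rfl, ?_, by omega⟩
    rintro rfl
    simp at h hR
    omega
  · refine ⟨B.reverse, A.reverse, Or.inr (by simp), ?_, ?_⟩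
    · intro h0
      rw [List.reverse_eq_nil_iff] at h0
      subst h0
      simp at h
    · simp only [List.length_reverse]
      omega

/-- In a potential-minimal family, a path adjacent to a vertex reachable by rotations in `S` is
at most four times as long as the mass of `S`. -/
theorem length_le_of_potential_min {F S : Finset (List V)} {N : ℕ} (hF : Valid G F.val)
    (hN : F.card ≤ N)
    (hmin : ∀ C, Valid G C → verts C = verts F.val → C.card = F.card →
      potential N F.val ≤ potential N C)
    (hS : S ⊆ F) {R : List V} (hR : R ∈ F) (hRS : R ∉ S) {v x q : V} (hv : v ∈ ends S.val)
    (hx : x ∈ Rot G S.val v) (hq : q ∈ R) (hxq : G.Adj x q) :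
    R.length ≤ 4 * mass S := by
  by_contra! hlen
  have hSF : S.val ≤ F.val := Finset.val_le_iff.2 hS
  have hvalS := hF.mono hSF
  obtain ⟨S', hS'⟩ := hx
  have hRSF : R ::ₘ S.val ≤ F.val := (Multiset.cons_le_of_notMem hRS).2 ⟨hR, hSF⟩
  obtain ⟨D, hD⟩ := Multiset.le_iff_exists_add.1 hRSF
  obtain ⟨l, S₀, hre, -⟩ := exists_reorient_head (hS'.mem_ends hv)
  have hmassS : mass S = (x :: l).length + (S₀.map List.length).sum := by
    rw [mass_eq, ← hS'.verts_eq, ← hre.verts_eq, card_verts]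
    simp
  have hxl : 0 < mass S := by rw [hmassS]; simp
  obtain ⟨A, B, hAB, hA, hB⟩ := exists_split hq (by omega)
  have hRlen : R.length = A.length + (B.length + 1) := by
    rcases hAB with h | h
    · rw [h]; simp
    · rw [← List.length_reverse, h]; simp
  obtain ⟨w, hw⟩ : ∃ w, A.getLast? = some w := ⟨_, List.getLast?_eq_some_getLast hA⟩
  have hvalR : Valid G (R ::ₘ S.val) := hF.mono hRSF
  have hverts : verts ((x :: l) ::ₘ (A ++ q :: B) ::ₘ S₀) = verts (R ::ₘ S.val) := by
    have h1 : verts S.val = (x :: l : List V) + verts S₀ := by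
      rw [← hS'.verts_eq, ← hre.verts_eq, verts_cons]
    rw [verts_cons, verts_cons, verts_cons, h1]
    rcases hAB with h | h
    · rw [h]; abel
    · rw [← h, Multiset.coe_reverse]; abel
  have hval1 : Valid G ((x :: l) ::ₘ (A ++ q :: B) ::ₘ S₀) := by
    have h1 : Valid G ((x :: l) ::ₘ S₀) := hre.valid G (hS'.valid hvalS)
    refine ⟨?_, by rw [hverts]; exact hvalR.2⟩
    intro r hr
    simp only [Multiset.mem_cons] at hr
    rcases hr with rfl | rfl | hr
    · exact h1.1 _ (by simp)
    · refine ⟨by simp, ?_⟩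
      have := (hvalR.1 R (by simp)).2
      rcases hAB with h | h
      · rwa [← h]
      · rw [← h]; exact isChain_adj_reverse.2 this
    · exact h1.1 _ (by simp [hr])
  have hE := exch_other (P := x :: l) hval1 rfl hw hxq
  set C := ((x :: l).reverse ++ q :: B) ::ₘ A ::ₘ S₀ with hC
  have hvalC : Valid G (C + D) := by
    have h1 := hF
    rw [hD, valid_add] at h1
    rw [valid_add, hE.verts_eq, hverts]
    exact ⟨hE.valid, h1.2⟩
  have hcardS : S₀.card + 1 = S.card := by
    have h1 := hS'.card_eq hvalS
    have h2 := congrArg Multiset.card hre.ends_eq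
    rw [(hre.valid G (hS'.valid hvalS)).card_ends, (hS'.valid hvalS).card_ends] at h2
    rw [Multiset.card_cons] at h2
    have h3 : S.val.card = S.card := rfl
    omega
  have hcardF : F.card = S.card + 1 + D.card := by
    have := congrArg Multiset.card hD
    rw [Multiset.card_add, Multiset.card_cons] at this
    exact this
  have hcardC : C.card = S₀.card + 2 := by rw [hC]; simp
  have h1 := hmin (C + D) hvalC (by rw [verts_add, hE.verts_eq, hverts, hD, verts_add])
    (by rw [Multiset.card_add]; omega)
  have hpot : potential N C ≤ C.card * (N + 1) ^ (R.length - 1) := by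
    unfold potential
    have : C.card = (C.map fun l => (N + 1) ^ l.length).card := by simp
    rw [this, ← smul_eq_mul]
    refine Multiset.sum_le_card_nsmul _ _ ?_
    intro y hy
    obtain ⟨r, hr, rfl⟩ := Multiset.mem_map.1 hy
    refine Nat.pow_le_pow_right (by omega) ?_
    rw [hC] at hr
    simp only [Multiset.mem_cons] at hr
    rcases hr with rfl | rfl | hr
    · simp only [List.length_append, List.length_reverse, List.length_cons] at hmassS ⊢
      omega
    · omega
    · have : r.length ≤ (S₀.map List.length).sum :=
        Multiset.single_le_sum (fun _ _ => Nat.zero_le _) _ (Multiset.mem_map_of_mem _ hr)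
      omega
  have h2 : potential N F.val = (N + 1) ^ R.length + potential N S.val + potential N D := by
    rw [hD]; simp [potential, add_assoc]
  have h3 : potential N (C + D) = potential N C + potential N D := by simp [potential]
  have h4 : C.card * (N + 1) ^ (R.length - 1) ≤ N * (N + 1) ^ (R.length - 1) :=
    Nat.mul_le_mul_right _ (by omega)
  have h5 : (N + 1) ^ R.length = (N + 1) ^ (R.length - 1) * (N + 1) := by
    rw [← pow_succ]; congr 1; omega
  have h6 : 0 < (N + 1) ^ (R.length - 1) := by positivity
  nlinarith

/-- A spanning family with the fewest paths and, subject to that, minimal potential. -/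
theorem exists_minimal_family (W : Finset V) :
    ∃ F : Finset (List V), Valid G F.val ∧ verts F.val = W.val ∧
      (∀ S ⊆ F, ∀ C, Valid G C → verts C = verts S.val → S.card ≤ C.card) ∧
      ∀ S ⊆ F, ∀ R ∈ F, R ∉ S → ∀ v ∈ ends S.val, ∀ x ∈ Rot G S.val v, ∀ q ∈ R,
        G.Adj x q → R.length ≤ 4 * mass S := by
  classical
  let P : Multiset (List V) → Prop := fun F => Valid G F ∧ verts F = W.val
  have h0 : ∃ F, P F := by
    refine ⟨W.val.map fun v => [v], ?_⟩
    have hv : verts (W.val.map fun v => [v]) = W.val := by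
      have := Multiset.bind_singleton W.val id
      simpa [verts, Multiset.bind_map] using this
    refine ⟨⟨?_, by rw [hv]; exact W.nodup⟩, hv⟩
    intro l hl
    obtain ⟨v, -, rfl⟩ := Multiset.mem_map.1 hl
    simp
  obtain ⟨E, hE, hEmin⟩ : ∃ E, P E ∧ ∀ E', P E' → E.card ≤ E'.card := by
    obtain ⟨E, hE, h⟩ := WellFounded.has_min (measure (Multiset.card (α := List V))).wf
      {E | P E} h0
    exact ⟨E, hE, fun E' h' => not_lt.1 (h E' h')⟩
  obtain ⟨F, ⟨hF, hFc⟩, hFmin⟩ : ∃ F, (P F ∧ F.card = E.card) ∧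
      ∀ E', (P E' ∧ E'.card = E.card) → potential W.card F ≤ potential W.card E' := by
    obtain ⟨F, hF, h⟩ := WellFounded.has_min (measure (potential (V := V) W.card)).wf
      {F | P F ∧ F.card = E.card} ⟨E, hE, rfl⟩
    exact ⟨F, hF, fun E' h' => not_lt.1 (h E' h')⟩
  lift F to Finset (List V) using hF.1.nodup
  have hcard : F.card ≤ W.card := by
    have h1 := card_verts F.val
    rw [hF.2] at h1
    have h2 : ∀ l ∈ F, 1 ≤ l.length := fun l hl =>
      List.length_pos_iff.2 (hF.1.1 l hl).1
    have h3 : F.card • 1 ≤ ∑ l ∈ F, l.length := Finset.card_nsmul_le_sum _ _ _ h2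
    have h4 : (Multiset.map List.length F.val).sum = ∑ l ∈ F, l.length := rfl
    have h5 : W.val.card = W.card := rfl
    simp only [smul_eq_mul, mul_one] at h3
    omega
  refine ⟨F, hF.1, hF.2, ?_, ?_⟩
  · intro S hS C hC hCS
    obtain ⟨D, hD⟩ := Multiset.le_iff_exists_add.1 (Finset.val_le_iff.2 hS)
    have hval := hF.1
    rw [hD, valid_add] at hval
    have h1 := hEmin (C + D) ⟨by rw [valid_add, hCS]; exact ⟨hC, hval.2⟩, by
      rw [verts_add, hCS, ← verts_add, ← hD, hF.2]⟩
    have h2 := congrArg Multiset.card hD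
    rw [Multiset.card_add] at h1 h2
    have h3 : S.val.card = S.card := rfl
    omega
  · intro S hS R hR hRS v hv x hx q hq hxq
    exact length_le_of_potential_min hF.1 hcard
      (fun C hC hCv hCc => hFmin C ⟨⟨hC, hCv.trans hF.2⟩, hCc.trans hFc⟩) hS hR hRS hv hx hq hxq

/-- The two minimality properties of the families used for the first covering. -/
structure IsMinimal (G : SimpleGraph V) (F : Finset (List V)) : Prop where
  valid : Valid G F.val
  card_le : ∀ S ⊆ F, ∀ C, Valid G C → verts C = verts S.val → S.card ≤ C.card
  length_le : ∀ S ⊆ F, ∀ R ∈ F, R ∉ S → ∀ v ∈ ends S.val, ∀ x ∈ Rot G S.val v, ∀ q ∈ R,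
    G.Adj x q → R.length ≤ 4 * mass S

namespace IsMinimal

variable {F : Finset (List V)}

theorem valid_of_subset (hF : IsMinimal G F) {S : Finset (List V)} (hS : S ⊆ F) :
    Valid G S.val :=
  hF.valid.mono (Finset.val_le_iff.2 hS)

theorem not_mergeable (hF : IsMinimal G F) {S : Finset (List V)} (hS : S ⊆ F) (v q : V) :
    ¬ Mergeable G S.val v q := by
  rintro ⟨-, C, hC, hCv, hCe⟩
  have h1 := hF.card_le S hS C hC hCv
  have h2 := congrArg Multiset.card hCe
  rw [(hF.valid_of_subset hS).card_ends, Multiset.card_cons, Multiset.card_cons,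
    hC.card_ends] at h2
  have h3 : S.val.card = S.card := rfl
  omega

theorem rot_adj (hF : IsMinimal G F) {S : Finset (List V)} (hS : S ⊆ F) {v x q : V}
    (hv : v ∈ ends S.val) (hx : x ∈ Rot G S.val v) (hq : q ∈ verts S.val) (hxq : G.Adj x q) :
    q ∈ Rot G S.val v ∨ ∃ w ∈ Rot G S.val v, famAdj S.val q w := by
  rcases PathFamily.rot_adj (hF.valid_of_subset hS) hv hx hq hxq with h | h | ⟨-, h⟩
  · exact Or.inl h
  · exact Or.inr h
  · exact absurd h (hF.not_mergeable hS v q)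

end IsMinimal

open scoped Classical in
/-- The vertices that can be reached by rotations from the heads of lists of length at most `ℓ`
inside subfamilies of `F` of mass at most `r`. -/
noncomputable def reach (G : SimpleGraph V) (F : Finset (List V)) (ℓ r : ℕ) : Finset V :=
  Finset.univ.filter fun x => ∃ S ⊆ F, mass S ≤ r ∧ ∃ Q ∈ S, Q.length ≤ ℓ ∧
    ∃ v, Q.head? = some v ∧ x ∈ Rot G S.val v

theorem mem_reach {F : Finset (List V)} {ℓ r : ℕ} {x : V} :
    x ∈ reach G F ℓ r ↔ ∃ S ⊆ F, mass S ≤ r ∧ ∃ Q ∈ S, Q.length ≤ ℓ ∧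
      ∃ v, Q.head? = some v ∧ x ∈ Rot G S.val v := by
  simp [reach]

theorem reach_mono (F : Finset (List V)) (ℓ : ℕ) {r s : ℕ} (h : r ≤ s) :
    reach G F ℓ r ⊆ reach G F ℓ s := by
  intro x hx
  rw [mem_reach] at hx ⊢
  obtain ⟨S, hS, hm, h'⟩ := hx
  exact ⟨S, hS, hm.trans h, h'⟩

theorem mem_ends_of_head {S : Multiset (List V)} {Q : List V} {v : V} (hQ : Q ∈ S)
    (hv : Q.head? = some v) : v ∈ ends S :=
  mem_ends.2 ⟨Q, hQ, mem_listEnds.2 (Or.inl hv)⟩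

theorem IsMinimal.nbr_reach_subset {F F' : Finset (List V)} (hF : IsMinimal G F) (hF' : F' ⊆ F)
    (ℓ r : ℕ) : nbr G (reach G F' ℓ r) ∩ (verts F'.val).toFinset ⊆
      near F.val (reach G F' ℓ (8 * r)) := by
  intro q hq
  rw [Finset.mem_inter, Multiset.mem_toFinset, mem_nbr] at hq
  obtain ⟨⟨x, hx, hxq⟩, hq⟩ := hq
  obtain ⟨S, hS, hm, Q, hQS, hQ, v, hv, hxv⟩ := mem_reach.1 hx
  obtain ⟨R, hR, hqR⟩ := mem_verts.1 hq
  have hR : R ∈ F' := hR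
  have hve := mem_ends_of_head (S := S.val) hQS hv
  have hm' : mass (insert R S) ≤ 8 * r := by
    by_cases h : R ∈ S
    · rw [Finset.insert_eq_of_mem h]; omega
    · have h1 := hF.length_le S (hS.trans hF') R (hF' hR) h v hve x hxv q hqR hxq
      have h2 := mass_insert_le R S
      omega
  have hsub : insert R S ⊆ F' := Finset.insert_subset hR hS
  have hsub' := hsub.trans hF'
  have hle : S.val ≤ (insert R S).val := Finset.val_le_iff.2 (Finset.subset_insert _ _)
  have hmem : ∀ w ∈ Rot G (insert R S).val v, w ∈ reach G F' ℓ (8 * r) := fun w hw =>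
    mem_reach.2 ⟨_, hsub, hm', Q, Finset.mem_insert_of_mem hQS, hQ, v, hv, hw⟩
  rw [mem_near]
  rcases hF.rot_adj hsub' (mem_ends_of_head (Finset.mem_insert_of_mem hQS) hv)
    (Rot.mono (hF.valid_of_subset hsub') hle v hxv)
    (mem_verts.2 ⟨R, Finset.mem_insert_self R S, hqR⟩) hxq with h | ⟨w, hw, h⟩
  · exact Or.inl (hmem _ h)
  · exact Or.inr ⟨w, hmem _ hw, famAdj_mono (Finset.val_le_iff.2 hsub') h⟩

theorem mass_le_card_toFinset {F S : Finset (List V)} (hF : Valid G F.val) (hS : S ⊆ F) :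
    (verts S.val).toFinset.card = mass S := by
  rw [mass_eq, Multiset.toFinset_card_of_nodup (hF.mono (Finset.val_le_iff.2 hS)).2]

theorem toFinset_verts_subset {F F' : Finset (List V)} :
    (verts F.val).toFinset ⊆ (verts F'.val).toFinset ∪ (verts (F \ F').val).toFinset := by
  intro a ha
  simp only [Multiset.mem_toFinset, Finset.mem_union, mem_verts] at ha ⊢
  obtain ⟨l, hl, hal⟩ := ha
  by_cases h : l ∈ F'
  · exact Or.inl ⟨l, h, hal⟩
  · exact Or.inr ⟨l, Finset.mem_sdiff.2 ⟨hl, h⟩, hal⟩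

theorem IsMinimal.card_reach_ge {F F' : Finset (List V)} (hF : IsMinimal G F) (hF' : F' ⊆ F)
    {m a ℓ D : ℕ} (hexp : ∀ U : Finset V, U.card ≤ m →
      (3 * a + 1) * U.card ≤ (nbr G U ∩ (verts F.val).toFinset).card)
    (hD : mass (F \ F') ≤ D) (hD1 : 1 ≤ D) (h0 : D ≤ (reach G F' ℓ ℓ).card) (t : ℕ) :
    min m (a ^ t) ≤ (reach G F' ℓ (8 ^ t * ℓ)).card := by
  suffices h : m ≤ (reach G F' ℓ (8 ^ t * ℓ)).card ∨
      (D ≤ (reach G F' ℓ (8 ^ t * ℓ)).card ∧ a ^ t ≤ (reach G F' ℓ (8 ^ t * ℓ)).card) by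
    rcases h with h | h
    · exact (min_le_left _ _).trans h
    · exact (min_le_right _ _).trans h.2
  induction t with
  | zero =>
    right
    simp only [pow_zero, one_mul]
    exact ⟨h0, hD1.trans h0⟩
  | succ t ih =>
    have hr : 8 ^ (t + 1) * ℓ = 8 * (8 ^ t * ℓ) := by ring
    have hmono := Finset.card_le_card (reach_mono (G := G) F' ℓ
      (show 8 ^ t * ℓ ≤ 8 ^ (t + 1) * ℓ by rw [hr]; omega))
    by_cases hm : m ≤ (reach G F' ℓ (8 ^ t * ℓ)).card
    · exact Or.inl (hm.trans hmono)
    obtain ⟨h1, h2⟩ := ih.resolve_left hm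
    right
    set X := reach G F' ℓ (8 ^ t * ℓ)
    set X' := reach G F' ℓ (8 ^ (t + 1) * ℓ)
    have h3 := hexp X (by omega)
    have h4 : nbr G X ∩ (verts F.val).toFinset ⊆ near F.val X' ∪ (verts (F \ F').val).toFinset := by
      intro q hq
      rw [Finset.mem_inter] at hq
      rcases Finset.mem_union.1 (toFinset_verts_subset (F' := F') hq.2) with h | h
      · have := hF.nbr_reach_subset hF' ℓ (8 ^ t * ℓ) (Finset.mem_inter.2 ⟨hq.1, h⟩)
        rw [← hr] at this
        exact Finset.mem_union_left _ this
      · exact Finset.mem_union_right _ h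
    have h5 := (Finset.card_le_card h4).trans (Finset.card_union_le _ _)
    rw [mass_le_card_toFinset hF.valid Finset.sdiff_subset] at h5
    have h6 := card_near_le hF.valid X'
    have h7 : a * X.card ≤ X'.card := by nlinarith
    refine ⟨h1.trans hmono, ?_⟩
    rw [pow_succ, mul_comm]
    exact (Nat.mul_le_mul_left _ h2).trans h7

/-- Distinct short lists of the family have distinct heads. -/
theorem card_short_le_reach {F F' : Finset (List V)} (hF : Valid G F.val) (hF' : F' ⊆ F) (ℓ : ℕ) :
    (F'.filter fun l => l.length ≤ ℓ).card ≤ (reach G F' ℓ ℓ).card := by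
  rw [← Finset.card_map (Function.Embedding.some (α := V))]
  refine Finset.card_le_card_of_injOn List.head? ?_ ?_
  · intro l hl
    obtain ⟨hl, hlen⟩ := Finset.mem_filter.1 hl
    obtain ⟨a, r, rfl⟩ := List.exists_cons_of_ne_nil (hF.1 l (hF' hl)).1
    simp only [List.head?_cons, Finset.coe_map, Set.mem_image, Function.Embedding.some_apply,
      Option.some.injEq, exists_eq_right, Finset.mem_coe]
    exact mem_reach.2 ⟨{a :: r}, by simpa using hl, by simpa [mass] using hlen, _,
      Finset.mem_singleton_self _, hlen, a, rfl, self_mem_rot _ _⟩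
  · intro l hl r hr h
    have hl := (Finset.mem_filter.1 hl).1
    have hr := (Finset.mem_filter.1 hr).1
    obtain ⟨a, l', rfl⟩ := List.exists_cons_of_ne_nil (hF.1 l (hF' hl)).1
    exact hF.eq_of_mem (hF' hl) (hF' hr) (a := a) (by simp) (List.mem_of_mem_head? h.symm)

/-- All but fewer than `m` vertices lie in lists of bounded length. -/
theorem IsMinimal.mass_bulk {F : Finset (List V)} (hF : IsMinimal G F) {m ℓ r : ℕ}
    (hJ : IsJoined G m) (hr : m ≤ (reach G F ℓ r).card) :
    mass F < mass (F.filter fun l => l.length ≤ 4 * r) + m := by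
  have h1 := card_sdiff_nbr_lt hJ hr (verts F.val).toFinset
  have h2 : (verts F.val).toFinset ⊆ (verts (F.filter fun l => l.length ≤ 4 * r).val).toFinset ∪
      ((verts F.val).toFinset \ (reach G F ℓ r ∪ nbr G (reach G F ℓ r))) := by
    intro q hq
    by_cases hq' : q ∈ reach G F ℓ r ∪ nbr G (reach G F ℓ r)
    · refine Finset.mem_union_left _ ?_
      rw [Multiset.mem_toFinset, mem_verts] at hq ⊢
      obtain ⟨R, hR, hqR⟩ := hq
      refine ⟨R, Finset.mem_filter.2 ⟨hR, ?_⟩, hqR⟩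
      rcases Finset.mem_union.1 hq' with h | h
      · obtain ⟨S, hS, hm, Q, hQS, hQ, v, hv, hxv⟩ := mem_reach.1 h
        obtain ⟨R', hR', hqR'⟩ := mem_verts.1 (Rot.mem_verts (mem_ends_of_head hQS hv) hxv)
        have := hF.valid.eq_of_mem hR (hS hR') hqR hqR'
        have h3 := length_le_mass (show R' ∈ S from hR')
        rw [this]
        omega
      · obtain ⟨x, hx, hxq⟩ := mem_nbr.1 h
        obtain ⟨S, hS, hm, Q, hQS, hQ, v, hv, hxv⟩ := mem_reach.1 hx
        by_cases hRS : R ∈ S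
        · have h3 := length_le_mass hRS
          omega
        · have := hF.length_le S hS R hR hRS v (mem_ends_of_head hQS hv) x hxv q hqR hxq
          omega
    · exact Finset.mem_union_right _ (Finset.mem_sdiff.2 ⟨hq, hq'⟩)
  have h3 := (Finset.card_le_card h2).trans (Finset.card_union_le _ _)
  rw [mass_le_card_toFinset hF.valid subset_rfl,
    mass_le_card_toFinset hF.valid (Finset.filter_subset _ _)] at h3
  omega

/-- Adding lists of `B₀` one at a time to grow the reachable set outside the bad set. -/
theorem IsMinimal.exists_grow {F P B₀ : Finset (List V)} (hF : IsMinimal G F) (hP : P ⊆ F)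
    (hB₀ : B₀ ⊆ F) {m M : ℕ} {B : Finset V} {u : V}
    (hB : ∀ Z : Finset V, Disjoint Z B → Z.card ≤ m →
      5 * Z.card ≤ ((nbr G Z ∩ (verts B₀.val).toFinset) \ near B₀.val B).card)
    (hM : ∀ l ∈ B₀, l.length ≤ M) (hu : u ∈ ends P.val)
    (h1 : 1 ≤ (rotSet G P.val u \ B).card) (k : ℕ) :
    ∃ P', P ⊆ P' ∧ P' ⊆ P ∪ B₀ ∧ mass P' ≤ mass P + k * M ∧
      min m (k + 1) ≤ (rotSet G P'.val u \ B).card := by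
  induction k with
  | zero => exact ⟨P, subset_rfl, Finset.subset_union_left, by simp,
      (min_le_right _ _).trans (by simpa using h1)⟩
  | succ k ih =>
    obtain ⟨P', hPP', hP', hmass, hcard⟩ := ih
    by_cases hbig : min m (k + 1 + 1) ≤ (rotSet G P'.val u \ B).card
    · exact ⟨P', hPP', hP', by rw [add_mul]; omega, hbig⟩
    set X := rotSet G P'.val u \ B with hX
    have hP'F : P' ⊆ F := hP'.trans (Finset.union_subset hP hB₀)
    have hu' : u ∈ ends P'.val := by
      obtain ⟨l, hl, h⟩ := mem_ends.1 hu
      exact mem_ends.2 ⟨l, hPP' hl, h⟩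
    have hadjB : ∀ {S : Finset (List V)} {q w : V}, S ⊆ F → q ∈ verts B₀.val →
        famAdj S.val q w → famAdj B₀.val q w := fun hS hq h =>
      famAdj_of_le hF.valid (Finset.val_le_iff.2 hB₀) hq
        (famAdj_mono (Finset.val_le_iff.2 hS) h)
    have hX0 : 1 ≤ X.card := h1.trans (Finset.card_le_card
      (Finset.sdiff_subset_sdiff (fun a ha => mem_rotSet.2 (Rot.mono
        (hF.valid_of_subset hP'F) (Finset.val_le_iff.2 hPP') u (mem_rotSet.1 ha))) subset_rfl))
    have h5 := hB X Finset.sdiff_disjoint (by omega)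
    have hnear := card_near_le hF.valid X
    obtain ⟨q, hq, hqX⟩ : ∃ q ∈ (nbr G X ∩ (verts B₀.val).toFinset) \ near B₀.val B,
        q ∉ near F.val X := by
      by_contra! hcon
      have := Finset.card_le_card (show _ ⊆ near F.val X from hcon)
      omega
    simp only [Finset.mem_sdiff, Finset.mem_inter, mem_near, not_or,
      Multiset.mem_toFinset, mem_nbr] at hq hqX
    obtain ⟨⟨⟨x, hx, hxq⟩, hqB₀⟩, hqB, hqB'⟩ := hq
    have hxR : x ∈ Rot G P'.val u := mem_rotSet.1 (Finset.mem_sdiff.1 hx).1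
    obtain ⟨R, hR, hqR⟩ := mem_verts.1 hqB₀
    have hsub : insert R P' ⊆ F := Finset.insert_subset (hB₀ hR) hP'F
    have hle : P'.val ≤ (insert R P').val := Finset.val_le_iff.2 (Finset.subset_insert _ _)
    have hmono := Rot.mono (hF.valid_of_subset hsub) hle u
    refine ⟨insert R P', hPP'.trans (Finset.subset_insert _ _),
      Finset.insert_subset (Finset.mem_union_right _ hR) hP', ?_, ?_⟩
    · have h6 := mass_insert_le R P'
      have h7 := hM R hR
      rw [add_mul]
      omega
    · have hnew : ∃ w, w ∉ X ∧ w ∈ rotSet G (insert R P').val u \ B := by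
        have hu'' : u ∈ ends (insert R P').val := by
          obtain ⟨l, hl, h⟩ := mem_ends.1 hu'
          exact mem_ends.2 ⟨l, Finset.mem_insert_of_mem hl, h⟩
        rcases hF.rot_adj hsub hu'' (hmono hxR)
          (mem_verts.2 ⟨R, Finset.mem_insert_self R P', hqR⟩) hxq with h | ⟨w, hw, h⟩
        · exact ⟨q, hqX.1, Finset.mem_sdiff.2 ⟨mem_rotSet.2 h, hqB⟩⟩
        · refine ⟨w, fun hwX => hqX.2 ⟨w, hwX, famAdj_mono (Finset.val_le_iff.2 hsub) h⟩,
            Finset.mem_sdiff.2 ⟨mem_rotSet.2 hw, fun hwB => hqB' ⟨w, hwB, hadjB hsub hqB₀ h⟩⟩⟩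
      obtain ⟨w, hwX, hw⟩ := hnew
      have h8 : insert w X ⊆ rotSet G (insert R P').val u \ B := by
        refine Finset.insert_subset hw ?_
        exact Finset.sdiff_subset_sdiff (fun a ha => mem_rotSet.2 (hmono (mem_rotSet.1 ha)))
          subset_rfl
      have h9 := Finset.card_le_card h8
      rw [Finset.card_insert_of_notMem hwX] at h9
      omega

theorem card_le_mass {F S : Finset (List V)} (hF : Valid G F.val) (hS : S ⊆ F) :
    S.card ≤ mass S := by
  have h : S.card • 1 ≤ ∑ l ∈ S, l.length :=
    Finset.card_nsmul_le_sum _ _ _ fun l hl => List.length_pos_iff.2 (hF.1 l (hS hl)).1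
  simpa [mass] using h

/-- Two disjoint subfamilies of a minimal family cannot both have large reachable sets. -/
theorem IsMinimal.card_rotSet_lt {F S T : Finset (List V)} (hF : IsMinimal G F) {m : ℕ}
    (hJ : IsJoined G m) (hS : S ⊆ F) (hT : T ⊆ F) (hST : Disjoint S T) {u v : V}
    (hv : v ∈ ends S.val) (hu : u ∈ ends T.val) (h1 : m ≤ (rotSet G S.val v).card) :
    (rotSet G T.val u).card < m := by
  by_contra! h2
  have hle : (S.disjUnion T hST) ⊆ F := by
    rw [Finset.disjUnion_eq_union]
    exact Finset.union_subset hS hT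
  have hval : Valid G (S.val + T.val) := hF.valid_of_subset hle
  obtain ⟨x, hx, y, hy, hxy⟩ := exists_adj_of_joined hJ (by
    rw [Finset.disjoint_left]
    intro a ha hb
    exact (valid_add.1 hval).2.2 a (Rot.mem_verts hv (mem_rotSet.1 ha))
      (Rot.mem_verts hu (mem_rotSet.1 hb))) h1 h2
  obtain ⟨C, hC, hCv, hCe⟩ := exists_join_of_rot hval hv hu (mem_rotSet.1 hx) (mem_rotSet.1 hy) hxy
  have h3 := hF.card_le _ hle C hC (by rw [hCv, ← verts_add]; rfl)
  have h4 := congrArg Multiset.card hCe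
  rw [← ends_add, hval.card_ends, Multiset.card_cons, Multiset.card_cons, hC.card_ends,
    Multiset.card_add] at h4
  have h5 : S.val.card = S.card := rfl
  have h6 : T.val.card = T.card := rfl
  rw [Finset.card_disjUnion] at h3
  omega

/-- A minimal family has few short members. -/
theorem IsMinimal.card_short_le {F : Finset (List V)} (hF : IsMinimal G F) {m a t ℓ M₀ : ℕ}
    (hJ : IsJoined G m)
    (hexp : ∀ U : Finset V, U.card ≤ m →
      (3 * a + 1) * U.card ≤ (nbr G U ∩ (verts F.val).toFinset).card)
    (hat : m ≤ a ^ t) (hM₀ : M₀ = 8 ^ t * ℓ) (hℓ : 0 < ℓ)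
    (hmass : 37 * m + 5 * M₀ + 2 ≤ mass F) :
    (F.filter fun l => l.length ≤ ℓ).card ≤ 2 * (M₀ + M₀ * (4 * M₀)) := by
  by_contra! hshort
  have hM₀pos : 0 < M₀ := by rw [hM₀]; positivity
  have hreachF : m ≤ (reach G F ℓ M₀).card := by
    have h := hF.card_reach_ge subset_rfl hexp (D := 1) (ℓ := ℓ) (by simp [mass]) le_rfl
      (le_trans (by omega) (card_short_le_reach hF.valid subset_rfl ℓ)) t
    rwa [min_eq_left hat, ← hM₀] at h
  have hbulk := hF.mass_bulk hJ hreachF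
  set S := F.filter fun l => l.length ≤ 4 * M₀ with hSdef
  have hSF : S ⊆ F := Finset.filter_subset _ _
  have hSM : ∀ l ∈ S, l.length ≤ 4 * M₀ := fun l hl => (Finset.mem_filter.1 hl).2
  obtain ⟨B₀, hB₀S, hB₀1, hB₀2⟩ := exists_subset_mass (a := 18 * m + 1) hSM (by omega)
  have hB₀F := hB₀S.trans hSF
  obtain ⟨B, hBm, hB⟩ := exists_bad_set (K := 5) hJ (hF.valid_of_subset hB₀F)
    (by rw [← mass_eq]; omega)
  obtain ⟨x, hx, hxB⟩ := Finset.exists_mem_notMem_of_card_lt_card (hBm.trans_le hreachF)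
  obtain ⟨P, hPF, hPm, Q, hQP, -, u, hu, hxu⟩ := mem_reach.1 hx
  have hue := mem_ends_of_head (S := P.val) hQP hu
  obtain ⟨P', hPP', hP', hP'm, hP'c⟩ := hF.exists_grow hPF hB₀F hB (fun l hl => hSM l (hB₀S hl))
    hue (Finset.card_pos.2 ⟨x, Finset.mem_sdiff.2 ⟨mem_rotSet.2 hxu, hxB⟩⟩) M₀
  have hP'F : P' ⊆ F := hP'.trans (Finset.union_subset hPF hB₀F)
  set A₀ := (S \ B₀) \ P with hA₀
  have hA₀F : A₀ ⊆ F := Finset.sdiff_subset.trans (Finset.sdiff_subset.trans hSF)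
  have hA₀m : 18 * m < mass A₀ := by
    have h1 := mass_sdiff_add S B₀
    have h2 : mass (S \ B₀) ≤ mass A₀ + mass P := mass_sdiff_add (S \ B₀) P
    omega
  obtain ⟨A, hAm, hA⟩ := exists_bad_set (K := 5) hJ (hF.valid_of_subset hA₀F)
    (by rw [← mass_eq]; omega)
  have hreach' : m ≤ (reach G (F \ P') ℓ M₀).card := by
    have h1 : F \ (F \ P') = P' := by
      rw [Finset.sdiff_sdiff_eq_self hP'F]
    have h2 : (F.filter fun l => l.length ≤ ℓ).card ≤
        ((F \ P').filter fun l => l.length ≤ ℓ).card + P'.card := by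
      refine (Finset.card_le_card (t := ((F \ P').filter fun l => l.length ≤ ℓ) ∪ P') ?_).trans
        (Finset.card_union_le _ _)
      intro l hl
      simp only [Finset.mem_union, Finset.mem_filter, Finset.mem_sdiff] at hl ⊢
      tauto
    have h3 := card_le_mass hF.valid hP'F
    have h4 := card_short_le_reach hF.valid (Finset.sdiff_subset (s := F) (t := P')) ℓ
    have h := hF.card_reach_ge Finset.sdiff_subset hexp (D := M₀ + M₀ * (4 * M₀)) (ℓ := ℓ)
      (F' := F \ P') (by rw [h1]; omega) (by omega) (by omega) t
    rwa [min_eq_left hat, ← hM₀] at h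
  obtain ⟨y, hy, hyA⟩ := Finset.exists_mem_notMem_of_card_lt_card (hAm.trans_le hreach')
  obtain ⟨R, hRF', hRm, Q', hQ'R, -, v, hv, hyv⟩ := mem_reach.1 hy
  have hRF := hRF'.trans (Finset.sdiff_subset (s := F) (t := P'))
  have hve := mem_ends_of_head (S := R.val) hQ'R hv
  have hmemR : ∀ l ∈ R, l ∉ P' := fun l hl => (Finset.mem_sdiff.1 (hRF' hl)).2
  have hends : ∀ {S T : Finset (List V)} {w : V}, S ⊆ T → w ∈ ends S.val → w ∈ ends T.val := by
    intro S T w hST hw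
    obtain ⟨l, hl, h⟩ := mem_ends.1 hw
    exact mem_ends.2 ⟨l, hST hl, h⟩
  have hrot : ∀ {S T : Finset (List V)} (w : V) (E : Finset V), T ⊆ F → S ⊆ T →
      rotSet G S.val w \ E ⊆ rotSet G T.val w \ E := by
    intro S T w E hT hST
    refine Finset.sdiff_subset_sdiff (fun z hz => mem_rotSet.2 ?_) subset_rfl
    exact Rot.mono (hF.valid_of_subset hT) (Finset.val_le_iff.2 hST) w (mem_rotSet.1 hz)
  have hF₁ : R ∪ A₀ ⊆ F := Finset.union_subset hRF hA₀F
  have hF₂ : P' ∪ (B₀ \ R) ⊆ F := Finset.union_subset hP'F (Finset.sdiff_subset.trans hB₀F)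
  have hv₁ := hends (Finset.subset_union_left (s₁ := R) (s₂ := A₀)) hve
  have hu₂ := hends (hPP'.trans (Finset.subset_union_left (s₁ := P') (s₂ := B₀ \ R))) hue
  have hwin₁ : m ≤ (rotSet G (R ∪ A₀).val v \ A).card := by
    refine card_rotSet_sdiff_ge hA (hF.valid_of_subset hF₁)
      (Finset.val_le_iff.2 Finset.subset_union_right) le_rfl hv₁ (by omega) ?_
      (fun q _ => hF.not_mergeable hF₁ v q) (hF.valid_of_subset hA₀F).2
    exact Finset.card_pos.2 ⟨y, hrot v A hF₁ Finset.subset_union_left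
      (Finset.mem_sdiff.2 ⟨mem_rotSet.2 hyv, hyA⟩)⟩
  have hwin₂ : m ≤ (rotSet G (P' ∪ (B₀ \ R)).val u \ B).card := by
    have h1 := hP'c.trans (Finset.card_le_card (hrot u B hF₂ Finset.subset_union_left))
    by_contra! hlt
    refine hlt.not_ge ?_
    refine card_rotSet_sdiff_ge (W' := (B₀ \ R).val) hB (hF.valid_of_subset hF₂)
      (Finset.val_le_iff.2 Finset.subset_union_right) (Finset.val_le_iff.2 Finset.sdiff_subset)
      hu₂ ?_ (by omega)
      (fun q _ => hF.not_mergeable hF₂ u q) (hF.valid_of_subset hB₀F).2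
    rw [← mass_eq, ← mass_eq]
    have h2 := mass_sdiff_add B₀ R
    omega
  have hdisj : Disjoint (R ∪ A₀) (P' ∪ (B₀ \ R)) := by
    rw [Finset.disjoint_left]
    intro l hl hl'
    simp only [hA₀, Finset.mem_union, Finset.mem_sdiff] at hl hl'
    have h1 := hmemR l
    have h2 : l ∈ P' → l ∈ P ∨ l ∈ B₀ := fun h => Finset.mem_union.1 (hP' h)
    tauto
  have h1 := hF.card_rotSet_lt hJ hF₁ hF₂ hdisj hv₁ hu₂
    (hwin₁.trans (Finset.card_le_card Finset.sdiff_subset))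
  have h2 := hwin₂.trans (Finset.card_le_card Finset.sdiff_subset)
  omega

/-- A vertex set into which all small sets expand is covered by few disjoint paths. -/
theorem exists_covering_family {W : Finset V} {m a t ℓ M₀ : ℕ} (hJ : IsJoined G m)
    (hexp : ∀ U : Finset V, U.card ≤ m → (3 * a + 1) * U.card ≤ (nbr G U ∩ W).card)
    (hat : m ≤ a ^ t) (hM₀ : M₀ = 8 ^ t * ℓ) (hℓ : 0 < ℓ)
    (hmass : 37 * m + 5 * M₀ + 2 ≤ W.card) :
    ∃ F : Multiset (List V), Valid G F ∧ verts F = W.val ∧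
      ℓ * F.card ≤ ℓ * (2 * (M₀ + M₀ * (4 * M₀))) + W.card := by
  obtain ⟨F, hval, hFW, hcard, hlen⟩ := exists_minimal_family (G := G) W
  have hF : IsMinimal G F := ⟨hval, hcard, hlen⟩
  have hW : (verts F.val).toFinset = W := by rw [hFW]; simp
  have hmF : mass F = W.card := by rw [mass_eq, hFW]; rfl
  have h1 := hF.card_short_le hJ (by rw [hW]; exact hexp) hat hM₀ hℓ (by omega)
  refine ⟨F.val, hval, hFW, ?_⟩
  have h2 : F.card = (F.filter fun l => l.length ≤ ℓ).card +
      (F.filter fun l => ¬ l.length ≤ ℓ).card :=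
    (Finset.card_filter_add_card_filter_not _).symm
  have h3 : (F.filter fun l => ¬ l.length ≤ ℓ).card • ℓ ≤ mass (F.filter fun l => ¬ l.length ≤ ℓ) :=
    Finset.card_nsmul_le_sum _ _ _ fun l hl => (not_le.1 (Finset.mem_filter.1 hl).2).le
  have h4 := mass_mono (Finset.filter_subset (fun l => ¬ l.length ≤ ℓ) F)
  have h5 : F.val.card = F.card := rfl
  rw [h5, h2, Nat.mul_add]
  rw [smul_eq_mul, mul_comm] at h3
  exact Nat.add_le_add (Nat.mul_le_mul_left _ h1) (by omega)

/-- If small sets expand into the vertices of `N`, then an end of `N` reaches at least `m`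
vertices by rotations, unless it can absorb a one-vertex member. -/
theorem card_rotSet_ge_or {N : Multiset (List V)} {Y : Finset V} {m : ℕ} (hN : Valid G N)
    (hexp : ∀ U : Finset V, U.card ≤ m → 4 * U.card ≤ (nbr G U ∩ Y).card)
    (hY : ∀ v ∈ Y, v ∈ verts N) {e : V} (he : e ∈ ends N) :
    m ≤ (rotSet G N e).card ∨ ∃ q, [q] ∈ N ∧ Mergeable G N e q := by
  by_contra! h
  have h1 := hexp _ h.1.le
  have h2 : nbr G (rotSet G N e) ∩ Y ⊆ near N (rotSet G N e) := by
    intro q hq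
    rw [Finset.mem_inter, mem_nbr] at hq
    obtain ⟨⟨x, hx, hxq⟩, hqY⟩ := hq
    rw [mem_near]
    rcases rot_adj hN he (mem_rotSet.1 hx) (hY q hqY) hxq with h3 | ⟨w, hw, h3⟩ | ⟨hs, hne, hC⟩
    · exact Or.inl (mem_rotSet.2 h3)
    · exact Or.inr ⟨w, mem_rotSet.2 hw, h3⟩
    · exact absurd ⟨hne, hC⟩ (h.2 q hs)
  have h3 := (Finset.card_le_card h2).trans (card_near_le hN _)
  have h4 : 0 < (rotSet G N e).card :=
    Finset.card_pos.2 ⟨e, mem_rotSet.2 (self_mem_rot _ _)⟩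
  omega

/-- An end `e` of `N` and an end `c` of a further path `Q` can be connected using few members
of the two families `W₁`, `W₂`. -/
theorem exists_connect_through {N W₁ W₂ : Multiset (List V)} {Q : List V} {m t : ℕ}
    (hJ : IsJoined G m) (ht : m ≤ 2 ^ t) (hval : Valid G (N + (Q ::ₘ (W₁ + W₂)))) {e c : V}
    (he : e ∈ ends N) (hc : c ∈ listEnds Q) {B₁ B₂ : Finset V} (hB₁m : B₁.card < m)
    (hrot : m ≤ (rotSet G N e).card)
    (hB₁ : ∀ Z : Finset V, Disjoint Z B₁ → Z.card ≤ m →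
      6 * Z.card ≤ ((nbr G Z ∩ (verts W₁).toFinset) \ near W₁ B₁).card)
    (hB₂ : ∀ Z : Finset V, Disjoint Z B₂ → Z.card ≤ m →
      6 * Z.card ≤ ((nbr G Z ∩ (verts W₂).toFinset) \ near W₂ B₂).card)
    (hlen₁ : ∀ l ∈ W₁, 2 ≤ l.length) (hlen₂ : ∀ l ∈ W₂, 2 ≤ l.length) (hcB : c ∉ B₂) :
    ∃ R₁ ≤ W₁, ∃ R₂ ≤ W₂, R₁.card ≤ t ∧ R₂.card ≤ t ∧ ∃ C, Valid G C ∧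
      verts C = verts N + verts (Q ::ₘ (R₁ + R₂)) ∧
      e ::ₘ c ::ₘ ends C = ends N + ends (Q ::ₘ (R₁ + R₂)) := by
  obtain ⟨s, hs, hsB⟩ := Finset.exists_mem_notMem_of_card_lt_card (hB₁m.trans_le hrot)
  obtain ⟨N', hN'⟩ := mem_rotSet.1 hs
  obtain ⟨hvN, hvW, hdisj⟩ := valid_add.1 hval
  have hvN' := hN'.valid hvN
  obtain ⟨S, hSN', hsS⟩ := mem_ends.1 (hN'.mem_ends he)
  obtain ⟨N₀, rfl⟩ := Multiset.exists_cons_of_mem hSN'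
  have hval' : Valid G ((S ::ₘ N₀) + (Q ::ₘ (W₁ + W₂))) :=
    valid_add.2 ⟨hvN', hvW, by rwa [hN'.verts_eq]⟩
  have hAB : Valid G ((S ::ₘ W₁) + (Q ::ₘ W₂)) := by
    refine hval'.mono ?_
    have h : (S ::ₘ N₀) + (Q ::ₘ (W₁ + W₂)) = (S ::ₘ W₁) + (Q ::ₘ W₂) + N₀ := by
      simp only [← Multiset.singleton_add]
      abel
    rw [h]
    exact Multiset.le_add_right _ _
  obtain ⟨hA, hB, hABd⟩ := valid_add.1 hAB
  obtain ⟨X, hX, -, hXR⟩ := exists_card_rot_few hB₁ hA hlen₁ (hsS) hsB t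
  obtain ⟨Z, hZ, -, hZR⟩ := exists_card_rot_few hB₂ hB hlen₂ hc hcB t
  rw [min_eq_left ht] at hX hZ
  have hXv : ∀ x ∈ X, x ∈ verts (S ::ₘ W₁) := by
    intro x hx
    obtain ⟨R, hR, -, hxR⟩ := hXR x hx
    exact Multiset.mem_of_le (verts_mono ((Multiset.cons_le_cons_iff _).2 hR))
      (Rot.mem_verts (by simp [hsS]) hxR)
  have hZv : ∀ x ∈ Z, x ∈ verts (Q ::ₘ W₂) := by
    intro x hx
    obtain ⟨R, hR, -, hxR⟩ := hZR x hx
    exact Multiset.mem_of_le (verts_mono ((Multiset.cons_le_cons_iff _).2 hR))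
      (Rot.mem_verts (by simp [hc]) hxR)
  obtain ⟨x, hx, z, hz, hxz⟩ := exists_adj_of_joined hJ (A := X) (B := Z) (by
    rw [Finset.disjoint_left]
    intro a ha hb
    exact hABd a (hXv a ha) (hZv a hb)) hX hZ
  obtain ⟨R₁, hR₁, hR₁c, hxR⟩ := hXR x hx
  obtain ⟨R₂, hR₂, hR₂c, hzR⟩ := hZR z hz
  obtain ⟨C, hC, hCv, hCe⟩ := exists_join_of_rot (hAB.mono (add_le_add
    ((Multiset.cons_le_cons_iff _).2 hR₁) ((Multiset.cons_le_cons_iff _).2 hR₂)))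
    (v := s) (u := c) (by simp [hsS]) (by simp [hc]) hxR hzR hxz
  have hve : verts N = (S : Multiset V) + verts N₀ := by
    rw [← hN'.verts_eq, verts_cons]
  refine ⟨R₁, hR₁, R₂, hR₂, hR₁c, hR₂c, C + N₀, ?_, ?_, ?_⟩
  · have h : (S ::ₘ R₁) + (Q ::ₘ R₂) + N₀ ≤ (S ::ₘ N₀) + (Q ::ₘ (W₁ + W₂)) := by
      have h : (S ::ₘ N₀) + (Q ::ₘ (W₁ + W₂)) = (S ::ₘ W₁) + (Q ::ₘ W₂) + N₀ := by
        simp only [← Multiset.singleton_add]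
        abel
      rw [h]
      exact add_le_add (add_le_add ((Multiset.cons_le_cons_iff _).2 hR₁)
        ((Multiset.cons_le_cons_iff _).2 hR₂)) le_rfl
    obtain ⟨-, h1, h2⟩ := valid_add.1 (hval'.mono h)
    rw [valid_add]
    refine ⟨hC, h1, fun a ha => h2 a ?_⟩
    rwa [verts_add, ← hCv]
  · rw [verts_add, hCv, hve]
    simp only [verts_cons, verts_add]
    abel
  · have h1 := hN'.ends_eq
    rw [ends_cons] at h1
    rw [ends_add]
    simp only [ends_cons, ends_add] at h1 hCe ⊢
    simp only [← Multiset.singleton_add] at h1 hCe ⊢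
    refine add_left_cancel (a := {s}) ?_
    calc {s} + ({e} + ({c} + (ends C + ends N₀)))
        = {e} + ends N₀ + ({s} + ({c} + ends C)) := by abel
      _ = ({e} + (listEnds S + ends N₀)) + ends R₁ + listEnds Q + ends R₂ := by rw [hCe]; abel
      _ = _ := by rw [h1]; abel

theorem exists_add_of_le_card {α : Type*} {W : Multiset α} {k : ℕ} (h : k ≤ W.card) :
    ∃ A B, W = A + B ∧ A.card = k := by
  obtain ⟨l, rfl⟩ : ∃ l : List α, (l : Multiset α) = W := Quotient.exists_rep W
  refine ⟨l.take k, l.drop k, by simp, ?_⟩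
  have : k ≤ l.length := h
  simpa using this

theorem Valid.of_verts_eq {A C E : Multiset (List V)} (h : Valid G (A + E)) (hC : Valid G C)
    (hv : verts C = verts A) : Valid G (C + E) := by
  rw [valid_add] at h ⊢
  rw [hv]
  exact ⟨hC, h.2⟩

theorem valid_cut {P Q : List V} {F : Multiset (List V)} (h : Valid G ((P ++ Q) ::ₘ F))
    (hP : P ≠ []) (hQ : Q ≠ []) : Valid G (P ::ₘ Q ::ₘ F) := by
  rw [valid_cons] at h
  obtain ⟨⟨-, hc, hn⟩, hF, hd⟩ := h
  rw [List.isChain_append] at hc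
  rw [List.nodup_append] at hn
  rw [valid_cons, valid_cons]
  refine ⟨⟨hP, hc.1, hn.1⟩, ⟨⟨hQ, hc.2.1, hn.2.1⟩, hF, fun a ha => hd a (by simp [ha])⟩, ?_⟩
  intro a ha
  simp only [verts_cons, Multiset.mem_add, Multiset.mem_coe, not_or]
  exact ⟨fun h => hn.2.2 a ha a h rfl, hd a (by simp [ha])⟩

theorem length_le_of_no_cut_aux {α : Type*} (p q : α → Bool) (l : List α)
    (h : ∀ A c d B, l = A ++ c :: d :: B → p c = true ∨ q d = true) :
    l.length ≤ 1 + l.dropLast.countP p + l.tail.countP q := by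
  induction l with
  | nil => simp
  | cons c l ih =>
    have h1 := ih fun A c' d B hl => h (c :: A) c' d B (by simp [hl])
    cases l with
    | nil => simp
    | cons d l =>
      have h2 := h [] c d l rfl
      simp only [List.length_cons, List.dropLast_cons_cons, List.tail_cons,
        List.countP_cons] at h1 ⊢
      rcases h2 with h2 | h2 <;> simp only [h2, if_true] <;> omega

/-- A list without a cut avoiding `p` before and `q` after is short. -/
theorem length_le_of_no_cut {α : Type*} (p q : α → Bool) (l : List α)
    (h : ∀ A c d B, l = A ++ c :: d :: B → p c = true ∨ q d = true) :
    l.length ≤ 1 + l.countP p + l.countP q := by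
  have h1 := length_le_of_no_cut_aux p q l h
  have h2 := (List.dropLast_sublist l).countP_le (p := p)
  have h3 := (List.tail_sublist l).countP_le (p := q)
  omega

theorem countP_verts_le {F : Multiset (List V)} (hF : Valid G F) (B : Finset V) :
    (verts F).countP (· ∈ B) ≤ B.card := by
  rw [Multiset.countP_eq_card_filter]
  have h : ((verts F).filter (· ∈ B)).Nodup := hF.2.filter _
  rw [← Multiset.toFinset_card_of_nodup h]
  exact Finset.card_le_card fun a ha => by simpa using (Multiset.mem_filter.1
    (Multiset.mem_toFinset.1 ha)).2

theorem exists_cut {W : Multiset (List V)} {m : ℕ} (hW : Valid G W)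
    (hlen : ∀ l ∈ W, 2 ≤ l.length) (hm : 4 * m < (verts W).card) {B B' : Finset V}
    (hB : B.card < m) (hB' : B'.card < m) :
    ∃ R ∈ W, ∃ P c d Q, R = P ++ c :: d :: Q ∧ c ∉ B ∧ d ∉ B' := by
  by_contra! h
  have h1 : ∀ l ∈ W, l.length ≤ 1 + l.countP (· ∈ B) + l.countP (· ∈ B') := by
    intro l hl
    refine length_le_of_no_cut _ _ l fun P c d Q hR => ?_
    by_cases hc : c ∈ B
    · simp [hc]
    · simp [h l hl P c d Q hR hc]
  have h2 : (verts W).card ≤ 2 * ((verts W).countP (· ∈ B) + (verts W).countP (· ∈ B')) := by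
    clear h hm hW
    induction W using Multiset.induction_on with
    | empty => simp
    | cons l W ih =>
      have h3 := ih (fun a ha => hlen a (by simp [ha])) (fun a ha => h1 a (by simp [ha]))
      have h4 := h1 l (by simp)
      have h5 := hlen l (by simp)
      simp only [verts_cons, Multiset.card_add, Multiset.countP_add, Multiset.coe_card,
        Multiset.coe_countP]
      omega
  have h3 := countP_verts_le hW B
  have h4 := countP_verts_le hW B'
  omega

theorem le_ends_of_merge {N C : Multiset (List V)} {T E : Multiset V} {e q : V}
    (hN : ends N = T + (e ::ₘ E)) (hC : e ::ₘ q ::ₘ ends C = ends N) (hq : [q] ∈ N) (hqe : q ≠ e)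
    (hT : T.Nodup) : T ≤ ends C := by
  rw [Multiset.le_iff_count]
  intro a
  have h1 := congrArg (Multiset.count a) hN
  have h2 := congrArg (Multiset.count a) hC
  simp only [Multiset.count_add, Multiset.count_cons] at h1 h2
  by_cases haq : a = q
  · subst haq
    obtain ⟨N, rfl⟩ := Multiset.exists_cons_of_mem hq
    have h3 := Multiset.nodup_iff_count_le_one.1 hT a
    simp [listEnds, hqe] at h2
    omega
  · simp only [haq, if_false] at h2
    omega

theorem listEnds_concat (P : List V) (c : V) :
    listEnds (P ++ [c]) = {c} + ((P ++ [c]).head?.toList : Multiset V) := by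
  simp [listEnds, add_comm]

theorem listEnds_cons_eq (c : V) (P : List V) :
    listEnds (c :: P) = {c} + ((c :: P).getLast?.toList : Multiset V) := by
  simp [listEnds]

theorem exists_insertion_step {N W : Multiset (List V)} {Y : Finset V} {m t k r : ℕ}
    {T : Multiset V} (hJ : IsJoined G m) (ht : m ≤ 2 ^ t) (hval : Valid G (N + W))
    (hexp : ∀ U : Finset V, U.card ≤ m → 4 * U.card ≤ (nbr G U ∩ Y).card)
    (hY : ∀ v ∈ Y, v ∈ verts N) (hlen : ∀ l ∈ W, l.length = r) (hr : 2 ≤ r)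
    (hk : 20 * m < k * r) (hkW : 5 * k ≤ W.card) (hT : (T + ends W).Nodup) (hTN : T ≤ ends N)
    (hTc : T.card + 2 ≤ (ends N).card) :
    ∃ N' D W', W = W' + D ∧ D.card ≤ 4 * t + 1 ∧ Valid G (N' + W') ∧
      verts N' = verts N + verts D ∧ T + ends D ≤ ends N' ∧ N'.card + 1 = N.card + D.card := by
  have hmass : ∀ E : Multiset (List V), (∀ l ∈ E, l.length = r) → (verts E).card = E.card * r := by
    intro E hE
    rw [card_verts, Multiset.map_congr rfl hE]
    simp
  obtain ⟨W₁, X, hX, hc₁⟩ := exists_add_of_le_card (W := W) (k := k) (by omega)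
  have hXc := congrArg Multiset.card hX
  rw [Multiset.card_add] at hXc
  obtain ⟨W₂, X', hX', hc₂⟩ := exists_add_of_le_card (W := X) (k := k) (by omega)
  have hXc' := congrArg Multiset.card hX'
  rw [Multiset.card_add] at hXc'
  obtain ⟨W₃, X₃, hX₃, hc₃⟩ := exists_add_of_le_card (W := X') (k := k) (by omega)
  have hXc₃ := congrArg Multiset.card hX₃
  rw [Multiset.card_add] at hXc₃
  obtain ⟨W₄, W₅, hX₄, hc₄⟩ := exists_add_of_le_card (W := X₃) (k := k) (by omega)
  have hXc₄ := congrArg Multiset.card hX₄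
  rw [Multiset.card_add] at hXc₄
  subst hX₄ hX₃ hX' hX
  have hvN := (valid_add.1 hval).1
  have hvW := (valid_add.1 hval).2.1
  obtain ⟨E, hE⟩ := Multiset.le_iff_exists_add.1 hTN
  have hEc := congrArg Multiset.card hE
  rw [Multiset.card_add] at hEc
  obtain ⟨e, E', rfl⟩ : ∃ e E', E = e ::ₘ E' := by
    obtain ⟨e, he⟩ := Multiset.card_pos_iff_exists_mem.1 (show 0 < E.card by omega)
    exact ⟨e, Multiset.exists_cons_of_mem he⟩
  obtain ⟨e', E, rfl⟩ : ∃ e E, E' = e ::ₘ E := by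
    rw [Multiset.card_cons] at hEc
    obtain ⟨e, he⟩ := Multiset.card_pos_iff_exists_mem.1 (show 0 < E'.card by omega)
    exact ⟨e, Multiset.exists_cons_of_mem he⟩
  have heN : e ∈ ends N := by rw [hE]; simp
  have hTn : T.Nodup := (Multiset.nodup_add.1 hT).1
  rcases card_rotSet_ge_or hvN hexp hY heN with hrot | ⟨q, hqN, hqe, C, hC, hCv, hCe⟩
  swap
  · refine ⟨C, 0, _, (add_zero _).symm, by simp, hval.of_verts_eq hC hCv, by simp [hCv], ?_, ?_⟩
    · simpa using le_ends_of_merge hE hCe hqN hqe hTn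
    · have h1 := congrArg Multiset.card hCe
      rw [Multiset.card_cons, Multiset.card_cons, hC.card_ends, hvN.card_ends] at h1
      simp only [Multiset.card_zero]
      omega
  have hbad : ∀ A : Multiset (List V), A ≤ W₁ + (W₂ + (W₃ + (W₄ + W₅))) → A.card = k →
      ∃ B, B.card < m ∧ ∀ Z, Disjoint Z B → Z.card ≤ m →
        6 * Z.card ≤ ((nbr G Z ∩ (verts A).toFinset) \ near A B).card := by
    intro A hA hAk
    refine exists_bad_set hJ (hvW.mono hA) ?_
    rw [hmass A fun l hl => hlen l (Multiset.mem_of_le hA hl), hAk]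
    omega
  have hle : ∀ l, l ∈ W₁ ∨ l ∈ W₂ ∨ l ∈ W₃ ∨ l ∈ W₄ ∨ l ∈ W₅ → l.length = r := by
    intro l hl
    exact hlen l (by simpa using hl)
  obtain ⟨B₁, hB₁m, hB₁⟩ := hbad W₁ (Multiset.le_add_right _ _) hc₁
  obtain ⟨B₂, hB₂m, hB₂⟩ := hbad W₂ ((Multiset.le_add_right _ _).trans
    (Multiset.le_add_left _ _)) hc₂
  obtain ⟨B₃, hB₃m, hB₃⟩ := hbad W₃ ((Multiset.le_add_right _ _).trans
    ((Multiset.le_add_left _ _).trans (Multiset.le_add_left _ _))) hc₃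
  obtain ⟨B₄, hB₄m, hB₄⟩ := hbad W₄ ((Multiset.le_add_right _ _).trans
    ((Multiset.le_add_left _ _).trans ((Multiset.le_add_left _ _).trans
      (Multiset.le_add_left _ _)))) hc₄
  have hW₅ : Valid G W₅ := hvW.mono ((Multiset.le_add_left _ _).trans
    ((Multiset.le_add_left _ _).trans ((Multiset.le_add_left _ _).trans
      (Multiset.le_add_left _ _))))
  obtain ⟨R, hR, P, c, d, Q, rfl, hcB, hdB⟩ := exists_cut hW₅
    (fun l hl => by rw [hle l (by simp [hl])]; exact hr)
    (m := m) (by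
      rw [hmass W₅ fun l hl => hle l (by simp [hl])]
      have : k * r ≤ W₅.card * r := Nat.mul_le_mul_right _ (by omega)
      omega) hB₂m hB₄m
  obtain ⟨W₅, rfl⟩ := Multiset.exists_cons_of_mem hR
  set p : Multiset V := ((P ++ [c]).head?.toList : Multiset V) with hp
  set z : Multiset V := ((d :: Q).getLast?.toList : Multiset V) with hz
  have hR₁ : listEnds (P ++ [c]) = {c} + p := listEnds_concat P c
  have hR₂ : listEnds (d :: Q) = {d} + z := listEnds_cons_eq d Q
  have hsplit : P ++ c :: d :: Q = (P ++ [c]) ++ (d :: Q) := by simp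
  have hRe : listEnds (P ++ c :: d :: Q) = p + z := by
    rw [hsplit, listEnds_append (by simp) (by simp)]
  have hval₁ : Valid G (N + ((P ++ [c]) ::ₘ (W₁ + W₂)) + ((d :: Q) ::ₘ (W₃ + W₄ + W₅))) := by
    have h : Valid G ((P ++ [c]) ::ₘ (d :: Q) ::ₘ (N + W₁ + W₂ + W₃ + W₄ + W₅)) := by
      refine valid_cut ?_ (by simp) (by simp)
      rw [← hsplit]
      convert hval using 1
      simp only [← Multiset.singleton_add]
      abel
    convert h using 1
    simp only [← Multiset.singleton_add]
    abel
  have hlen₂ : ∀ l, l ∈ W₁ ∨ l ∈ W₂ ∨ l ∈ W₃ ∨ l ∈ W₄ → 2 ≤ l.length := fun l hl => by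
    rw [hle l (by tauto)]; exact hr
  obtain ⟨R₁, hR₁W, R₂, hR₂W, hR₁c, hR₂c, C, hC, hCv, hCe⟩ := exists_connect_through hJ ht
    (hval₁.mono (Multiset.le_add_right _ _)) heN (c := c) (by rw [hR₁]; simp) hB₁m hrot hB₁ hB₂
    (fun l hl => hlen₂ l (by simp [hl])) (fun l hl => hlen₂ l (by simp [hl])) hcB
  obtain ⟨S₁, rfl⟩ := Multiset.le_iff_exists_add.1 hR₁W
  obtain ⟨S₂, rfl⟩ := Multiset.le_iff_exists_add.1 hR₂W
  have hval₂ : Valid G (C + ((d :: Q) ::ₘ (W₃ + W₄)) + (S₁ + S₂ + W₅)) := by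
    rw [add_assoc]
    refine Valid.of_verts_eq (A := N + ((P ++ [c]) ::ₘ (R₁ + R₂))) ?_ hC (by rw [hCv, verts_add])
    convert hval₁ using 1
    simp only [← Multiset.singleton_add]
    abel
  have hends : ends C = (T + p + ends R₁ + ends R₂) + (e' ::ₘ E) := by
    rw [hE, ends_cons, hR₁, ends_add] at hCe
    simp only [← Multiset.singleton_add] at hCe ⊢
    refine add_left_cancel (a := {e} + {c}) ?_
    rw [add_assoc, hCe]
    abel
  have hcardC : C.card = N.card + R₁.card + R₂.card := by
    have h1 := congrArg Multiset.card hCe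
    rw [Multiset.card_cons, Multiset.card_cons, Multiset.card_add, hC.card_ends, hvN.card_ends,
      ((hval₁.mono (Multiset.le_add_right _ _)).mono (Multiset.le_add_left _ _) |>.mono
        ((Multiset.cons_le_cons_iff _).2 (add_le_add hR₁W hR₂W))).card_ends,
      Multiset.card_cons, Multiset.card_add] at h1
    omega
  have hYC : ∀ v ∈ Y, v ∈ verts C := fun v hv => by rw [hCv]; simp [hY v hv]
  have he'C : e' ∈ ends C := by rw [hends]; simp
  have hvertsR : verts ((P ++ c :: d :: Q) ::ₘ (R₁ + R₂)) =
      verts ((P ++ [c]) ::ₘ (R₁ + R₂)) + ((d :: Q : List V) : Multiset V) := by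
    rw [hsplit]
    simp only [verts_cons, verts_add, ← Multiset.coe_add]
    abel
  rcases card_rotSet_ge_or hC hexp hYC he'C with hrot' | ⟨q, hqC, hqe, D, hD, hDv, hDe⟩
  · obtain ⟨R₃, hR₃W, R₄, hR₄W, hR₃c, hR₄c, D, hD, hDv, hDe⟩ := exists_connect_through hJ ht
      (hval₂.mono (Multiset.le_add_right _ _)) he'C (c := d) (by rw [hR₂]; simp) hB₃m hrot' hB₃ hB₄
      (fun l hl => hlen₂ l (by simp [hl])) (fun l hl => hlen₂ l (by simp [hl])) hdB
    obtain ⟨S₃, rfl⟩ := Multiset.le_iff_exists_add.1 hR₃W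
    obtain ⟨S₄, rfl⟩ := Multiset.le_iff_exists_add.1 hR₄W
    refine ⟨D, (P ++ c :: d :: Q) ::ₘ (R₁ + R₂ + R₃ + R₄), S₁ + S₂ + S₃ + S₄ + W₅, ?_, ?_, ?_, ?_,
      ?_, ?_⟩
    · simp only [← Multiset.singleton_add]
      abel
    · simp only [Multiset.card_cons, Multiset.card_add]
      omega
    · refine Valid.of_verts_eq (A := C + ((d :: Q) ::ₘ (R₃ + R₄))) ?_ hD (by rw [hDv, verts_add])
      convert hval₂ using 1
      simp only [← Multiset.singleton_add]
      abel
    · rw [hDv, hCv, hsplit]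
      simp only [verts_cons, verts_add, ← Multiset.coe_add]
      abel
    · have h1 : ends D = T + ends ((P ++ c :: d :: Q) ::ₘ (R₁ + R₂ + R₃ + R₄)) + E := by
        rw [hends] at hDe
        simp only [ends_cons, ends_add] at hDe ⊢
        rw [hR₂] at hDe
        rw [hRe]
        simp only [← Multiset.singleton_add] at hDe
        refine add_left_cancel (a := {e'} + {d}) ?_
        rw [add_assoc, hDe]
        abel
      rw [h1]
      exact Multiset.le_add_right _ _
    · have h1 := congrArg Multiset.card hDe
      rw [Multiset.card_cons, Multiset.card_cons, Multiset.card_add, hD.card_ends, hC.card_ends,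
        ((hval₂.mono (Multiset.le_add_right _ _)).mono (Multiset.le_add_left _ _) |>.mono
          ((Multiset.cons_le_cons_iff _).2 (add_le_add hR₃W hR₄W))).card_ends,
        Multiset.card_cons, Multiset.card_add] at h1
      simp only [Multiset.card_cons, Multiset.card_add]
      omega
  · refine ⟨(d :: Q) ::ₘ D, (P ++ c :: d :: Q) ::ₘ (R₁ + R₂), S₁ + S₂ + W₃ + W₄ + W₅, ?_, ?_, ?_,
      ?_, ?_, ?_⟩
    · simp only [← Multiset.singleton_add]
      abel
    · simp only [Multiset.card_cons, Multiset.card_add]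
      omega
    · have h1 : Valid G (D + ((d :: Q) ::ₘ (S₁ + S₂ + W₃ + W₄ + W₅))) := by
        refine Valid.of_verts_eq (A := C) ?_ hD hDv
        convert hval₂ using 1
        simp only [← Multiset.singleton_add]
        abel
      convert h1 using 1
      simp only [← Multiset.singleton_add]
      abel
    · rw [hvertsR, verts_cons, hDv, hCv]
      abel
    · have hTn' : (T + p + ends R₁ + ends R₂).Nodup := by
        refine Multiset.nodup_of_le ?_ hT
        simp only [ends_add, ends_cons, hRe]
        refine Multiset.le_iff_exists_add.2
          ⟨ends S₁ + ends S₂ + ends W₃ + ends W₄ + z + ends W₅, ?_⟩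
        abel
      have h1 := le_ends_of_merge hends hDe hqC hqe hTn'
      simp only [ends_add, ends_cons, hRe, hR₂]
      calc T + (p + z + (ends R₁ + ends R₂)) = z + (T + p + ends R₁ + ends R₂) := by abel
        _ ≤ {d} + z + ends D := add_le_add (Multiset.le_add_left _ _) h1
    · have h1 := congrArg Multiset.card hDe
      rw [Multiset.card_cons, Multiset.card_cons, hD.card_ends, hC.card_ends] at h1
      simp only [Multiset.card_cons, Multiset.card_add]
      omega

/-- All but `T`-many ends of a family can be removed by inserting paths of equal length. -/
theorem exists_insertion {N W : Multiset (List V)} {Y : Finset V} {m t k r s : ℕ}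
    {T : Multiset V} (hJ : IsJoined G m) (ht : m ≤ 2 ^ t) (hval : Valid G (N + W))
    (hexp : ∀ U : Finset V, U.card ≤ m → 4 * U.card ≤ (nbr G U ∩ Y).card)
    (hY : ∀ v ∈ Y, v ∈ verts N) (hlen : ∀ l ∈ W, l.length = r) (hr : 2 ≤ r)
    (hk : 20 * m < k * r) (hkW : 5 * k + s * (4 * t + 1) ≤ W.card) (hT : (T + ends W).Nodup)
    (hTN : T ≤ ends N) (hTc : T.card + 2 * s = (ends N).card) :
    ∃ F, Valid G F ∧ verts F = verts N + verts W ∧ ends F = T + ends W := by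
  induction s generalizing N W T with
  | zero =>
    refine ⟨N + W, hval, by simp, ?_⟩
    rw [ends_add, Multiset.eq_of_le_of_card_le hTN (by omega)]
  | succ s ih =>
    obtain ⟨N', D, W', rfl, hD, hv, hNv, hTN', hc⟩ := exists_insertion_step hJ ht hval hexp hY hlen
      hr hk (by omega) hT hTN (by omega)
    have hDe : Valid G D := (valid_add.1 hval).2.1.mono (Multiset.le_add_left _ _)
    obtain ⟨F, hF, hFv, hFe⟩ := ih hv (fun v hv => by rw [hNv]; simp [hY v hv])
      (fun l hl => hlen l (by simp [hl])) (by
        rw [Multiset.card_add, Nat.add_mul s 1, one_mul] at hkW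
        omega) (T := T + ends D) (by
        rw [ends_add] at hT
        rwa [add_assoc, add_comm (ends D)]) hTN' (by
        rw [Multiset.card_add, hDe.card_ends, (valid_add.1 hv).1.card_ends]
        rw [(valid_add.1 hval).1.card_ends] at hTc
        omega)
    refine ⟨F, hF, ?_, ?_⟩
    · rw [hFv, hNv, verts_add]
      abel
    · rw [hFe, ends_add]
      abel

end

section

variable {V : Type*} [Fintype V] [DecidableEq V] {G : SimpleGraph V} {m d : ℕ}

/-- The set `A` with out-degrees `o` is extendable: small sets have many neighbours
outside `A`. -/
def Extendable (G : SimpleGraph V) (m d : ℕ) (A : Finset V) (o : V → ℕ) : Prop :=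
  ∀ U : Finset V, U.card ≤ 2 * m → d * U.card ≤ (nbr G U \ A).card + ∑ u ∈ U, o u

theorem Extendable.mono {A : Finset V} {o o' : V → ℕ} (h : Extendable G m d A o)
    (ho : ∀ u, o u ≤ o' u) : Extendable G m d A o' := fun U hU =>
  (h U hU).trans (Nat.add_le_add_left (Finset.sum_le_sum fun u _ => ho u) _)

/-- Sets for which the extendability inequality is tight. -/
def Critical (G : SimpleGraph V) (m d : ℕ) (A : Finset V) (o : V → ℕ) (U : Finset V) : Prop :=
  U.card ≤ 2 * m ∧ (nbr G U \ A).card + ∑ u ∈ U, o u ≤ d * U.card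

theorem Critical.card_lt {A U : Finset V} {o : V → ℕ} (hJ : IsJoined G m)
    (hA : A.card + (2 * d + 3) * m ≤ Fintype.card V) (hU : Critical G m d A o U) : U.card < m := by
  by_contra! h
  have h1 := card_sdiff_nbr_lt hJ h Finset.univ
  have h2 : (Finset.univ : Finset V) ⊆
      (nbr G U \ A) ∪ A ∪ U ∪ (Finset.univ \ (U ∪ nbr G U)) := by
    intro v _
    simp only [Finset.mem_union, Finset.mem_sdiff, Finset.mem_univ, true_and]
    tauto
  have h3 := Finset.card_le_card h2
  have h4 := Finset.card_union_le ((nbr G U \ A) ∪ A ∪ U) (Finset.univ \ (U ∪ nbr G U))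
  have h5 := Finset.card_union_le ((nbr G U \ A) ∪ A) U
  have h6 := Finset.card_union_le (nbr G U \ A) A
  rw [Finset.card_univ] at h3
  have h7 := hU.2
  have h8 : d * U.card ≤ d * (2 * m) := Nat.mul_le_mul_left _ hU.1
  have h9 := hU.1
  have h10 : (2 * d + 3) * m = d * (2 * m) + 3 * m := by ring
  omega

theorem Extendable.critical_union {A U W : Finset V} {o : V → ℕ} (h : Extendable G m d A o)
    (hU : Critical G m d A o U) (hW : Critical G m d A o W) (hUm : U.card < m) (hWm : W.card < m) :
    Critical G m d A o (U ∪ W) := by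
  have h1 := h (U ∩ W) ((Finset.card_le_card Finset.inter_subset_left).trans hU.1)
  have h2 := Finset.sum_union_inter (s₁ := U) (s₂ := W) (f := o)
  have h3 := Finset.card_union_add_card_inter U W
  have h4 : (nbr G (U ∪ W) \ A).card + (nbr G (U ∩ W) \ A).card ≤
      (nbr G U \ A).card + (nbr G W \ A).card := by
    rw [← Finset.card_union_add_card_inter (nbr G U \ A)]
    refine add_le_add (Finset.card_le_card ?_) (Finset.card_le_card ?_)
    · rw [nbr_union, Finset.union_sdiff_distrib]
    · intro v hv
      simp only [Finset.mem_inter, Finset.mem_sdiff] at hv ⊢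
      exact ⟨⟨nbr_mono Finset.inter_subset_left hv.1, hv.2⟩,
        nbr_mono Finset.inter_subset_right hv.1, hv.2⟩
  have h5 : d * (U ∪ W).card + d * (U ∩ W).card = d * U.card + d * W.card := by
    rw [← Nat.mul_add, h3, Nat.mul_add]
  have h6 := hU.2
  have h7 := hW.2
  exact ⟨by omega, by omega⟩

/-- A leaf can be attached to any vertex of small out-degree. -/
theorem Extendable.exists_leaf {A : Finset V} {o : V → ℕ} (hJ : IsJoined G m) (hm : 0 < m)
    (h : Extendable G m d A o) {v : V} (hv : o v < d)
    (hA : A.card + (2 * d + 3) * m ≤ Fintype.card V) :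
    ∃ w ∉ A, G.Adj v w ∧ Extendable G m d (insert w A) (fun u => o u + if u = v then 1 else 0) := by
  by_contra! hno
  have h1 : ∀ w ∈ nbr G {v} \ A, ∃ U, Critical G m d A o U ∧ v ∉ U ∧ w ∈ nbr G U := by
    intro w hw
    rw [Finset.mem_sdiff, mem_nbr] at hw
    obtain ⟨⟨v', hv', hvw⟩, hwA⟩ := hw
    rw [Finset.mem_singleton] at hv'
    subst hv'
    have h2 := hno w hwA hvw
    unfold Extendable at h2
    push Not at h2
    obtain ⟨U, hU, hlt⟩ := h2
    have h3 := h U hU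
    rw [Finset.sum_add_distrib, Finset.sum_ite_eq'] at hlt
    have h4 : nbr G U \ insert w A = (nbr G U \ A).erase w := by
      ext; simp; tauto
    rw [h4] at hlt
    have h5 := Finset.pred_card_le_card_erase (s := nbr G U \ A) (a := w)
    refine ⟨U, ⟨hU, by split_ifs at hlt <;> omega⟩, ?_, ?_⟩
    · intro hvU
      rw [if_pos hvU] at hlt
      omega
    · by_contra hwU
      rw [Finset.erase_eq_of_notMem (by simp [hwU])] at hlt
      omega
  have h2 : ∀ S ⊆ nbr G {v} \ A, ∃ U, Critical G m d A o U ∧ v ∉ U ∧ S ⊆ nbr G U := by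
    intro S
    induction S using Finset.induction_on with
    | empty => exact fun _ => ⟨∅, ⟨by simp, by simp [show nbr G ∅ = ∅ by ext; simp [mem_nbr]]⟩,
        by simp, by simp⟩
    | insert w S _ ih =>
      intro hS
      obtain ⟨U, hU, hvU, hSU⟩ := ih ((Finset.subset_insert _ _).trans hS)
      obtain ⟨W, hW, hvW, hwW⟩ := h1 w (hS (Finset.mem_insert_self _ _))
      refine ⟨U ∪ W, h.critical_union hU hW (hU.card_lt hJ hA) (hW.card_lt hJ hA),
        by simp [hvU, hvW], ?_⟩
      rw [nbr_union]
      exact Finset.insert_subset (Finset.mem_union_right _ hwW)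
        (hSU.trans Finset.subset_union_left)
  obtain ⟨U, hU, hvU, hS⟩ := h2 _ subset_rfl
  have h3 := hU.card_lt hJ hA
  have h4 := h (insert v U) (by rw [Finset.card_insert_of_notMem hvU]; omega)
  have h5 : nbr G (insert v U) \ A = nbr G U \ A := by
    rw [Finset.insert_eq, nbr_union]
    ext x
    have := @hS x
    simp only [Finset.mem_sdiff, Finset.mem_union] at this ⊢
    tauto
  rw [h5, Finset.card_insert_of_notMem hvU, Finset.sum_insert hvU] at h4
  have h6 := hU.2
  rw [Nat.mul_add, mul_one] at h4
  omega

/-- The heads of a set of arcs. -/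
def heads (E : Finset (V × V)) : Finset V := E.image Prod.snd

/-- The out-degree of a vertex in a set of arcs. -/
def outdeg (E : Finset (V × V)) (u : V) : ℕ := (E.filter fun e => e.1 = u).card

theorem mem_heads {E : Finset (V × V)} {w : V} : w ∈ heads E ↔ ∃ u, (u, w) ∈ E := by
  simp [heads]

/-- A forest of arcs attached to `A` keeping `A` extendable. -/
structure Forest (G : SimpleGraph V) (m d : ℕ) (A : Finset V) (o : V → ℕ)
    (E : Finset (V × V)) : Prop where
  adj : ∀ e ∈ E, G.Adj e.1 e.2
  head : ∀ e ∈ E, e.2 ∉ A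
  tail : ∀ e ∈ E, e.1 ∈ A ∪ heads E
  inj : Set.InjOn Prod.snd (E : Set (V × V))
  ext : Extendable G m d (A ∪ heads E) (fun u => o u + outdeg E u)

theorem sum_outdeg (E : Finset (V × V)) (U : Finset V) :
    ∑ u ∈ U, outdeg E u = (E.filter fun e => e.1 ∈ U).card := by
  rw [Finset.card_eq_sum_card_fiberwise (f := Prod.fst) (t := U)
    (s := E.filter fun e => e.1 ∈ U) (fun e he => (Finset.mem_filter.1 he).2)]
  refine Finset.sum_congr rfl fun u hu => ?_
  unfold outdeg
  congr 1
  ext e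
  simp only [Finset.mem_filter]
  constructor
  · rintro ⟨h1, rfl⟩; exact ⟨⟨h1, hu⟩, rfl⟩
  · rintro ⟨⟨h1, -⟩, h2⟩; exact ⟨h1, h2⟩

theorem heads_insert (E : Finset (V × V)) (u w : V) :
    heads (insert (u, w) E) = insert w (heads E) := by
  simp [heads, Finset.image_insert]

theorem heads_mono {E E' : Finset (V × V)} (h : E ⊆ E') : heads E ⊆ heads E' :=
  Finset.image_subset_image h

theorem outdeg_insert {E : Finset (V × V)} {u w : V} (h : (u, w) ∉ E) (x : V) :
    outdeg (insert (u, w) E) x = outdeg E x + if x = u then 1 else 0 := by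
  unfold outdeg
  rw [Finset.filter_insert]
  by_cases hx : u = x
  · subst hx
    simp [h]
  · simp [hx, Ne.symm hx]

/-- Arcs can be dropped without destroying extendability. -/
theorem Forest.ext_of_subset {A : Finset V} {o : V → ℕ} {E E' : Finset (V × V)}
    (h : Forest G m d A o E) (hE : E' ⊆ E) :
    Extendable G m d (A ∪ heads E') (fun u => o u + outdeg E' u) := by
  intro U hU
  have h1 := h.ext U hU
  simp only [Finset.sum_add_distrib, sum_outdeg] at h1 ⊢
  have h2 : (E.filter fun e => e.1 ∈ U).card =
      (E'.filter fun e => e.1 ∈ U).card + ((E \ E').filter fun e => e.1 ∈ U).card := by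
    rw [← Finset.card_union_of_disjoint]
    · rw [← Finset.filter_union, Finset.union_sdiff_of_subset hE]
    · exact Finset.disjoint_filter_filter Finset.disjoint_sdiff
  have h3 : (nbr G U \ (A ∪ heads E)).card + ((E \ E').filter fun e => e.1 ∈ U).card ≤
      (nbr G U \ (A ∪ heads E')).card := by
    rw [← Finset.card_image_of_injOn (f := Prod.snd) (s := (E \ E').filter fun e => e.1 ∈ U)
      (h.inj.mono fun e he => by
        have := Finset.mem_coe.1 he
        simp only [Finset.mem_filter, Finset.mem_sdiff] at this
        exact this.1.1), ← Finset.card_union_of_disjoint]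
    · refine Finset.card_le_card (Finset.union_subset ?_ ?_)
      · exact Finset.sdiff_subset_sdiff subset_rfl
          (Finset.union_subset_union subset_rfl (heads_mono hE))
      · intro w hw
        simp only [Finset.mem_image, Finset.mem_filter, Finset.mem_sdiff] at hw
        obtain ⟨e, ⟨⟨he, heE'⟩, heU⟩, rfl⟩ := hw
        simp only [Finset.mem_sdiff, Finset.mem_union, mem_heads, mem_nbr, not_or]
        refine ⟨⟨e.1, heU, h.adj e he⟩, h.head e he, ?_⟩
        rintro ⟨u, hu⟩
        have := h.inj (hE hu) he rfl
        rw [this] at hu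
        exact heE' hu
    · rw [Finset.disjoint_left]
      intro w hw hw'
      simp only [Finset.mem_image, Finset.mem_filter, Finset.mem_sdiff] at hw'
      obtain ⟨e, ⟨⟨he, -⟩, -⟩, rfl⟩ := hw'
      simp only [Finset.mem_sdiff, Finset.mem_union, mem_heads, not_or] at hw
      exact hw.2.2 ⟨e.1, he⟩
  omega

theorem Forest.exists_arc {A : Finset V} {o : V → ℕ} {E : Finset (V × V)} (hJ : IsJoined G m)
    (hm : 0 < m) (h : Forest G m d A o E) {u : V} (hu : u ∈ A ∪ heads E)
    (hd : o u + outdeg E u < d) (hA : A.card + E.card + (2 * d + 3) * m ≤ Fintype.card V) :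
    ∃ w ∉ A ∪ heads E, Forest G m d A o (insert (u, w) E) := by
  obtain ⟨w, hw, huw, hext⟩ := h.ext.exists_leaf hJ hm hd (by
    have h1 := Finset.card_union_le A (heads E)
    have h2 : (heads E).card ≤ E.card := Finset.card_image_le
    omega)
  have hE : ∀ x, (x, w) ∉ E := fun x hx =>
    hw (Finset.mem_union_right _ (mem_heads.2 ⟨x, hx⟩))
  refine ⟨w, hw, ⟨?_, ?_, ?_, ?_, ?_⟩⟩
  · intro e he
    rcases Finset.mem_insert.1 he with rfl | he
    · exact huw
    · exact h.adj e he
  · intro e he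
    rcases Finset.mem_insert.1 he with rfl | he
    · exact fun hwA => hw (Finset.mem_union_left _ hwA)
    · exact h.head e he
  · intro e he
    rw [heads_insert]
    rcases Finset.mem_insert.1 he with rfl | he
    · exact Finset.union_subset_union subset_rfl (Finset.subset_insert _ _) hu
    · exact Finset.union_subset_union subset_rfl (Finset.subset_insert _ _) (h.tail e he)
  · rw [Finset.coe_insert]
    refine (Set.injOn_insert (fun hmem => hE u hmem)).2 ⟨h.inj, ?_⟩
    rintro ⟨e, he, rfl⟩
    exact hE e.1 he
  · rw [heads_insert, Finset.union_insert]
    refine hext.mono fun x => ?_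
    rw [outdeg_insert (hE u)]
    omega

theorem Forest.outdeg_eq_zero {A : Finset V} {o : V → ℕ} {E : Finset (V × V)}
    (h : Forest G m d A o E) {w : V} (hw : w ∉ A ∪ heads E) : outdeg E w = 0 := by
  unfold outdeg
  rw [Finset.card_eq_zero, Finset.filter_eq_empty_iff]
  rintro e he rfl
  exact hw (h.tail e he)

theorem notMem_of_notMem_heads {A : Finset V} {E : Finset (V × V)} {u w : V}
    (hw : w ∉ A ∪ heads E) : (u, w) ∉ E := fun h =>
  hw (Finset.mem_union_right _ (mem_heads.2 ⟨u, h⟩))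

/-- Attach two leaves to every vertex of `L`. -/
theorem Forest.exists_layer {A : Finset V} {o : V → ℕ} {E : Finset (V × V)} (hJ : IsJoined G m)
    (hm : 0 < m) (h : Forest G m d A o E) (L : Finset V) (hL : L ⊆ A ∪ heads E)
    (hd : ∀ u ∈ L, o u + outdeg E u + 2 ≤ d)
    (hA : A.card + E.card + 2 * L.card + (2 * d + 3) * m ≤ Fintype.card V) :
    ∃ (E' : Finset (V × V)) (L' : Finset V), E ⊆ E' ∧ Forest G m d A o E' ∧
      E'.card = E.card + 2 * L.card ∧ L'.card = 2 * L.card ∧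
      (∀ w ∈ L', w ∉ A ∪ heads E ∧ w ∈ heads E' ∧ outdeg E' w = 0 ∧ ∃ u ∈ L, (u, w) ∈ E') ∧
      ∀ x ∈ A ∪ heads E, x ∉ L → outdeg E' x = outdeg E x := by
  induction L using Finset.induction_on with
  | empty => exact ⟨E, ∅, subset_rfl, h, by simp, by simp, by simp, by simp⟩
  | insert u L hu ih =>
    rw [Finset.card_insert_of_notMem hu] at hA
    obtain ⟨E₀, L₀, hE₀, hF₀, hE₀c, hL₀c, hL₀, hout⟩ := ih ((Finset.subset_insert _ _).trans hL)
      (fun x hx => hd x (Finset.mem_insert_of_mem hx)) (by omega)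
    have huA := hL (Finset.mem_insert_self u L)
    have hsub₀ : A ∪ heads E ⊆ A ∪ heads E₀ :=
      Finset.union_subset_union subset_rfl (heads_mono hE₀)
    have hu₀ := hout u huA hu
    have hud := hd u (Finset.mem_insert_self u L)
    obtain ⟨w₁, hw₁, hF₁⟩ := hF₀.exists_arc hJ hm (hsub₀ huA) (by omega) (by omega)
    set E₁ := insert (u, w₁) E₀ with hE₁
    have hn₁ : (u, w₁) ∉ E₀ := notMem_of_notMem_heads hw₁
    have hsub₁ : A ∪ heads E₀ ⊆ A ∪ heads E₁ :=
      Finset.union_subset_union subset_rfl (heads_mono (Finset.subset_insert _ _))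
    have ho₁ := outdeg_insert hn₁
    have hc₁ : E₁.card = E₀.card + 1 := Finset.card_insert_of_notMem hn₁
    obtain ⟨w₂, hw₂, hF₂⟩ := hF₁.exists_arc hJ hm (hsub₁ (hsub₀ huA))
      (by rw [ho₁]; simp; omega) (by omega)
    have hn₂ : (u, w₂) ∉ E₁ := notMem_of_notMem_heads hw₂
    have ho₂ := outdeg_insert hn₂
    have hw₁₁ : w₁ ∈ heads E₁ := mem_heads.2 ⟨u, Finset.mem_insert_self _ _⟩
    have hne : w₂ ≠ w₁ := by
      rintro rfl
      exact hw₂ (Finset.mem_union_right _ hw₁₁)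
    have hL₀h : ∀ w ∈ L₀, w ∈ A ∪ heads E₀ := fun w hw =>
      Finset.mem_union_right _ (hL₀ w hw).2.1
    have hne₁ : ∀ w ∈ A ∪ heads E₀, w ≠ w₁ := fun w hw h => hw₁ (h ▸ hw)
    have hne₂ : ∀ w ∈ A ∪ heads E₁, w ≠ w₂ := fun w hw h => hw₂ (h ▸ hw)
    have hmem₁ : w₁ ∈ A ∪ heads E₁ := Finset.mem_union_right _ hw₁₁
    refine ⟨insert (u, w₂) E₁, insert w₂ (insert w₁ L₀), ?_, hF₂, ?_, ?_, ?_, ?_⟩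
    · exact hE₀.trans ((Finset.subset_insert _ _).trans (Finset.subset_insert _ _))
    · rw [Finset.card_insert_of_notMem hn₂, Finset.card_insert_of_notMem hu]
      omega
    · rw [Finset.card_insert_of_notMem, Finset.card_insert_of_notMem,
        Finset.card_insert_of_notMem hu]
      · omega
      · exact fun h => hne₁ _ (hL₀h _ h) rfl
      · intro h
        rcases Finset.mem_insert.1 h with h | h
        · exact hne h
        · exact hne₂ _ (hsub₁ (hL₀h _ h)) rfl
    · have hhu : ∀ x, x ∉ A ∪ heads E → x ≠ u := fun x hx h => hx (h ▸ huA)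
      intro w hw
      rw [Finset.mem_insert, Finset.mem_insert] at hw
      rw [heads_insert]
      rcases hw with rfl | rfl | hw
      · have h1 : w ∉ A ∪ heads E := fun h => hw₂ (hsub₁ (hsub₀ h))
        refine ⟨h1, Finset.mem_insert_self _ _, ?_, u, by simp, by simp⟩
        rw [ho₂, hF₁.outdeg_eq_zero hw₂, if_neg (hhu _ h1)]
      · have h1 : w ∉ A ∪ heads E := fun h => hw₁ (hsub₀ h)
        refine ⟨h1, Finset.mem_insert_of_mem hw₁₁, ?_, u, by simp, by simp [hE₁]⟩
        rw [ho₂, ho₁, hF₀.outdeg_eq_zero hw₁, if_neg (hhu _ h1)]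
      · obtain ⟨h1, h2, h3, x, hx, hxw⟩ := hL₀ w hw
        refine ⟨h1, Finset.mem_insert_of_mem (heads_mono (Finset.subset_insert _ _) h2), ?_, x,
          by simp [hx], by simp [hE₁, hxw]⟩
        rw [ho₂, ho₁, h3, if_neg (hhu _ h1)]
    · intro x hx hxL
      rw [Finset.mem_insert, not_or] at hxL
      rw [ho₂, ho₁, if_neg hxL.1, hout x hx hxL.2, add_zero, add_zero]

/-- The arcs of the path starting at `a` and running through the list. -/
def arcs (a : V) : List V → Finset (V × V)
  | [] => ∅
  | w :: p => insert (a, w) (arcs w p)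

theorem arcs_concat (a w : V) (p : List V) :
    arcs a (p ++ [w]) = insert ((a :: p).getLast (by simp), w) (arcs a p) := by
  induction p generalizing a with
  | nil => simp [arcs]
  | cons x p ih =>
    simp only [List.cons_append, arcs, ih, List.getLast_cons_cons]
    rw [Finset.insert_comm]

theorem heads_arcs (a : V) (p : List V) : heads (arcs a p) = p.toFinset := by
  induction p generalizing a with
  | nil => simp [arcs, heads]
  | cons w p ih => rw [arcs, heads_insert, ih]; simp

theorem outdeg_insert_le (E : Finset (V × V)) (u w x : V) :
    outdeg (insert (u, w) E) x ≤ outdeg E x + if x = u then 1 else 0 := by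
  by_cases h : (u, w) ∈ E
  · rw [Finset.insert_eq_of_mem h]; omega
  · rw [outdeg_insert h]

theorem outdeg_arcs_le (a : V) {p : List V} (hp : p.Nodup) (x : V) :
    outdeg (arcs a p) x ≤ (if x = a then 1 else 0) + if x ∈ p then 1 else 0 := by
  induction p generalizing a with
  | nil => simp [arcs, outdeg]
  | cons w p ih =>
    rw [List.nodup_cons] at hp
    have h1 := ih w hp.2
    have h2 := outdeg_insert_le (arcs w p) a w x
    rw [arcs]
    by_cases hxw : x = w
    · subst hxw
      simp only [if_true, hp.1, if_false, List.mem_cons, true_or] at h1 ⊢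
      omega
    · simp only [hxw, if_false, List.mem_cons, false_or] at h1 ⊢
      omega

theorem isChain_of_arcs {a : V} {p : List V} (h : ∀ e ∈ arcs a p, G.Adj e.1 e.2) :
    (a :: p).IsChain G.Adj := by
  induction p generalizing a with
  | nil => simp
  | cons w p ih =>
    rw [List.isChain_cons_cons]
    exact ⟨h (a, w) (by simp [arcs]), ih fun e he => h e (by simp [arcs, he])⟩

theorem outdeg_union_le (E E' : Finset (V × V)) (x : V) :
    outdeg (E ∪ E') x ≤ outdeg E x + outdeg E' x := by
  unfold outdeg
  rw [Finset.filter_union]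
  exact Finset.card_union_le _ _

/-- Grow a binary tree of given depth from `a`. -/
theorem Forest.exists_tree {A : Finset V} {o : V → ℕ} {E : Finset (V × V)} (hJ : IsJoined G m)
    (hm : 0 < m) (h : Forest G m d A o E) {a : V} (ha : a ∈ A) (hE : outdeg E a = 0)
    (had : o a + 2 ≤ d) (hd : ∀ x ∉ A, o x + 2 ≤ d) (i : ℕ)
    (hA : A.card + E.card + 2 * 2 ^ i + (2 * d + 3) * m ≤ Fintype.card V) :
    ∃ (E' : Finset (V × V)) (L : Finset V), E ⊆ E' ∧ Forest G m d A o E' ∧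
      E'.card + 2 = E.card + 2 * 2 ^ i ∧ L.card = 2 ^ i ∧
      (∀ x ∈ A, x ≠ a → outdeg E' x = outdeg E x) ∧
      ∀ w ∈ L, w ∈ A ∪ heads E' ∧ outdeg E' w = 0 ∧ (w ∈ A → w = a) ∧ ∃ p : List V,
        p.length = i ∧ (a :: p).getLast (by simp) = w ∧ p.Nodup ∧
        (∀ x ∈ p, x ∈ heads E' ∧ x ∉ heads E) ∧ arcs a p ⊆ E' := by
  induction i with
  | zero =>
    refine ⟨E, {a}, subset_rfl, h, by simp, by simp, fun _ _ _ => rfl, ?_⟩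
    intro w hw
    rw [Finset.mem_singleton] at hw
    subst hw
    exact ⟨Finset.mem_union_left _ ha, hE, fun _ => rfl, [], by simp [arcs]⟩
  | succ i ih =>
    rw [pow_succ] at hA ⊢
    obtain ⟨E', L, hEE', hF, hc, hLc, hout, hL⟩ := ih (by omega)
    obtain ⟨E'', L', hE'', hF'', hc'', hLc', hL', hout'⟩ := hF.exists_layer hJ hm L
      (fun w hw => (hL w hw).1) (fun u hu => by
        rw [(hL u hu).2.1]
        by_cases huA : u ∈ A
        · rw [(hL u hu).2.2.1 huA]; omega
        · have := hd u huA; omega) (by omega)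
    refine ⟨E'', L', hEE'.trans hE'', hF'', by omega, by omega, ?_, ?_⟩
    · intro x hx hxa
      rw [hout' x (Finset.mem_union_left _ hx) fun hxL => hxa ((hL x hxL).2.2.1 hx), hout x hx hxa]
    · intro w hw
      obtain ⟨h1, h2, h3, u, hu, huw⟩ := hL' w hw
      obtain ⟨-, -, -, p, hpl, hpu, hpn, hph, hpE⟩ := hL u hu
      refine ⟨Finset.mem_union_right _ h2, h3,
        fun hwA => absurd (Finset.mem_union_left _ hwA) h1, p ++ [w], by simp [hpl], by simp,
        ?_, ?_, ?_⟩
      · rw [List.nodup_append]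
        refine ⟨hpn, by simp, ?_⟩
        rintro x hx y hy rfl
        rw [List.mem_singleton] at hy
        subst hy
        exact h1 (Finset.mem_union_right _ (hph x hx).1)
      · intro x hx
        rw [List.mem_append, List.mem_singleton] at hx
        rcases hx with hx | rfl
        · exact ⟨heads_mono hE'' (hph x hx).1, (hph x hx).2⟩
        · exact ⟨h2, fun h => h1 (Finset.mem_union_right _ (heads_mono hEE' h))⟩
      · rw [arcs_concat, hpu]
        exact Finset.insert_subset huw (hpE.trans hE'')

theorem Extendable.forest {A : Finset V} {o : V → ℕ} (h : Extendable G m d A o) :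
    Forest G m d A o ∅ where
  adj := by simp
  head := by simp
  tail := by simp
  inj := by simp
  ext := by simpa [heads, outdeg] using h

/-- Two vertices of an extendable set can be connected by a path of prescribed length through
new vertices. -/
theorem Extendable.exists_connection {A : Finset V} {o : V → ℕ} {i : ℕ} (hJ : IsJoined G m)
    (hm : 0 < m) (h : Extendable G m d A o) {a b : V} (ha : a ∈ A) (hb : b ∈ A) (hab : a ≠ b)
    (had : o a + 2 ≤ d) (hbd : o b + 2 ≤ d) (hd : ∀ x ∉ A, o x + 2 ≤ d) (hi : m ≤ 2 ^ i)
    (hA : A.card + 4 * 2 ^ i + (2 * d + 3) * m ≤ Fintype.card V) :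
    ∃ p : List V, p.length = 2 * i ∧ p.Nodup ∧ (∀ x ∈ p, x ∉ A) ∧
      (a :: p ++ [b]).IsChain G.Adj ∧
      Extendable G m d (A ∪ p.toFinset) (fun u => o u + (if u = a then 1 else 0) +
        (if u = b then 1 else 0) + if u ∈ p then 1 else 0) := by
  obtain ⟨E₁, L₁, -, hF₁, hc₁, hLc₁, hout₁, hL₁⟩ := h.forest.exists_tree hJ hm ha
    (by simp [outdeg]) had hd i (by simp; omega)
  rw [Finset.card_empty] at hc₁
  obtain ⟨E₂, L₂, hE, hF₂, -, hLc₂, -, hL₂⟩ := hF₁.exists_tree hJ hm hb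
    (by rw [hout₁ b hb hab.symm]; simp [outdeg]) hbd hd i (by omega)
  have hmem : ∀ {c : V} {q : List V}, (c :: q).getLast (by simp) = c ∨
      (c :: q).getLast (by simp) ∈ q := fun {c q} => by
    have := List.getLast_mem (l := c :: q) (by simp)
    rwa [List.mem_cons] at this
  have hdisj : Disjoint L₁ L₂ := by
    rw [Finset.disjoint_left]
    intro w hw₁ hw₂
    obtain ⟨-, -, hwa, p, -, hpw, -, hp, -⟩ := hL₁ w hw₁
    obtain ⟨-, -, hwb, q, -, hqw, -, hq, -⟩ := hL₂ w hw₂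
    have h1 := hmem (c := a) (q := p)
    have h2 := hmem (c := b) (q := q)
    rw [hpw] at h1
    rw [hqw] at h2
    have hwA : w ∉ A := fun hwA => hab ((hwa hwA).symm.trans (hwb hwA))
    rcases h1 with rfl | h1
    · exact hwA ha
    · rcases h2 with rfl | h2
      · exact hwA hb
      · exact (hq w h2).2 (hp w h1).1
  obtain ⟨w₁, hw₁, w₂, hw₂, hadj⟩ := exists_adj_of_joined hJ hdisj (by omega) (by omega)
  obtain ⟨-, -, -, p, hpl, hpw, hpn, hp, hpE⟩ := hL₁ w₁ hw₁
  obtain ⟨-, -, -, q, hql, hqw, hqn, hq, hqE⟩ := hL₂ w₂ hw₂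
  have hheadA : ∀ x ∈ heads E₂, x ∉ A := fun x hx => by
    obtain ⟨u, hu⟩ := mem_heads.1 hx
    exact hF₂.head _ hu
  have hpE₂ := hpE.trans hE
  refine ⟨p ++ q.reverse, by simp; omega, ?_, ?_, ?_, ?_⟩
  · rw [List.nodup_append]
    refine ⟨hpn, List.nodup_reverse.2 hqn, ?_⟩
    rintro x hx y hy rfl
    exact (hq x (List.mem_reverse.1 hy)).2 (hp x hx).1
  · intro x hx
    rw [List.mem_append, List.mem_reverse] at hx
    rcases hx with hx | hx
    · exact hheadA x (heads_mono hE (hp x hx).1)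
    · exact hheadA x (hq x hx).1
  · have h1 : a :: (p ++ q.reverse) ++ [b] = (a :: p) ++ (b :: q).reverse := by simp
    rw [h1]
    refine isChain_append_of_adj (isChain_of_arcs fun e he => hF₂.adj e (hpE₂ he))
      (isChain_adj_reverse.2 (isChain_of_arcs fun e he => hF₂.adj e (hqE he))) (x := w₁) (y := w₂)
      ?_ ?_ hadj
    · rw [← hpw, List.getLast?_eq_some_getLast]
    · rw [List.head?_reverse, ← hqw, List.getLast?_eq_some_getLast]
  · have h1 := hF₂.ext_of_subset (Finset.union_subset hpE₂ hqE)
    have h2 : heads (arcs a p ∪ arcs b q) = (p ++ q.reverse).toFinset := by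
      rw [heads, Finset.image_union]
      change heads _ ∪ heads _ = _
      rw [heads_arcs, heads_arcs]
      simp
    rw [h2] at h1
    refine h1.mono fun x => ?_
    have h3 := outdeg_union_le (arcs a p) (arcs b q) x
    have h4 := outdeg_arcs_le a hpn x
    have h5 := outdeg_arcs_le b hqn x
    have h6 : (if x ∈ p then 1 else 0) + (if x ∈ q then 1 else 0) ≤
        if x ∈ p ++ q.reverse then 1 else 0 := by
      by_cases hxp : x ∈ p
      · have hxq : x ∉ q := fun hxq => (hq x hxq).2 (hp x hxp).1
        simp [hxp, hxq]
      · simp [hxp]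
    omega

/-- `Absorber G y a 𝓦 H` : whenever a family of paths has, among its ends, the ends of the
members of `𝓦`, these ends can be traded for `a` and `y` at the price of also covering `H`. -/
inductive Absorber (G : SimpleGraph V) (y : V) : V → Multiset (List V) → Multiset V → Prop
  | base {a : V} {l : List V} (hl : (a :: l ++ [y]).IsChain G.Adj) :
      Absorber G y a 0 ((a :: l ++ [y] : List V) : Multiset V)
  | step {a b z a' : V} {M R R' : List V} {W : Multiset (List V)} {H : Multiset V}
      (hbz : G.Adj b z) (hab : G.Adj a b) (hM : listEnds M = {b, z})
      (hR : (z :: R ++ [a']).IsChain G.Adj) (hR' : (a :: R' ++ [a']).IsChain G.Adj)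
      (hp : R.Perm R') (h : Absorber G y a' W H) :
      Absorber G y a (M ::ₘ W) (a ::ₘ (R + H))

theorem exists_prepend {C : Multiset (List V)} {P : List V} {a a' : V}
    (hC : Valid G C) (ha' : a' ∈ ends C) (hP : (a :: P ++ [a']).IsChain G.Adj)
    (hPn : (a :: P).Nodup) (hdisj : ∀ v ∈ a :: P, v ∉ verts C) :
    ∃ F, Valid G F ∧ verts F = (a :: P : List V) + verts C ∧ a' ::ₘ ends F = a ::ₘ ends C := by
  rw [List.isChain_append] at hP
  have hV : Valid G ({a :: P} + C) := by
    rw [Multiset.singleton_add, valid_cons]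
    exact ⟨⟨by simp, hP.1, hPn⟩, hC, hdisj⟩
  obtain ⟨x, hx⟩ : ∃ x, (a :: P).getLast? = some x :=
    ⟨_, List.getLast?_eq_some_getLast (by simp)⟩
  have hE : ends {a :: P} = {a} + {x} := by
    rw [ends_singleton, listEnds_cons_eq, hx]; rfl
  obtain ⟨F, hF, hFv, hFe⟩ := exists_join hV (x := x) (y := a') (by rw [hE]; simp) ha'
    (hP.2.2 x (by simp [hx]) a' (by simp))
  refine ⟨F, hF, by simpa using hFv, ?_⟩
  rw [hE] at hFe
  refine (Multiset.cons_inj_right x).1 ?_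
  rw [hFe, ← Multiset.singleton_add x, ← Multiset.singleton_add a]
  abel

theorem Absorber.absorb {y a : V} {W : Multiset (List V)} {H : Multiset V}
    (h : Absorber G y a W H) (F : Multiset (List V)) (X : Multiset V) (hF : Valid G F)
    (hH : H.Nodup) (hdisj : ∀ v ∈ verts F, v ∉ H) (hX : ends F = X + ends W) :
    ∃ F', Valid G F' ∧ verts F' = verts F + H ∧ ends F' = X + {a, y} := by
  induction h generalizing X with
  | @base a l hl =>
    refine ⟨(a :: l ++ [y]) ::ₘ F, ?_, ?_, ?_⟩
    · rw [valid_cons]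
      exact ⟨⟨by simp, hl, by simpa using hH⟩, hF, fun v hv hvF => hdisj v hvF hv⟩
    · rw [verts_cons, add_comm]
    · rw [ends_cons, hX, listEnds_append (by simp) (by simp), add_comm]
      simp
  | @step a b z a' M R R' W H hbz hab hM hR hR' hp _ ih =>
    simp only [Multiset.nodup_cons, Multiset.nodup_add, Multiset.mem_add, Multiset.mem_cons,
      Multiset.mem_coe, Multiset.coe_nodup, not_or, Multiset.disjoint_left] at hH hdisj
    obtain ⟨⟨haR, haH⟩, hRn, hHn, hRH⟩ := hH
    obtain ⟨F', hF', hv', he'⟩ := ih (X + {b, z}) hHn (fun v hv => (hdisj v hv).2.2) (by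
      rw [hX, ends_cons, hM, add_assoc])
    have hbF : b ∈ verts F := mem_verts_of_mem_ends (by rw [hX, ends_cons, hM]; simp)
    have hb : b ∈ ends F' := by rw [he']; simp
    have hnew : ∀ v, v = a ∨ v ∈ R → v ∉ verts F' := by
      intro v hv hvF
      rw [hv', Multiset.mem_add] at hvF
      rcases hv with rfl | hv <;> rcases hvF with hvF | hvF
      · exact (hdisj v hvF).1 rfl
      · exact haH hvF
      · exact (hdisj v hvF).2.1 hv
      · exact hRH hv hvF
    have key : ∃ (C : Multiset (List V)) (P : List V), Valid G C ∧ a' ∈ ends C ∧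
        (a :: P ++ [a']).IsChain G.Adj ∧ (a :: P).Nodup ∧ (∀ v ∈ a :: P, v ∉ verts C) ∧
        ends C = X + {a', y} ∧ (P : Multiset V) + verts C = R + verts F' := by
      obtain ⟨l, F₀, hre, -⟩ := exists_reorient_head hb
      have hV := hre.valid G hF'
      rw [valid_cons] at hV
      obtain ⟨w, hw⟩ : ∃ w, (b :: l).getLast? = some w :=
        ⟨_, List.getLast?_eq_some_getLast (by simp)⟩
      have hE := hre.ends_eq
      rw [ends_cons, listEnds_cons_eq, hw, he'] at hE
      have hvv := hre.verts_eq
      rw [verts_cons] at hvv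
      have hmemF' : ∀ v, v ∈ b :: l ∨ v ∈ verts F₀ → v ∈ verts F' := by
        intro v hv
        rw [← hvv, Multiset.mem_add]
        exact hv
      by_cases hwz : w = z
      · subst hwz
        have hE₀ : ends F₀ = X + {a', y} := by
          have h1 : ({b, w} : Multiset V) + ends F₀ = {b, w} + (X + {a', y}) := by
            rw [← add_assoc, add_comm _ X, ← hE]; rfl
          exact add_left_cancel h1
        refine ⟨F₀, (b :: l) ++ R, hV.2.1, by rw [hE₀]; simp, ?_, ?_, ?_, hE₀, ?_⟩
        · have h1 : a :: (b :: l ++ R) ++ [a'] = (a :: b :: l) ++ (R ++ [a']) := by simp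
          rw [List.cons_append, List.isChain_cons] at hR
          rw [h1, List.isChain_append]
          refine ⟨List.isChain_cons_cons.2 ⟨hab, hV.1.2.1⟩, hR.2, ?_⟩
          rw [List.getLast?_cons_cons, hw]
          rintro _ ⟨⟩
          exact hR.1
        · rw [List.nodup_cons, List.mem_append, not_or, List.nodup_append]
          refine ⟨⟨fun h => hnew a (Or.inl rfl) (hmemF' _ (Or.inl h)), haR⟩, hV.1.2.2, hRn, ?_⟩
          rintro v hv _ hvR rfl
          exact hnew v (Or.inr hvR) (hmemF' _ (Or.inl hv))
        · intro v hv hvF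
          rw [List.mem_cons, List.mem_append] at hv
          rcases hv with rfl | hv | hv
          · exact hnew v (Or.inl rfl) (hmemF' _ (Or.inr hvF))
          · exact hV.2.2 v hv hvF
          · exact hnew v (Or.inr hv) (hmemF' _ (Or.inr hvF))
        · rw [← hvv, ← Multiset.coe_add]
          abel
      · have hz : z ∈ ends F₀ := by
          have h1 : z ∈ ({b} + ((some w).toList : Multiset V)) + ends F₀ := by rw [hE]; simp
          have h2 : z ≠ b := fun h => hbz.ne h.symm
          have h3 : z ≠ w := fun h => hwz h.symm
          simpa [h2, h3] using h1
        have hV' : Valid G ({b :: l} + F₀) := by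
          rw [Multiset.singleton_add, valid_cons]; exact hV
        obtain ⟨C, hC, hCv, hCe⟩ := exists_join hV' (x := b) (y := z)
          (by rw [ends_singleton, listEnds_cons_eq]; simp) hz hbz
        have hCv' : verts C = verts F' := by rw [hCv, ← hvv, verts_singleton]
        have hE₀ : ends C = X + {a', y} := by
          have h1 : ({b, z} : Multiset V) + ends C = {b, z} + (X + {a', y}) := by
            rw [← add_assoc, add_comm _ X, ← hE]
            rw [ends_singleton, listEnds_cons_eq, hw] at hCe
            rw [← hCe]; simp
          exact add_left_cancel h1
        refine ⟨C, R', hC, by rw [hE₀]; simp, hR', ?_, ?_, hE₀, ?_⟩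
        · rw [List.nodup_cons, ← hp.mem_iff, ← hp.nodup_iff]
          exact ⟨haR, hRn⟩
        · intro v hv
          rw [List.mem_cons, ← hp.mem_iff] at hv
          rw [hCv']
          exact hnew v hv
        · rw [hCv', Multiset.coe_eq_coe.2 hp]
    obtain ⟨C, P, hC, ha', hPc, hPn, hPd, hCe, hPv⟩ := key
    obtain ⟨F₁, hF₁, hv₁, he₁⟩ := exists_prepend hC ha' hPc hPn hPd
    refine ⟨F₁, hF₁, ?_, ?_⟩
    · rw [hv₁, ← Multiset.cons_coe, Multiset.cons_add, hPv, hv']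
      simp only [← Multiset.singleton_add]
      abel
    · refine (Multiset.cons_inj_right a').1 ?_
      rw [he₁, hCe]
      simp only [Multiset.insert_eq_cons, ← Multiset.singleton_add]
      abel

end

section

variable {V : Type*} [Fintype V] [DecidableEq V] {G : SimpleGraph V} {m d i : ℕ}

/-- The number of vertices that must remain unused during the construction of the absorber. -/
def reserve (m d i : ℕ) : ℕ := 4 * 2 ^ i + (2 * d + 3) * m

/-- An extendable set all of whose vertices have been used a bounded number of times. -/
structure Tame (G : SimpleGraph V) (m d : ℕ) (A : Finset V) (o : V → ℕ) : Prop where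
  ext : Extendable G m d A o
  le : ∀ x, o x ≤ 4
  zero : ∀ x ∉ A, o x = 0

/-- The standing assumptions for the construction of the absorber. -/
structure Setting (G : SimpleGraph V) (m d i : ℕ) : Prop where
  joined : IsJoined G m
  pos : 0 < m
  six_le : 6 ≤ d
  le_pow : m ≤ 2 ^ i

theorem Tame.exists_leaf {A : Finset V} {o : V → ℕ} (h : Tame G m d A o) (S : Setting G m d i)
    {v : V} (hv : v ∈ A) (hov : o v ≤ 3) (hA : A.card + reserve m d i ≤ Fintype.card V) :
    ∃ w ∉ A, G.Adj v w ∧ ∃ o', Tame G m d (insert w A) o' ∧ o' v = o v + 1 ∧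
      ∀ x, x ≠ v → o' x = o x := by
  have h6 := S.six_le
  unfold reserve at hA
  obtain ⟨w, hw, hvw, hE⟩ := h.ext.exists_leaf S.joined S.pos (v := v) (by omega) (by omega)
  refine ⟨w, hw, hvw, _, ⟨hE, ?_, ?_⟩, by simp, fun x hx => by simp [hx]⟩
  · intro x
    have := h.le x
    by_cases hx : x = v
    · subst hx; simp; omega
    · simpa [hx] using this
  · intro x hx
    rw [Finset.mem_insert, not_or] at hx
    have hxv : x ≠ v := fun hxv => hx.2 (hxv ▸ hv)
    simp [hxv, h.zero x hx.2]

theorem Tame.exists_connection {A : Finset V} {o : V → ℕ} (h : Tame G m d A o)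
    (S : Setting G m d i) {a b : V} (ha : a ∈ A) (hb : b ∈ A) (hab : a ≠ b) (hoa : o a ≤ 3)
    (hob : o b ≤ 3) (hA : A.card + reserve m d i ≤ Fintype.card V) :
    ∃ p : List V, p.length = 2 * i ∧ p.Nodup ∧ (∀ x ∈ p, x ∉ A) ∧ (a :: p ++ [b]).IsChain G.Adj ∧
      ∃ o', Tame G m d (A ∪ p.toFinset) o' ∧ o' a = o a + 1 ∧ o' b = o b + 1 ∧
        (∀ x ∈ p, o' x = 1) ∧ ∀ x ∈ A, x ≠ a → x ≠ b → o' x = o x := by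
  have h6 := S.six_le
  unfold reserve at hA
  obtain ⟨p, hpl, hpn, hpA, hpc, hE⟩ := h.ext.exists_connection S.joined S.pos ha hb hab
    (by omega) (by omega) (fun x hx => by rw [h.zero x hx]; omega) S.le_pow (by omega)
  have hap : a ∉ p := fun hp => hpA a hp ha
  have hbp : b ∉ p := fun hp => hpA b hp hb
  have hval : ∀ x ∈ p, o x = 0 ∧ x ≠ a ∧ x ≠ b := fun x hx =>
    ⟨h.zero x (hpA x hx), fun h => hap (h ▸ hx), fun h => hbp (h ▸ hx)⟩
  have hA' : ∀ x ∈ A, x ∉ p := fun x hx hp => hpA x hp hx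
  refine ⟨p, hpl, hpn, hpA, hpc, _, ⟨hE, ?_, ?_⟩, by simp [hab, hap], by simp [hab.symm, hbp],
    fun x hx => by simp [hx, hval x hx], fun x hx hxa hxb => by simp [hxa, hxb, hA' x hx]⟩
  · intro x
    have := h.le x
    by_cases hx : x ∈ p
    · simp [hx, hval x hx]
    · by_cases hxa : x = a
      · subst hxa; simp [hab, hap]; omega
      · by_cases hxb : x = b
        · subst hxb; simp [hab.symm, hbp]; omega
        · simpa [hx, hxa, hxb] using this
  · intro x hx
    rw [Finset.mem_union, not_or, List.mem_toFinset] at hx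
    have hxa : x ≠ a := fun h => hx.1 (h ▸ ha)
    have hxb : x ≠ b := fun h => hx.1 (h ▸ hb)
    simp [hxa, hxb, hx.2, h.zero x hx.1]

theorem card_union_toFinset_le (A : Finset V) (p : List V) :
    (A ∪ p.toFinset).card ≤ A.card + p.length :=
  (Finset.card_union_le _ _).trans (Nat.add_le_add_left (List.toFinset_card_le p) _)

theorem Tame.exists_path (S : Setting G m d i) (k : ℕ) {A : Finset V} {o : V → ℕ}
    (h : Tame G m d A o) {v : V} (hv : v ∈ A) (hov : o v ≤ 3)
    (hA : A.card + k + reserve m d i ≤ Fintype.card V) :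
    ∃ g : List V, g.length = k ∧ g.Nodup ∧ (∀ x ∈ g, x ∉ A) ∧ (v :: g).IsChain G.Adj ∧
      ∃ o', Tame G m d (A ∪ g.toFinset) o' ∧ o' v ≤ o v + 1 ∧ (∀ x ∈ g, o' x ≤ 1) ∧
        ∀ x ∈ A, x ≠ v → o' x = o x := by
  induction k generalizing A o v with
  | zero => exact ⟨[], by simp, by simp, by simp, by simp, o, by simpa using h, by simp, by simp,
      fun _ _ _ => rfl⟩
  | succ k ih =>
    obtain ⟨w, hw, hvw, o₁, h₁, hv₁, hx₁⟩ := h.exists_leaf S hv hov (by omega)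
    have hwv : w ≠ v := fun h => hw (h ▸ hv)
    have hw₁ : o₁ w = 0 := by rw [hx₁ w hwv, h.zero w hw]
    obtain ⟨g, hgl, hgn, hgA, hgc, o₂, h₂, hv₂, hg₂, hx₂⟩ := ih h₁ (Finset.mem_insert_self w A)
      (by omega) (by rw [Finset.card_insert_of_notMem hw]; omega)
    have hwg : w ∉ g := fun h => hgA w h (Finset.mem_insert_self w A)
    refine ⟨w :: g, by simp [hgl], List.nodup_cons.2 ⟨hwg, hgn⟩, ?_,
      List.isChain_cons_cons.2 ⟨hvw, hgc⟩, o₂, ?_, ?_, ?_, ?_⟩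
    · intro x hx
      rw [List.mem_cons] at hx
      rcases hx with rfl | hx
      · exact hw
      · exact fun h => hgA x hx (Finset.mem_insert_of_mem h)
    · have : A ∪ (w :: g).toFinset = insert w A ∪ g.toFinset := by ext; simp
      rw [this]
      exact h₂
    · rw [hx₂ v (Finset.mem_insert_of_mem hv) hwv.symm, hv₁]
    · intro x hx
      rw [List.mem_cons] at hx
      rcases hx with rfl | hx
      · omega
      · exact hg₂ x hx
    · intro x hx hxv
      rw [hx₂ x (Finset.mem_insert_of_mem hx) fun h => hw (h ▸ hx), hx₁ x hxv]

/-- Turn a path `w, x₁, w₁, x₂, w₂, …` into two paths on the same vertex set. -/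
theorem Tame.exists_twin (S : Setting G m d i) (j : ℕ) {A : Finset V} {o : V → ℕ}
    (h : Tame G m d A o) {v w s : V} {R R' p : List V} (hs : s ∈ A) (hos : o s ≤ 2)
    (hp : p.length = 2 * j) (hpA : ∀ x ∈ p, x ∈ A) (hop : ∀ x ∈ p, o x ≤ 2) (hRA : ∀ x ∈ R, x ∈ A)
    (hn : (R ++ s :: p).Nodup) (hRR' : R.Perm R')
    (hR : (R ++ [s]).IsChain G.Adj) (hRv : (R ++ [s]).head? = some v)
    (hR' : (R' ++ [s]).IsChain G.Adj) (hRw : (R' ++ [s]).head? = some w)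
    (hwp : (w :: p).IsChain G.Adj)
    (hA : A.card + 2 * i * j + reserve m d i ≤ Fintype.card V) :
    ∃ (s' w' : V) (Q Q' : List V) (A' : Finset V) (o' : V → ℕ), Tame G m d A' o' ∧ A ⊆ A' ∧
      A'.card ≤ A.card + 2 * i * j ∧ s' ∈ A' ∧ o' s' ≤ 2 ∧ (∀ x ∈ Q, x ∈ A') ∧
      (Q ++ [s']).Nodup ∧ Q.Perm Q' ∧ (Q ++ [s']).IsChain G.Adj ∧ (Q ++ [s']).head? = some v ∧
      (Q' ++ [s']).IsChain G.Adj ∧ (Q' ++ [s']).head? = some w' ∧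
      (w :: p).getLast? = some w' ∧ (∀ x ∈ Q ++ [s'], x ∈ R ∨ x = s ∨ x ∈ p ∨ x ∉ A) ∧
      ∀ x ∈ A, x ∉ R → x ≠ s → x ∉ p → o' x = o x := by
  induction j generalizing A o w s R R' p with
  | zero =>
    have hp0 : p = [] := by simpa using hp
    subst hp0
    exact ⟨s, w, R, R', A, o, h, subset_rfl, by simp, hs, hos, hRA, hn, hRR', hR, hRv, hR', hRw,
      by simp, fun x hx => by simp at hx; tauto, fun _ _ _ _ _ => rfl⟩
  | succ j ih =>
    obtain ⟨x, y, p, rfl⟩ : ∃ x y q, p = x :: y :: q := by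
      match p, hp with
      | x :: y :: q, _ => exact ⟨x, y, q, rfl⟩
    have hx : x ∈ A := hpA x (by simp)
    have hy : y ∈ A := hpA y (by simp)
    have hsy : s ≠ y := by
      rintro rfl
      simp [List.nodup_append] at hn
    rw [Nat.mul_succ] at hA
    obtain ⟨c, hcl, hcn, hcA, hcc, o₁, h₁, hs₁, hy₁, hc₁, ho₁⟩ := h.exists_connection S hs hy hsy
      (by omega) (by have := hop y (by simp); omega) (by omega)
    have hcard := card_union_toFinset_le A c
    have hmem : ∀ {u}, u ∈ A → u ∈ A ∪ c.toFinset := fun hu => Finset.mem_union_left _ hu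
    rw [List.isChain_cons_cons, List.isChain_cons_cons] at hwp
    have hnot : ∀ u ∈ A, u ∉ c := fun u hu huc => hcA u huc hu
    have hn' : (R ++ s :: c ++ [y] ++ x :: p).Nodup := by
      have h1 : (R ++ s :: c ++ [y] ++ x :: p).Perm (c ++ (R ++ s :: x :: y :: p)) := by
        rw [← Multiset.coe_eq_coe]
        simp only [← Multiset.coe_add, ← Multiset.cons_coe, ← Multiset.singleton_add,
          Multiset.coe_nil]
        abel
      rw [h1.nodup_iff, List.nodup_append]
      refine ⟨hcn, hn, ?_⟩
      rintro u hu _ hu' rfl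
      simp only [List.mem_append, List.mem_cons] at hu'
      refine hcA u hu ?_
      rcases hu' with hu' | rfl | rfl | rfl | hu'
      · exact hRA u hu'
      · exact hs
      · exact hx
      · exact hy
      · exact hpA u (by simp [hu'])
    have hn'' := hn
    simp only [List.nodup_append, List.nodup_cons, List.mem_cons, not_or] at hn''
    obtain ⟨-, ⟨⟨hsx, -, hsp⟩, ⟨hxy, hxp⟩, hyp, -⟩, hdis⟩ := hn''
    obtain ⟨t, ht⟩ : ∃ t, (s :: R'.reverse).getLast? = some t :=
      ⟨_, List.getLast?_eq_some_getLast (by simp)⟩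
    have htw : t = w := by
      have h1 : (R' ++ [s]).reverse.getLast? = some w := by rw [List.getLast?_reverse, hRw]
      have h2 : (R' ++ [s]).reverse = s :: R'.reverse := by simp
      rw [h2, ht] at h1
      exact Option.some_injective _ h1
    rw [htw] at ht
    obtain ⟨s', w', Q, Q', A', o', h', hAA', hA'c, hs', hos', hQA, hQn, hQQ', hQ, hQv, hQ', hQw,
      hlast, hQmem, ho'⟩ := ih (A := A ∪ c.toFinset) (o := o₁) (w := y) (s := x)
        (R := R ++ s :: c ++ [y]) (R' := y :: c.reverse ++ s :: R'.reverse) (p := p) h₁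
        (hmem hx) (by rw [ho₁ x hx (Ne.symm hsx) hxy]; exact hop x (by simp))
        (by simp at hp; omega) (fun u hu => hmem (hpA u (by simp [hu])))
        (fun u hu => by
          rw [ho₁ u (hpA u (by simp [hu])) (fun h => hsp (h ▸ hu)) fun h => hyp (h ▸ hu)]
          exact hop u (by simp [hu]))
        (by
          intro u hu
          simp only [List.mem_append, List.mem_cons, List.not_mem_nil,
            or_false] at hu
          rcases hu with (hu | rfl | hu) | rfl
          · exact hmem (hRA u hu)
          · exact hmem hs
          · exact Finset.mem_union_right _ (List.mem_toFinset.2 hu)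
          · exact hmem hy)
        hn'
        (by
          rw [← Multiset.coe_eq_coe]
          simp only [← Multiset.coe_add, ← Multiset.cons_coe, ← Multiset.singleton_add,
            Multiset.coe_nil, Multiset.coe_reverse, Multiset.coe_eq_coe.2 hRR']
          abel)
        (by
          have h1 : R ++ s :: c ++ [y] ++ [x] = R ++ (s :: c ++ [y]) ++ [x] := by simp
          rw [h1]
          refine isChain_append_of_adj (x := y) (y := x) ?_ (by simp)
            (by simp [List.getLast?_append, List.getLast?_cons]) rfl hwp.2.1.symm
          rw [List.isChain_append] at hR ⊢
          exact ⟨hR.1, hcc, by simpa using hR.2.2⟩)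
        (by
          rw [← hRv]
          cases R <;> simp)
        (by
          have h1 : y :: c.reverse ++ s :: R'.reverse ++ [x] =
              (y :: c.reverse ++ s :: R'.reverse) ++ [x] := by simp
          refine isChain_append_of_adj (x := w) (y := x) ?_ (by simp) ?_ rfl hwp.1
          · have h2 : (s :: c ++ [y]).reverse = y :: c.reverse ++ [s] := by simp
            have h3 : (R' ++ [s]).reverse = s :: R'.reverse := by simp
            have h4 := isChain_adj_reverse.2 hcc
            have h5 := isChain_adj_reverse.2 hR'
            rw [h2, List.isChain_append] at h4
            rw [h3] at h5
            rw [List.isChain_append]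
            exact ⟨h4.1, h5, by simpa using h4.2.2⟩
          · rw [List.getLast?_append_cons, ht])
        (by simp) hwp.2.2 (by omega)
    refine ⟨s', w', Q, Q', A', o', h', Finset.subset_union_left.trans hAA', by
      rw [Nat.mul_succ]; omega, hs', hos', hQA, hQn, hQQ', hQ, hQv, hQ', hQw, ?_, ?_, ?_⟩
    · rw [List.getLast?_cons_cons, List.getLast?_cons_cons, hlast]
    · intro u hu
      have h1 := hQmem u hu
      simp only [List.mem_append, List.mem_cons, List.not_mem_nil,
        or_false, Finset.mem_union, not_or] at h1 ⊢
      have h2 := hcA u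
      tauto
    · intro u hu huR hus hup
      simp only [List.mem_cons, not_or] at hup
      rw [ho' u (hmem hu) ?_ hup.1 hup.2.2, ho₁ u hu hus hup.2.1]
      simp only [List.mem_append, List.mem_cons, List.not_mem_nil,
        or_false, not_or]
      exact ⟨⟨huR, hus, hnot u hu⟩, hup.2.1⟩

theorem Tame.exists_gadget (S : Setting G m d i) (k : ℕ) {A : Finset V} {o : V → ℕ}
    (h : Tame G m d A o) {a : V} (ha : a ∈ A) (hoa : o a ≤ 2)
    (hA : A.card + (k + 3 + 4 * i + 2 * i * i) + reserve m d i ≤ Fintype.card V) :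
    ∃ (b z a' : V) (M R R' : List V) (A' : Finset V) (o' : V → ℕ), Tame G m d A' o' ∧ A ⊆ A' ∧
      A'.card ≤ A.card + (k + 3 + 4 * i + 2 * i * i) ∧ a' ∈ A' ∧ o' a' ≤ 2 ∧ G.Adj b z ∧
      G.Adj a b ∧ listEnds M = {b, z} ∧ M.IsChain G.Adj ∧ M.length = k + 2 * i + 2 ∧
      (M ++ (R ++ [a'])).Nodup ∧ (∀ x ∈ M ++ (R ++ [a']), x ∈ A' ∧ x ∉ A) ∧
      (z :: R ++ [a']).IsChain G.Adj ∧ (a :: R' ++ [a']).IsChain G.Adj ∧ R.Perm R' ∧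
      ∀ x ∈ A, x ≠ a → o' x = o x := by
  obtain ⟨b, hb, hab, o₁, h₁, ha₁, hx₁⟩ := h.exists_leaf S ha (by omega) (by omega)
  have hba : b ≠ a := hab.ne.symm
  obtain ⟨z, hz, hbz, o₂, h₂, hb₂, hx₂⟩ := h₁.exists_leaf S (Finset.mem_insert_self b A)
    (by rw [hx₁ b hba, h.zero b hb]; omega) (by rw [Finset.card_insert_of_notMem hb]; omega)
  have hzb : z ≠ b := hbz.ne.symm
  have hza : z ≠ a := fun e => hz (e ▸ Finset.mem_insert_of_mem ha)
  have hzA : z ∉ A := fun e => hz (Finset.mem_insert_of_mem e)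
  have hc₂ : (insert z (insert b A)).card = A.card + 2 := by
    rw [Finset.card_insert_of_notMem hz, Finset.card_insert_of_notMem hb]
  obtain ⟨w, hw, hzw, o₃, h₃, hz₃, hx₃⟩ := h₂.exists_leaf S (Finset.mem_insert_self z _)
    (by rw [hx₂ z hzb, hx₁ z hza, h.zero z hzA]; omega) (by omega)
  have hwz : w ≠ z := hzw.ne.symm
  have hwb : w ≠ b := by rintro rfl; simp at hw
  have hwA : w ∉ A := fun e => hw (by simp [e])
  have hwa : w ≠ a := fun e => hwA (e ▸ ha)
  have hc₃ : (insert w (insert z (insert b A))).card = A.card + 3 := by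
    rw [Finset.card_insert_of_notMem hw]; omega
  set A₃ := insert w (insert z (insert b A)) with hA₃
  have hAA₃ : A ⊆ A₃ := fun x hx => by simp [hA₃, hx]
  have hoa₃ : o₃ a = o a + 1 := by rw [hx₃ a hza.symm, hx₂ a hba.symm, ha₁]
  have hob₃ : o₃ b = 1 := by rw [hx₃ b hzb.symm, hb₂, hx₁ b hba, h.zero b hb]
  have hoz₃ : o₃ z = 1 := by rw [hz₃, hx₂ z hzb, hx₁ z hza, h.zero z hzA]
  have how₃ : o₃ w = 0 := by rw [hx₃ w hwz, hx₂ w hwb, hx₁ w hwa, h.zero w hwA]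
  obtain ⟨p, hpl, hpn, hpA, hpc, o₄, h₄, hw₄, -, hp₄, hx₄⟩ := h₃.exists_connection S (a := w)
    (b := a) (by simp [hA₃]) (hAA₃ ha) hwa (by omega) (by omega) (by omega)
  have hc₄ := card_union_toFinset_le A₃ p
  have hA₃₄ : A₃ ⊆ A₃ ∪ p.toFinset := Finset.subset_union_left
  have hwp : w ∉ p := fun e => hpA w e (by simp [hA₃])
  rw [List.isChain_append] at hpc
  obtain ⟨s, w', Q, Q', A₅, o₅, h₅, hA₄₅, hc₅, hs₅, hos₅, hQA₅, hQn, hQQ', hQ, hQv, hQ', hQw,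
    hlast, hQm, hx₅⟩ := h₄.exists_twin S i (v := w) (w := w) (s := w) (R := []) (R' := []) (p := p)
    (by simp [hA₃]) (by omega) hpl (fun x hx => by simp [hx])
    (fun x hx => by rw [hp₄ x hx]; omega) (by simp) (by simp [hwp, hpn]) (List.Perm.refl _)
    (by simp) (by simp) (by simp) (by simp) hpc.1 (by omega)
  have hA₃₅ : A₃ ⊆ A₅ := hA₃₄.trans hA₄₅
  have hb₅ : b ∈ A₅ := hA₃₅ (by simp [hA₃])
  have hz₅ : z ∈ A₅ := hA₃₅ (by simp [hA₃])
  have hpA₃ : ∀ x ∈ A₃, x ∉ p := fun x hx hxp => hpA x hxp hx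
  have hval : ∀ x ∈ A₃, x ≠ w → x ≠ a → o₅ x = o₃ x := fun x hx hxw hxa => by
    rw [hx₅ x (hA₃₄ hx) (by simp) hxw (hpA₃ x hx), hx₄ x hx hxw hxa]
  have hob₅ : o₅ b = 1 := by rw [hval b (by simp [hA₃]) hwb.symm hba, hob₃]
  have hoz₅ : o₅ z = 1 := by rw [hval z (by simp [hA₃]) hwz.symm hza, hoz₃]
  have hQmem : ∀ x ∈ Q ++ [s], x ∈ A₅ ∧ x ∉ A ∧ x ≠ b ∧ x ≠ z := by
    intro x hx
    refine ⟨?_, ?_⟩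
    · rw [List.mem_append, List.mem_singleton] at hx
      rcases hx with hx | rfl
      · exact hQA₅ x hx
      · exact hs₅
    · rcases hQm x hx with h1 | rfl | h1 | h1
      · simp at h1
      · exact ⟨hwA, hwb, hwz⟩
      · have h2 := hpA x h1
        simp only [hA₃, Finset.mem_insert, not_or] at h2
        exact ⟨h2.2.2.2, h2.2.2.1, h2.2.1⟩
      · simp only [hA₃, Finset.mem_union, Finset.mem_insert, not_or] at h1
        exact ⟨h1.1.2.2.2, h1.1.2.2.1, h1.1.2.1⟩
  obtain ⟨-, -, hsb, hsz⟩ := hQmem s (by simp)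
  obtain ⟨g, hgl, hgn, hgA, hgc, o₆, h₆, hb₆, hg₆, hx₆⟩ := h₅.exists_path S k hb₅ (by omega)
    (by omega)
  have hc₆ := card_union_toFinset_le A₅ g
  have hA₅₆ : A₅ ⊆ A₅ ∪ g.toFinset := Finset.subset_union_left
  obtain ⟨t, ht⟩ : ∃ t, (b :: g).getLast? = some t :=
    ⟨_, List.getLast?_eq_some_getLast (by simp)⟩
  have htm : t = b ∨ t ∈ g := by simpa using List.mem_of_mem_getLast? ht
  have hoz₆ : o₆ z = 1 := by rw [hx₆ z hz₅ hzb, hoz₅]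
  have hot₆ : o₆ t ≤ 3 := by
    rcases htm with rfl | htm
    · omega
    · have := hg₆ t htm; omega
  have htz : t ≠ z := by
    rcases htm with rfl | htm
    · exact hzb.symm
    · rintro rfl
      exact hgA t htm hz₅
  have ht₆ : t ∈ A₅ ∪ g.toFinset := by
    rcases htm with rfl | htm
    · exact hA₅₆ hb₅
    · simp [htm]
  obtain ⟨c, hcl, hcn, hcA, hcc, o₇, h₇, -, -, -, hx₇⟩ := h₆.exists_connection S ht₆ (hA₅₆ hz₅) htz
    hot₆ (by omega) (by omega)
  have hc₇ := card_union_toFinset_le (A₅ ∪ g.toFinset) c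
  have hA₅₇ : A₅ ⊆ A₅ ∪ g.toFinset ∪ c.toFinset := hA₅₆.trans Finset.subset_union_left
  have htA : ∀ x ∈ A₅, x ≠ b → x ≠ t := by
    rintro x hx hxb rfl
    rcases htm with rfl | htm
    · exact hxb rfl
    · exact hgA x htm hx
  have hoo : ∀ x ∈ A₅, x ≠ b → x ≠ z → o₇ x = o₅ x := fun x hx hxb hxz => by
    rw [hx₇ x (hA₅₆ hx) (htA x hx hxb) hxz, hx₆ x hx hxb]
  have hgA₃ : ∀ x ∈ g, x ∉ A ∧ x ≠ b ∧ x ≠ z := fun x hx =>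
    ⟨fun e => hgA x hx (hA₃₅ (hAA₃ e)), fun e => hgA x hx (e ▸ hb₅), fun e => hgA x hx (e ▸ hz₅)⟩
  have hcA₃ : ∀ x ∈ c, x ∉ A ∧ x ≠ b ∧ x ≠ z ∧ x ∉ g ∧ x ∉ A₅ := fun x hx =>
    ⟨fun e => hcA x hx (hA₅₆ (hA₃₅ (hAA₃ e))), fun e => hcA x hx (e ▸ hA₅₆ hb₅),
      fun e => hcA x hx (e ▸ hA₅₆ hz₅), fun e => hcA x hx (by simp [e]), fun e => hcA x hx (hA₅₆ e)⟩
  refine ⟨b, z, s, (b :: g) ++ (c ++ [z]), Q, Q', _, o₇, h₇, (hAA₃.trans hA₃₅).trans hA₅₇, by omega,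
    hA₅₇ hs₅, by rw [hoo s hs₅ hsb hsz]; omega, hbz, hab, ?_, ?_, by simp; omega, ?_, ?_, ?_, ?_,
    hQQ', ?_⟩
  · rw [listEnds_append (by simp) (by simp)]
    simp
  · rw [List.cons_append, List.isChain_cons] at hcc
    rw [List.isChain_append]
    refine ⟨hgc, hcc.2, ?_⟩
    rw [ht]
    rintro _ ⟨⟩
    exact hcc.1
  · rw [List.nodup_append]
    refine ⟨?_, hQn, ?_⟩
    · rw [List.nodup_append, List.nodup_append, List.nodup_cons]
      refine ⟨⟨fun e => (hgA₃ b e).2.1 rfl, hgn⟩, ⟨hcn, by simp, ?_⟩, ?_⟩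
      · rintro x hx y hy rfl
        rw [List.mem_singleton] at hy
        exact (hcA₃ x hx).2.2.1 hy
      · rintro x hx y hy rfl
        rw [List.mem_append, List.mem_singleton] at hy
        rw [List.mem_cons] at hx
        rcases hx with hx | hx <;> rcases hy with hy | hy
        · exact (hcA₃ x hy).2.1 hx
        · exact hzb (hy.symm.trans hx)
        · exact (hcA₃ x hy).2.2.2.1 hx
        · exact (hgA₃ x hx).2.2 hy
    · rintro x hx y hy rfl
      obtain ⟨h1, -, h2, h3⟩ := hQmem x hy
      simp only [List.mem_append, List.mem_cons, List.not_mem_nil, or_false] at hx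
      rcases hx with (hx | hx) | (hx | hx)
      · exact h2 hx
      · exact hgA x hx h1
      · exact (hcA₃ x hx).2.2.2.2 h1
      · exact h3 hx
  · intro x hx
    rw [List.mem_append] at hx
    rcases hx with hx | hx
    · simp only [List.mem_append, List.mem_cons, List.not_mem_nil, or_false] at hx
      rcases hx with (rfl | hx) | (hx | rfl)
      · exact ⟨hA₅₇ hb₅, hb⟩
      · exact ⟨by simp [hx], (hgA₃ x hx).1⟩
      · exact ⟨by simp [hx], (hcA₃ x hx).1⟩
      · exact ⟨hA₅₇ hz₅, hzA⟩
    · exact ⟨hA₅₇ (hQmem x hx).1, (hQmem x hx).2.1⟩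
  · rw [List.cons_append, List.isChain_cons, hQv]
    refine ⟨?_, hQ⟩
    rintro _ ⟨⟩
    exact hzw
  · rw [List.cons_append, List.isChain_cons, hQw]
    refine ⟨?_, hQ'⟩
    rintro _ ⟨⟩
    exact (hpc.2.2 w' hlast a (by simp)).symm
  · intro x hx hxa
    have hxb : x ≠ b := fun e => hb (e ▸ hx)
    have hxz : x ≠ z := fun e => hzA (e ▸ hx)
    have hxw : x ≠ w := fun e => hwA (e ▸ hx)
    rw [hoo x (hA₃₅ (hAA₃ hx)) hxb hxz, hval x (hAA₃ hx) hxw hxa, hx₃ x hxz, hx₂ x hxb, hx₁ x hxa]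

theorem Tame.exists_absorber (S : Setting G m d i) (k : ℕ) (κ : ℕ) {A : Finset V} {o : V → ℕ}
    (h : Tame G m d A o) {a y : V} (ha : a ∈ A) (hy : y ∈ A) (hay : a ≠ y) (hoa : o a ≤ 2)
    (hoy : o y ≤ 2)
    (hA : A.card + κ * (k + 3 + 4 * i + 2 * i * i) + 2 * i + reserve m d i ≤ Fintype.card V) :
    ∃ (W : Multiset (List V)) (H : Multiset V) (A' : Finset V) (o' : V → ℕ), Absorber G y a W H ∧
      W.card = κ ∧ (∀ l ∈ W, l.length = k + 2 * i + 2) ∧ Valid G W ∧ (H + verts W).Nodup ∧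
      (∀ v ∈ H + verts W, v ∈ A' ∧ (v ∈ A → v = a ∨ v = y)) ∧ Tame G m d A' o' ∧
      A ⊆ A' ∧ A'.card ≤ A.card + κ * (k + 3 + 4 * i + 2 * i * i) + 2 * i := by
  induction κ generalizing A o a with
  | zero =>
    obtain ⟨p, hpl, hpn, hpA, hpc, o', h', -⟩ := h.exists_connection S ha hy hay (by omega)
      (by omega) (by omega)
    have hc := card_union_toFinset_le A p
    refine ⟨0, _, A ∪ p.toFinset, o', Absorber.base hpc, rfl, by simp, valid_zero, ?_, ?_, h',
      Finset.subset_union_left, by omega⟩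
    · rw [verts_zero, add_zero, Multiset.coe_nodup, List.nodup_append, List.nodup_cons]
      refine ⟨⟨fun e => hpA a e ha, hpn⟩, by simp, ?_⟩
      rintro x hx v hv rfl
      rw [List.mem_singleton] at hv
      subst hv
      rw [List.mem_cons] at hx
      rcases hx with hx | hx
      · exact hay hx.symm
      · exact hpA x hx hy
    · intro v hv
      simp only [verts_zero, add_zero, Multiset.mem_coe, List.mem_append, List.mem_cons,
        List.not_mem_nil, or_false] at hv
      rcases hv with (rfl | hv) | rfl
      · simp [ha]
      · exact ⟨by simp [hv], fun e => absurd e (hpA v hv)⟩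
      · simp [hy]
  | succ κ ih =>
    rw [Nat.succ_mul κ] at hA ⊢
    obtain ⟨b, z, a', M, R, R', A₁, o₁, h₁, hAA₁, hc₁, ha', hoa', hbz, hab, hM, hMc, hMl, hn, hmem,
      hR, hR', hRR', hx₁⟩ := h.exists_gadget S k ha hoa (by omega)
    have ha'A : a' ∉ A := (hmem a' (by simp)).2
    have ha'y : a' ≠ y := fun e => ha'A (e ▸ hy)
    obtain ⟨W, H, A', o', hab', hWc, hWl, hWv, hHn, hHm, h', hAA', hc'⟩ := ih h₁ ha' (hAA₁ hy) ha'y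
      hoa' (by rw [hx₁ y hy hay.symm]; exact hoy) (by omega)
    have hMR : (M ++ R).Nodup ∧ a' ∉ M ++ R := by
      rw [← List.append_assoc, List.nodup_append] at hn
      exact ⟨hn.1, fun e => hn.2.2 a' e a' (by simp) rfl⟩
    have hmem' : ∀ x ∈ M ++ R, x ∈ A₁ ∧ x ∉ A ∧ x ∉ H + verts W := by
      intro x hx
      have h1 := hmem x (by rw [← List.append_assoc]; exact List.mem_append_left _ hx)
      refine ⟨h1.1, h1.2, fun e => ?_⟩
      rcases (hHm x e).2 h1.1 with rfl | rfl
      · exact hMR.2 hx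
      · exact h1.2 hy
    have haW : a ∉ H + verts W := by
      intro e
      rcases (hHm a e).2 (hAA₁ ha) with rfl | rfl
      · exact ha'A ha
      · exact hay rfl
    have hEq : a ::ₘ ((R : Multiset V) + H) + verts (M ::ₘ W) =
        a ::ₘ (((M ++ R : List V) : Multiset V) + (H + verts W)) := by
      rw [verts_cons, ← Multiset.coe_add]
      simp only [← Multiset.singleton_add]
      abel
    have hMne : M ≠ [] := by rintro rfl; simp at hMl
    refine ⟨M ::ₘ W, a ::ₘ (R + H), A', o', Absorber.step hbz hab hM hR hR' hRR' hab',
      by simp [hWc], ?_, ?_, ?_, ?_, h', hAA₁.trans hAA', by omega⟩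
    · intro l hl
      rw [Multiset.mem_cons] at hl
      rcases hl with rfl | hl
      · exact hMl
      · exact hWl l hl
    · rw [valid_cons]
      refine ⟨⟨hMne, hMc, (List.nodup_append.1 hMR.1).1⟩, hWv, fun v hv e => ?_⟩
      exact (hmem' v (by simp [hv])).2.2 (Multiset.mem_add.2 (Or.inr e))
    · rw [hEq, Multiset.nodup_cons, Multiset.nodup_add, Multiset.mem_add, not_or]
      refine ⟨⟨fun e => (hmem' a e).2.1 ha, haW⟩, hMR.1, hHn, ?_⟩
      rw [Multiset.disjoint_left]
      exact fun {v} hv => (hmem' v hv).2.2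
    · intro v hv
      rw [hEq, Multiset.mem_cons, Multiset.mem_add, Multiset.mem_coe] at hv
      rcases hv with rfl | hv | hv
      · exact ⟨hAA' (hAA₁ ha), fun _ => Or.inl rfl⟩
      · exact ⟨hAA' (hmem' v hv).1, fun e => absurd e (hmem' v hv).2.1⟩
      · refine ⟨(hHm v hv).1, fun e => ?_⟩
        rcases (hHm v hv).2 (hAA₁ e) with rfl | rfl
        · exact absurd e ha'A
        · exact Or.inr rfl

theorem exists_isHamiltonian_of_list {x y : V} {l : List V} (hl : l.IsChain G.Adj)
    (hn : l.Nodup) (hx : l.head? = some x) (hy : l.getLast? = some y) (hall : ∀ v, v ∈ l) :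
    ∃ P : G.Walk x y, P.IsHamiltonian := by
  have hne : l ≠ [] := by rintro rfl; simp at hx
  have hx' : l.head hne = x := by simpa [List.head?_eq_some_head hne] using hx
  have hy' : l.getLast hne = y := by simpa [List.getLast?_eq_some_getLast hne] using hy
  refine ⟨(Walk.ofSupport l hne hl).copy hx' hy', fun v => ?_⟩
  rw [Walk.support_copy, Walk.support_ofSupport]
  exact List.count_eq_one_of_mem hn (hall v)

theorem exists_isHamiltonian_of_family {x y : V} {F : Multiset (List V)} (hF : Valid G F)
    (hall : ∀ v, v ∈ verts F) (he : ends F = {x, y}) : ∃ P : G.Walk x y, P.IsHamiltonian := by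
  obtain ⟨l, F₀, hre, -⟩ := exists_reorient_head (F := F) (x := x) (by rw [he]; simp)
  have hV := hre.valid G hF
  have hc := hV.card_ends
  simp only [hre.ends_eq, he, Multiset.insert_eq_cons, Multiset.card_cons,
    Multiset.card_singleton] at hc
  have hF₀ : F₀ = 0 := by
    rw [← Multiset.card_eq_zero]
    omega
  subst hF₀
  have hE := hre.ends_eq
  have hv := hre.verts_eq
  rw [ends_cons, ends_zero, add_zero, he, listEnds_cons_eq] at hE
  rw [verts_cons, verts_zero, add_zero] at hv
  refine exists_isHamiltonian_of_list (valid_cons.1 hV).1.2.1 (valid_cons.1 hV).1.2.2 rfl ?_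
    fun v => by rw [← Multiset.mem_coe, hv]; exact hall v
  have h1 := add_left_cancel (a := ({x} : Multiset V)) (hE.trans (by rfl : _ = {x} + {y}))
  have h2 : ((x :: l).getLast?.toList : Multiset V) = ([y] : List V) := h1
  rw [Multiset.coe_eq_coe, List.perm_singleton] at h2
  cases h3 : (x :: l).getLast? with
  | none => simp [h3] at h2
  | some w => simpa [h3] using h2

theorem listEnds_le {l : List V} (h : 2 ≤ l.length) : listEnds l ≤ l := by
  obtain ⟨a, l, rfl⟩ := List.exists_cons_of_ne_nil (l := l) (by rintro rfl; simp at h)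
  rcases List.eq_nil_or_concat l with rfl | ⟨q, b, rfl⟩
  · simp at h
  · rw [listEnds_cons_eq, List.concat_eq_append, ← List.cons_append, List.getLast?_concat,
      ← Multiset.coe_add, ← Multiset.cons_coe, ← Multiset.singleton_add]
    exact add_le_add (Multiset.le_add_right _ _) le_rfl

theorem ends_le_verts {F : Multiset (List V)} (h : ∀ l ∈ F, 2 ≤ l.length) : ends F ≤ verts F := by
  induction F using Multiset.induction_on with
  | empty => simp
  | cons l F ih =>
    rw [ends_cons, verts_cons]
    exact add_le_add (listEnds_le (h l (by simp))) (ih fun r hr => h r (by simp [hr]))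

theorem tame_pair {x y : V}
    (hexp : ∀ U : Finset V, U.card ≤ 2 * m → (d + 2) * U.card ≤ (nbr G U).card) :
    Tame G m d {x, y} fun _ => 0 where
  ext U hU := by
    rcases U.eq_empty_or_nonempty with rfl | hne
    · simp
    · have h1 := hexp U hU
      have h2 := Finset.le_card_sdiff ({x, y} : Finset V) (nbr G U)
      have h3 : ({x, y} : Finset V).card ≤ 2 := Finset.card_le_two
      have h4 := hne.card_pos
      rw [add_mul] at h1
      omega
  le := by simp
  zero := by simp

theorem Tame.le_card_nbr_sdiff {A : Finset V} {o : V → ℕ} (h : Tame G m d A o) {U : Finset V}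
    (hU : U.card ≤ 2 * m) : d * U.card ≤ (nbr G U \ A).card + 4 * U.card := by
  refine (h.ext U hU).trans (Nat.add_le_add_left ?_ _)
  rw [mul_comm, ← smul_eq_mul]
  exact Finset.sum_le_card_nsmul _ _ _ fun u _ => h.le u

theorem exists_isHamiltonian {k κ a t ℓ M₀ q : ℕ} (S : Setting G m d i)
    (hexp : ∀ U : Finset V, U.card ≤ 2 * m → (d + 2) * U.card ≤ (nbr G U).card)
    {x y : V} (hxy : x ≠ y) (had : 3 * a + 5 ≤ d) (hd : 8 ≤ d) (hat : m ≤ a ^ t)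
    (hM₀ : M₀ = 8 ^ t * ℓ) (hℓ : 0 < ℓ) (hq : 20 * m < q * (k + 2 * i + 2))
    (h₁ : 2 + κ * (k + 3 + 4 * i + 2 * i * i) + 2 * i + reserve m d i ≤ Fintype.card V)
    (h₂ : 2 + κ * (k + 3 + 4 * i + 2 * i * i) + 2 * i + (37 * m + 5 * M₀ + 2) ≤ Fintype.card V)
    (h₃ : ∀ s, ℓ * s ≤ ℓ * (2 * (M₀ + M₀ * (4 * M₀))) + Fintype.card V →
      5 * q + s * (4 * i + 1) ≤ κ) :
    ∃ P : G.Walk x y, P.IsHamiltonian := by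
  have h2 : ({x, y} : Finset V).card = 2 := Finset.card_pair hxy
  obtain ⟨W, H, A, o, hAbs, hWc, hWl, hWv, hHn, hHm, hA, -, hAc⟩ :=
    (tame_pair hexp (x := x) (y := y)).exists_absorber S k κ (a := x) (y := y) (by simp) (by simp)
      hxy (by simp) (by simp) (by omega)
  have hN := Multiset.nodup_add.1 hHn
  set B : Finset V := Finset.univ \ (H + verts W).toFinset with hB
  have hAB : Finset.univ \ A ⊆ B := Finset.sdiff_subset_sdiff subset_rfl fun v hv =>
    (hHm v (Multiset.mem_toFinset.1 hv)).1
  have hBm : ∀ v, v ∈ B ↔ v ∉ H ∧ v ∉ verts W := fun v => by simp [hB]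
  have hnB : ∀ U : Finset V, U.card ≤ 2 * m → d * U.card ≤ (nbr G U ∩ B).card + 4 * U.card := by
    intro U hU
    refine (hA.le_card_nbr_sdiff hU).trans (Nat.add_le_add_right (Finset.card_le_card ?_) _)
    intro v hv
    rw [Finset.mem_sdiff] at hv
    exact Finset.mem_inter.2 ⟨hv.1, hAB (by simp [hv.2])⟩
  have hBc : Fintype.card V ≤ B.card + A.card := by
    have h4 := Finset.card_le_card hAB
    rw [Finset.card_univ_sdiff] at h4
    omega
  obtain ⟨F, hF, hFB, hFc⟩ := exists_covering_family (G := G) (W := B) (m := m) (a := a) (t := t)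
    (ℓ := ℓ) (M₀ := M₀) S.joined (fun U hU => by
      have h4 := hnB U (by omega)
      have h5 := Nat.mul_le_mul_right U.card had
      have h6 : (3 * a + 5) * U.card = (3 * a + 1) * U.card + 4 * U.card := by ring
      omega) hat hM₀ hℓ (by omega)
  have hBn : B.card ≤ Fintype.card V := Finset.card_le_univ B
  have hs := h₃ F.card (by omega)
  have hmemF : ∀ v, v ∈ verts F ↔ v ∉ H ∧ v ∉ verts W := fun v => by
    rw [hFB, Finset.mem_val, hBm]
  have hFW : Valid G (F + W) := valid_add.2 ⟨hF, hWv, fun v hv => ((hmemF v).1 hv).2⟩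
  obtain ⟨F', hF', hFv', hFe'⟩ := exists_insertion (G := G) (N := F) (W := W) (Y := B) (m := m)
    (t := i) (k := q) (r := k + 2 * i + 2) (s := F.card) (T := 0) S.joined S.le_pow hFW
    (fun U hU => by
      have h4 := hnB U (by omega)
      have h5 := Nat.mul_le_mul_right U.card hd
      omega) (fun v hv => (hmemF v).2 ((hBm v).1 hv)) hWl (by omega) hq (by omega)
    (by
      rw [zero_add]
      exact Multiset.nodup_of_le (ends_le_verts fun l hl => by rw [hWl l hl]; omega) hN.2.1)
    (Multiset.zero_le _) (by rw [hF.card_ends]; simp)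
  obtain ⟨F'', hF'', hFv'', hFe''⟩ := hAbs.absorb F' 0 hF' hN.1 (fun v hv hvH => by
    rw [hFv', Multiset.mem_add, hmemF] at hv
    rcases hv with hv | hv
    · exact hv.1 hvH
    · exact Multiset.disjoint_left.1 hN.2.2 hvH hv) hFe'
  refine exists_isHamiltonian_of_family hF'' (fun v => ?_) (by rw [hFe'', zero_add])
  rw [hFv'', hFv', Multiset.mem_add, Multiset.mem_add, hmemF]
  tauto

end

theorem quadratic_le_two_pow {f : ℕ} (hf : 20 ≤ f) :
    2 ^ 24 * (80 * f + 80) ≤ 2 ^ (2 * f) ∧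
      8 * (2 * (20 * f + 22) * (20 * f + 22)) ≤ 2 ^ (2 * f) := by
  induction f, hf using Nat.le_induction with
  | base => norm_num
  | succ f hf ih =>
    have h : 2 ^ (2 * (f + 1)) = 4 * 2 ^ (2 * f) := by ring
    rw [h]
    constructor
    · linarith [ih.1]
    · nlinarith [ih.2]

section

variable {V : Type*} [Fintype V] [DecidableEq V] {G : SimpleGraph V} {m d : ℕ}

theorem exists_isHamiltonian_of_large (hJ : IsJoined G m) (hm : 0 < m) (hd : 3 * 2 ^ 120 + 8 ≤ d)
    (hexp : ∀ U : Finset V, U.card ≤ 2 * m → (d + 2) * U.card ≤ (nbr G U).card)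
    (hn : 400 ≤ Nat.log 2 (Fintype.card V)) (hnm : (8 * d + 4000) * m ≤ Fintype.card V)
    {x y : V} (hxy : x ≠ y) : ∃ P : G.Walk x y, P.IsHamiltonian := by
  obtain ⟨n, hnV⟩ : ∃ n, n = Fintype.card V := ⟨_, rfl⟩
  rw [← hnV] at hn hnm
  obtain ⟨e, he⟩ : ∃ e, e = Nat.log 2 n := ⟨_, rfl⟩
  obtain ⟨f, hf⟩ : ∃ f, f = e / 20 := ⟨_, rfl⟩
  have hn0 : n ≠ 0 := by rintro rfl; simp at hn
  have h2e : 2 ^ e ≤ n := he ▸ Nat.pow_log_le_self 2 hn0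
  have he2 : n < 2 ^ (e + 1) := he ▸ Nat.lt_pow_succ_log_self (by norm_num) n
  have h400 : 400 ≤ e := he ▸ hn
  have hf20 : 20 ≤ f := by omega
  obtain ⟨hq₁, hq₂⟩ := quadratic_le_two_pow hf20
  obtain ⟨i, hi⟩ : ∃ i, i = Nat.log 2 m + 1 := ⟨_, rfl⟩
  have hmi : m ≤ 2 ^ i := hi ▸ (Nat.lt_pow_succ_log_self (by norm_num) m).le
  have him : 2 ^ i ≤ 2 * m := by
    rw [hi, pow_succ]
    have := Nat.pow_log_le_self 2 hm.ne'
    omega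
  have h8 : 8 * m ≤ n := le_trans (Nat.mul_le_mul_right m (by omega)) hnm
  have hie : i ≤ e := by
    have h1 : 2 ^ i < 2 ^ (e + 1) := by omega
    have := (Nat.pow_lt_pow_iff_right (by norm_num : 1 < 2)).1 h1
    omega
  have hif : i ≤ 20 * f + 19 := by omega
  have h20 : 2 ^ (20 * f) ≤ n := (Nat.pow_le_pow_right (by norm_num) (by omega)).trans h2e
  have hκ20 : 2 ^ (20 * f) = 2 ^ (18 * f) * 2 ^ (2 * f) := by rw [← pow_add]; congr 1; omega
  obtain ⟨κ, hκ⟩ : ∃ κ, κ = 2 ^ (18 * f) := ⟨_, rfl⟩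
  obtain ⟨k, hk⟩ : ∃ k, k = 320 * m / κ + 1 := ⟨_, rfl⟩
  have hκ0 : 0 < κ := hκ ▸ by positivity
  have hk₁ : 320 * m < κ * k := by
    rw [hk]; exact Nat.lt_mul_div_succ _ hκ0
  have hk₂ : κ * k ≤ 320 * m + κ := by
    rw [hk, Nat.mul_add, mul_one]
    exact Nat.add_le_add_right (Nat.mul_div_le _ _) _
  obtain ⟨q, hq⟩ : ∃ q, q = 2 ^ (18 * f - 4) := ⟨_, rfl⟩
  have hqκ : κ = 16 * q := by
    rw [hκ, hq, show (16 : ℕ) = 2 ^ 4 by norm_num, ← pow_add]; congr 1; omega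
  obtain ⟨P, hP⟩ : ∃ P, P = 2 ^ (2 * f) := ⟨_, rfl⟩
  rw [← hP] at hq₁ hq₂
  rw [hκ20, ← hκ, ← hP] at h20
  have hi2 : 2 * i * i ≤ 2 * (20 * f + 19) * (20 * f + 19) := by gcongr
  have hcost : 8 * (3 + 4 * i + 2 * i * i + 2 + 1 + 2 * i) ≤ P := by nlinarith
  have hsize : 2 + κ * (k + 3 + 4 * i + 2 * i * i) + 2 * i ≤ 320 * m + n / 8 := by
    have h1 : κ * (8 * (3 + 4 * i + 2 * i * i + 2 + 1 + 2 * i)) ≤ κ * P :=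
      Nat.mul_le_mul_left κ hcost
    have h2 : 2 + 2 * i ≤ κ * (2 + 2 * i) := Nat.le_mul_of_pos_left _ hκ0
    have h3 : κ * (k + 3 + 4 * i + 2 * i * i) + κ * (2 + 2 * i) + κ =
        κ * k + κ * (3 + 4 * i + 2 * i * i + 2 + 1 + 2 * i) := by ring
    rw [Nat.mul_left_comm] at h1
    omega
  obtain ⟨t, ht⟩ : ∃ t, t = e / 120 + 1 := ⟨_, rfl⟩
  have hat : m ≤ (2 ^ 120) ^ t := by
    rw [← pow_mul]
    refine hmi.trans (Nat.pow_le_pow_right (by norm_num) ?_)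
    omega
  have h8t : 8 ^ t ≤ 2 ^ f := by
    rw [show (8 : ℕ) = 2 ^ 3 by norm_num, ← pow_mul]
    exact Nat.pow_le_pow_right (by norm_num) (by omega)
  obtain ⟨M₀, hM₀⟩ : ∃ M₀, M₀ = 8 ^ t * 2 ^ (4 * f) := ⟨_, rfl⟩
  have hM₅ : M₀ ≤ 2 ^ (5 * f) := by
    rw [hM₀, show 5 * f = f + 4 * f by ring, pow_add]
    exact Nat.mul_le_mul_right _ h8t
  have hM₁ : 2 * (M₀ + M₀ * (4 * M₀)) ≤ 2 ^ (16 * f + 4) := by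
    have h1 : M₀ * M₀ ≤ 2 ^ (10 * f) := by
      rw [show 10 * f = 5 * f + 5 * f by ring, pow_add]
      exact Nat.mul_le_mul hM₅ hM₅
    have h2 : (2 : ℕ) ^ (10 * f) ≤ 2 ^ (16 * f) := Nat.pow_le_pow_right (by norm_num) (by omega)
    have h3 : M₀ ≤ 2 ^ (16 * f) :=
      hM₅.trans (Nat.pow_le_pow_right (by norm_num) (by omega))
    rw [pow_add]
    linarith
  have hM₈ : 5 * M₀ + 2 ≤ n / 8 := by
    have h1 : (2 : ℕ) ^ (5 * f) * 2 ^ 6 ≤ n := by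
      rw [← pow_add]
      exact (Nat.pow_le_pow_right (by norm_num) (by omega)).trans h2e
    have h2 : 1 ≤ 2 ^ (5 * f) := Nat.one_le_two_pow
    omega
  have S : Setting G m d i := ⟨hJ, hm, by omega, hmi⟩
  have hres : reserve m d i ≤ (2 * d + 11) * m := by
    unfold reserve
    have : (2 * d + 11) * m = 8 * m + (2 * d + 3) * m := by ring
    omega
  have hnm' : 8 * (d * m) + 4000 * m ≤ n := by rw [← mul_assoc, ← add_mul]; exact hnm
  have hres' : (2 * d + 11) * m = 2 * (d * m) + 11 * m := by ring
  refine exists_isHamiltonian (k := k) (κ := κ) (a := 2 ^ 120) (t := t) (ℓ := 2 ^ (4 * f))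
    (M₀ := M₀) (q := q) S hexp hxy (by omega) (by omega) hat hM₀ (by positivity) ?_ ?_ ?_ ?_
  · have h1 : q * k ≤ q * (k + 2 * i + 2) := Nat.mul_le_mul_left q (by omega)
    rw [hqκ, mul_assoc] at hk₁
    omega
  · omega
  · omega
  · intro s hs
    rw [← hnV] at hs
    have h1 : n ≤ 2 ^ (4 * f) * 2 ^ (16 * f + 20) := by
      rw [← pow_add]
      exact he2.le.trans (Nat.pow_le_pow_right (by norm_num) (by omega))
    have h2 : 2 ^ (4 * f) * s ≤ 2 ^ (4 * f) * (2 ^ (16 * f + 4) + 2 ^ (16 * f + 20)) := by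
      rw [Nat.mul_add]
      exact hs.trans (Nat.add_le_add (Nat.mul_le_mul_left _ hM₁) h1)
    have h3 : s ≤ 2 ^ (16 * f) * 2 ^ 21 := by
      have h4 := Nat.le_of_mul_le_mul_left h2 (by positivity)
      rw [pow_add, pow_add] at h4
      omega
    have h4 : s * (4 * i + 1) ≤ 2 ^ (16 * f) * 2 ^ 21 * (80 * f + 80) :=
      Nat.mul_le_mul h3 (by omega)
    have h5 : κ = 2 ^ (16 * f) * P := by rw [hκ, hP, ← pow_add]; congr 1; omega
    have h6 : 2 ^ (16 * f) * (2 ^ 24 * (80 * f + 80)) ≤ κ := by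
      rw [h5]; exact Nat.mul_le_mul_left _ hq₁
    have h7 : 2 ^ (16 * f) * (2 ^ 24 * (80 * f + 80)) =
      8 * (2 ^ (16 * f) * 2 ^ 21 * (80 * f + 80)) := by ring
    omega

end

section

variable {V : Type*} [Fintype V] [DecidableEq V] {G : SimpleGraph V}

theorem exists_isHamiltonian_of_joined_one (hJ : IsJoined G 1) {x y : V} (hxy : x ≠ y) :
    ∃ P : G.Walk x y, P.IsHamiltonian := by
  have hadj : ∀ u v : V, u ≠ v → G.Adj u v := by
    intro u v huv
    obtain ⟨a, ha, b, hb, hab⟩ := hJ {u} {v} (by simpa using huv) (by simp) (by simp)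
    rw [Finset.mem_singleton] at ha hb
    rwa [ha, hb] at hab
  have hn : (x :: (Finset.univ \ {x, y} : Finset V).toList ++ [y]).Nodup := by
    rw [List.nodup_append, List.nodup_cons]
    refine ⟨⟨by simp, Finset.nodup_toList _⟩, by simp, ?_⟩
    rintro v hv w hw rfl
    rw [List.mem_singleton] at hw
    subst hw
    simp [hxy.symm] at hv
  refine exists_isHamiltonian_of_list (List.Pairwise.isChain (hn.imp fun {u v} h => hadj u v h)) hn
    rfl (by rw [List.getLast?_append]; rfl) fun v => ?_
  by_cases hx : v = x <;> by_cases hy : v = y <;> simp [hx, hy]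

theorem card_extNbhd_le [DecidableRel G.Adj] (X : Finset V) :
    (extNbhd G X).card ≤ (nbr G X).card :=
  Finset.card_le_card fun _ hv => mem_nbr.2 (Finset.mem_filter.1 hv).2.2

theorem le_card_nbr_of_isCExpander [DecidableRel G.Adj] {C : ℝ} {d : ℕ} (h : IsCExpander G C)
    (hC : 4 * (d : ℝ) ≤ C) (hn : 1 ≤ (Fintype.card V : ℝ) / (2 * C)) (U : Finset V)
    (hU : U.card ≤ 2 * ⌈(Fintype.card V : ℝ) / (2 * C)⌉₊) : d * U.card ≤ (nbr G U).card := by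
  rcases U.eq_empty_or_nonempty with rfl | hne
  · simp
  set r := (Fintype.card V : ℝ) / (2 * C)
  have hq : 1 ≤ ⌊r⌋₊ := Nat.le_floor (by exact_mod_cast hn)
  have hceil : ⌈r⌉₊ ≤ ⌊r⌋₊ + 1 := Nat.ceil_le_floor_add_one r
  obtain ⟨X, hXU, hX⟩ := Finset.exists_subset_card_eq (s := U) (min_le_left U.card ⌊r⌋₊)
  have hUpos := hne.card_pos
  have hX4 : U.card ≤ 4 * X.card := by omega
  have h1 := h.2 X (by omega) ((Nat.cast_le.2 (by omega : X.card ≤ ⌊r⌋₊)).trans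
    (Nat.floor_le (by linarith)))
  have h2 : ((extNbhd G X).card : ℝ) ≤ ((nbr G U).card : ℝ) := by
    exact_mod_cast (card_extNbhd_le X).trans (Finset.card_le_card (nbr_mono hXU))
  have h3 : (U.card : ℝ) ≤ 4 * X.card := by exact_mod_cast hX4
  have h4 : (d : ℝ) * U.card ≤ (nbr G U).card := by
    have h5 : (d : ℝ) * U.card ≤ d * (4 * X.card) := by gcongr
    have h6 : 4 * (d : ℝ) * X.card ≤ C * X.card := by gcongr
    linarith
  exact_mod_cast h4

end

end PathFamily

/-- Theorem 3.2 (Draganić–Montgomery–Munhá Correia–Pokrovskiy–Sudakov):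
there is a universal constant `C₀ > 0` such that every `C`-expander with
`C ≥ C₀` is Hamilton-connected. -/
theorem expander_hamilton_connected :
    ∃ C₀ : ℝ, 0 < C₀ ∧ ∀ C : ℝ, C₀ ≤ C →
      ∀ (V : Type) [Fintype V] [DecidableEq V]
        (G : SimpleGraph V) [DecidableRel G.Adj],
        IsCExpander G C →
        ∀ x y : V, x ≠ y → ∃ P : G.Walk x y, P.IsHamiltonian := by
  refine ⟨2 ^ 200 * 2 ^ 200, by positivity, fun C hC V _ _ G _ h x y hxy => ?_⟩
  have hC0 : (0 : ℝ) < C := lt_of_lt_of_le (by positivity) hC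
  have hnpos : (0 : ℝ) < Fintype.card V := by exact_mod_cast Fintype.card_pos_iff.2 ⟨x⟩
  rcases le_or_gt ((Fintype.card V : ℝ) / (2 * C)) 1 with hr | hr
  · have hone : ⌈(Fintype.card V : ℝ) / (2 * C)⌉₊ = 1 := by
      refine le_antisymm (Nat.ceil_le.2 (by exact_mod_cast hr)) ?_
      exact Nat.one_le_ceil_iff.2 (by positivity)
    have hJ := h.1
    rw [hone] at hJ
    exact PathFamily.exists_isHamiltonian_of_joined_one hJ hxy
  · have hCn : 2 * C < Fintype.card V := by
      rwa [one_lt_div (by positivity)] at hr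
    have hceil : (⌈(Fintype.card V : ℝ) / (2 * C)⌉₊ : ℝ) * C ≤ Fintype.card V := by
      have h1 := (Nat.ceil_lt_add_one (by positivity : 0 ≤ (Fintype.card V : ℝ) / (2 * C))).le
      have h2 : (Fintype.card V : ℝ) / (2 * C) + 1 ≤ Fintype.card V / C := by
        have h3 : (Fintype.card V : ℝ) / C =
            Fintype.card V / (2 * C) + Fintype.card V / (2 * C) := by
          field_simp; norm_num
        linarith
      exact (le_div_iff₀ hC0).1 (h1.trans h2)
    obtain ⟨d, hd⟩ : ∃ d, d = 3 * 2 ^ 120 + 8 := ⟨_, rfl⟩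
    have hd' : (d : ℝ) = 3 * 2 ^ 120 + 8 := by rw [hd]; norm_num
    have hbig : 8 * (d : ℝ) + 4000 ≤ C := by
      refine le_trans ?_ hC
      rw [hd']
      norm_num
    refine PathFamily.exists_isHamiltonian_of_large (d := d) h.1
      (Nat.ceil_pos.2 (by positivity)) hd.ge
      (PathFamily.le_card_nbr_of_isCExpander h (by push_cast; linarith) hr.le) ?_ ?_ hxy
    · set_option exponentiation.threshold 500 in
      refine Nat.le_log_of_pow_le (x := 200 + 200) (by norm_num) ?_
      rw [pow_add]
      have h1 : ((2 ^ 200 * 2 ^ 200 : ℕ) : ℝ) ≤ Fintype.card V := by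
        push_cast
        linarith
      exact_mod_cast h1
    · have h1 : (((8 * d + 4000) * ⌈(Fintype.card V : ℝ) / (2 * C)⌉₊ : ℕ) : ℝ) ≤
          Fintype.card V := by
        refine le_trans ?_ hceil
        push_cast
        rw [mul_comm]
        gcongr
      exact_mod_cast h1
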